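/- arXiv:0711.1346 — 14 statements merged into one kernel-verified Lean document; each statement's English description precedes it below -/
import Mathlib

section
/- Let ν, μ, ν', μ' be integers with μ ≠ 0, μ' ≠ 0, gcd(ν, μ) = 1 and gcd(ν', μ') = 1. Then: (a) there exists a 2×2 integer matrix A with det A = 1 such that the induced automorphism of ℤ × ℤ maps the subgroup generated by (1,0) onto itself and maps the subgroup generated by (ν,μ) onto the subgroup generated by (ν',μ'), if and only if μ·μ' divides ν·μ' − ν'·μ; and (b) there exists such a matrix with det A = −1 satisfying the same subgroup conditions if and only if μ·μ' divides ν·μ' + ν'·μ. -/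
/-!
An automorphism carrying the line of `(1,0)` to itself is upper triangular, `A = !![a, b; 0, d]`
with `a, d = ±1`, and it carries the line of a vector onto that of another exactly when it sends
the first vector to plus or minus the second. Hence `μ' = ±μ` and `ν' ≡ ±ν (mod μ)`, with signs
tied together by `det A = a * d`. Conversely the divisibility and coprimality force `μ ∣ μ'` and
`μ' ∣ μ`, so `μ' = s * μ` with `s = ±1`, and `!![ε * s, k; 0, s]` is the required matrix of
determinant `ε`, where `ν' = ε * s * ν + k * μ`. Both parts are the cases `ε = 1` and `ε = -1`
of `exists_det_eq_iff`.
-/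

theorem zmultiples_eq_iff_eq_or_eq_neg (v w : Fin 2 → ℤ) :
    AddSubgroup.zmultiples v = AddSubgroup.zmultiples w ↔ v = w ∨ v = -w := by
  constructor
  · intro h
    have h' : Submodule.span ℤ {v} = Submodule.span ℤ {w} := by
      apply Submodule.toAddSubgroup_injective
      simpa only [Submodule.span_singleton_toAddSubgroup_eq_zmultiples] using h
    obtain ⟨z, rfl⟩ := Submodule.span_singleton_eq_span_singleton.1 h'
    rcases Int.units_eq_one_or z with rfl | rfl <;> simp
  · rintro (rfl | rfl) <;> simp

theorem map_zmultiples_eq_iff (A : Matrix (Fin 2) (Fin 2) ℤ) (x y x' y' : ℤ) :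
    (AddSubgroup.zmultiples (![x, y] : Fin 2 → ℤ)).map A.mulVecLin.toAddMonoidHom
      = AddSubgroup.zmultiples (![x', y'] : Fin 2 → ℤ) ↔
    (A 0 0 * x + A 0 1 * y = x' ∧ A 1 0 * x + A 1 1 * y = y') ∨
    (A 0 0 * x + A 0 1 * y = -x' ∧ A 1 0 * x + A 1 1 * y = -y') := by
  rw [AddMonoidHom.map_zmultiples, zmultiples_eq_iff_eq_or_eq_neg]
  simp [funext_iff, Fin.forall_fin_two]

/-- The second coordinates agree up to sign, since each fraction is in lowest terms and the
fractions agree up to sign modulo `1`. -/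
theorem eq_or_eq_neg_of_mul_dvd {ν μ ν' μ' ε : ℤ} (hε : ε = 1 ∨ ε = -1)
    (hco : Int.gcd ν μ = 1) (hco' : Int.gcd ν' μ' = 1)
    (h : μ * μ' ∣ ν * μ' - ε * (ν' * μ)) : μ' = μ ∨ μ' = -μ := by
  have h1 : μ ∣ μ' := by
    have : μ ∣ ν * μ' :=
      (dvd_sub_left ⟨ε * ν', by ring⟩).1 ((Dvd.intro _ rfl).trans h)
    exact (Int.isCoprime_iff_gcd_eq_one.2 hco).symm.dvd_of_dvd_mul_left this
  have h2 : μ' ∣ μ := by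
    have : μ' ∣ ε * (ν' * μ) :=
      (dvd_sub_right ⟨ν, by ring⟩).1 ((Dvd.intro_left _ rfl).trans h)
    have : μ' ∣ ν' * μ := by rcases hε with rfl | rfl <;> simpa using this
    exact (Int.isCoprime_iff_gcd_eq_one.2 hco').symm.dvd_of_dvd_mul_left this
  exact Int.natAbs_eq_natAbs_iff.1 (Nat.dvd_antisymm (Int.natAbs_dvd_natAbs.2 h2)
    (Int.natAbs_dvd_natAbs.2 h1))

/-- Both orientations at once: `ε` is the prescribed determinant. -/
theorem exists_det_eq_iff {ν μ ν' μ' ε : ℤ} (hε : ε = 1 ∨ ε = -1) (hμ : μ ≠ 0)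
    (hco : Int.gcd ν μ = 1) (hco' : Int.gcd ν' μ' = 1) :
    (∃ A : Matrix (Fin 2) (Fin 2) ℤ, A.det = ε ∧
        (AddSubgroup.zmultiples (![1, 0] : Fin 2 → ℤ)).map A.mulVecLin.toAddMonoidHom
          = AddSubgroup.zmultiples (![1, 0] : Fin 2 → ℤ) ∧
        (AddSubgroup.zmultiples (![ν, μ] : Fin 2 → ℤ)).map A.mulVecLin.toAddMonoidHom
          = AddSubgroup.zmultiples (![ν', μ'] : Fin 2 → ℤ)) ↔
      μ * μ' ∣ ν * μ' - ε * (ν' * μ) := by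
  simp only [map_zmultiples_eq_iff, Matrix.det_fin_two]
  constructor
  · rintro ⟨A, hdet, h10, hνμ⟩
    generalize A 0 0 = a at *
    generalize A 0 1 = b at *
    generalize A 1 0 = c at *
    generalize A 1 1 = d at *
    obtain rfl : c = 0 := by rcases h10 with h | h <;> simpa using h.2
    have ha : a = 1 ∨ a = -1 := by simpa using h10
    have hd : d = ε * a := by rcases ha with rfl | rfl <;> linarith
    subst hd
    -- With `e` the sign of the image vector, the difference is `-e * ε * b * μ ^ 2`, and
    -- `μ * μ' = e * ε * a * μ ^ 2`; the quotient is `-a * b`.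
    refine ⟨-a * b, ?_⟩
    rcases hνμ with ⟨h1, h2⟩ | ⟨h1, h2⟩
    · obtain rfl := h1
      obtain rfl := h2
      rcases ha with rfl | rfl <;> ring
    · obtain rfl : ν' = -(a * ν + b * μ) := by linarith
      obtain rfl : μ' = -(0 * ν + ε * a * μ) := by linarith
      rcases ha with rfl | rfl <;> ring
  · intro h
    obtain ⟨s, hs, rfl⟩ : ∃ s : ℤ, (s = 1 ∨ s = -1) ∧ μ' = s * μ := by
      rcases eq_or_eq_neg_of_mul_dvd hε hco hco' h with h | h
      · exact ⟨1, by simp, by simpa using h⟩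
      · exact ⟨-1, by simp, by simpa using h⟩
    obtain ⟨q, hq⟩ := h
    have hq' : ν * s - ε * ν' = s * μ * q :=
      mul_right_cancel₀ hμ (by linarith)
    refine ⟨!![ε * s, -(ε * s * q); 0, s], ?_, ?_, Or.inl ?_⟩
    · rcases hs with rfl | rfl <;> simp
    · rcases hε with rfl | rfl <;> rcases hs with rfl | rfl <;> simp
    · have : ν' = ε * (ν * s - s * μ * q) := by
        rcases hε with rfl | rfl <;> linarith
      subst this
      constructor
      · simp; ring
      · simp


/-- Existence of a determinant `±1` integer matrix fixing the subgroup
generated by `(1,0)` and carrying the subgroup generated by `(ν,μ)` onto the subgroup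
generated by `(ν',μ')`, characterized by the congruences `ν/μ ≡ ±ν'/μ' (mod 1)`. -/
theorem exists_det_pm_one_matrix_mapping_zmultiples_iff
    (ν μ ν' μ' : ℤ) (hμ : μ ≠ 0) (hμ' : μ' ≠ 0)
    (hco : Int.gcd ν μ = 1) (hco' : Int.gcd ν' μ' = 1) :
    ((∃ A : Matrix (Fin 2) (Fin 2) ℤ, A.det = 1 ∧
        (AddSubgroup.zmultiples (![1, 0] : Fin 2 → ℤ)).map A.mulVecLin.toAddMonoidHom
          = AddSubgroup.zmultiples (![1, 0] : Fin 2 → ℤ) ∧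
        (AddSubgroup.zmultiples (![ν, μ] : Fin 2 → ℤ)).map A.mulVecLin.toAddMonoidHom
          = AddSubgroup.zmultiples (![ν', μ'] : Fin 2 → ℤ)) ↔
      μ * μ' ∣ ν * μ' - ν' * μ) ∧
    ((∃ A : Matrix (Fin 2) (Fin 2) ℤ, A.det = -1 ∧
        (AddSubgroup.zmultiples (![1, 0] : Fin 2 → ℤ)).map A.mulVecLin.toAddMonoidHom
          = AddSubgroup.zmultiples (![1, 0] : Fin 2 → ℤ) ∧
        (AddSubgroup.zmultiples (![ν, μ] : Fin 2 → ℤ)).map A.mulVecLin.toAddMonoidHom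
          = AddSubgroup.zmultiples (![ν', μ'] : Fin 2 → ℤ)) ↔
      μ * μ' ∣ ν * μ' + ν' * μ) := by
  constructor
  · simpa only [one_mul] using exists_det_eq_iff (Or.inl rfl) hμ hco hco'
  · simpa only [neg_one_mul, sub_neg_eq_add] using exists_det_eq_iff (Or.inr rfl) hμ hco hco'
end

section
/- Let ν, μ be integers with gcd(ν, μ) = 1, μ > 0 and 0 ≤ ν < μ. Suppose A is a 2×2 integer matrix with det A = ±1 whose induced automorphism of ℤ × ℤ maps the subgroup generated by (1,0) onto itself and maps the subgroup generated by (ν,μ) onto itself. Then there is ε ∈ {1, −1} such that A = ε·[[1,0],[0,1]], or A = ε·[[−1,1],[0,1]], or A = ε·[[−1,0],[0,1]]; moreover the second case can occur only if ν = 1 and μ = 2, and the third case can occur only if ν = 0. -/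
/-!
Preserving `⟨(1,0)⟩` forces `A = [[a,b],[0,d]]`, with `a, d = ±1` by the determinant. Preserving
`⟨(ν,μ)⟩` makes `(ν,μ)` an eigenvector, and its second coordinate shows that the eigenvalue is `d`;
the first coordinate then reads `a ν + b μ = d ν`. If `a = d` this gives `b = 0`. If `a = -d` it
gives `b μ = 2 d ν`, so `μ ∣ 2` by coprimality, which leaves only `(ν,μ) = (0,1)` and `(1,2)`.
-/

/-- A generator of a cyclic subgroup mapped onto itself by `A` is an eigenvector of `A`. -/
lemma exists_mulVec_eq_smul (A : Matrix (Fin 2) (Fin 2) ℤ) (v : Fin 2 → ℤ)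
    (h : (AddSubgroup.zmultiples v).map A.mulVecLin.toAddMonoidHom = AddSubgroup.zmultiples v) :
    ∃ k : ℤ, k • v = A.mulVec v := by
  have hmem : A.mulVec v ∈ AddSubgroup.zmultiples v := by
    rw [← h]
    exact ⟨v, AddSubgroup.mem_zmultiples v, rfl⟩
  exact AddSubgroup.mem_zmultiples_iff.mp hmem

/-- The only determinant `±1` integer matrices preserving both the subgroup
generated by `(1,0)` and the subgroup generated by `(ν,μ)` (with `gcd(ν,μ)=1`, `0 ≤ ν < μ`)
are `±I`, `±[[-1,1],[0,1]]` (only for `ν = 1, μ = 2`), and `±[[-1,0],[0,1]]` (only for `ν = 0`). -/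
theorem matrices_preserving_two_maximal_cyclic_subgroups
    (ν μ : ℤ) (hco : Int.gcd ν μ = 1) (hμ : 0 < μ) (hν0 : 0 ≤ ν) (hνμ : ν < μ)
    (A : Matrix (Fin 2) (Fin 2) ℤ) (hdet : A.det = 1 ∨ A.det = -1)
    (hfix1 : (AddSubgroup.zmultiples (![1, 0] : Fin 2 → ℤ)).map A.mulVecLin.toAddMonoidHom
      = AddSubgroup.zmultiples (![1, 0] : Fin 2 → ℤ))
    (hfix2 : (AddSubgroup.zmultiples (![ν, μ] : Fin 2 → ℤ)).map A.mulVecLin.toAddMonoidHom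
      = AddSubgroup.zmultiples (![ν, μ] : Fin 2 → ℤ)) :
    ∃ ε : ℤ, (ε = 1 ∨ ε = -1) ∧
      (A = ε • !![1, 0; 0, 1] ∨
       (A = ε • !![-1, 1; 0, 1] ∧ ν = 1 ∧ μ = 2) ∨
       (A = ε • !![-1, 0; 0, 1] ∧ ν = 0)) := by
  obtain ⟨m, hm⟩ := exists_mulVec_eq_smul A _ hfix1
  obtain ⟨k, hk⟩ := exists_mulVec_eq_smul A _ hfix2
  have hc : A 1 0 = 0 := by
    simpa [Matrix.mulVec, dotProduct, Fin.sum_univ_two] using (congrFun hm 1).symm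
  have hk0 : k * ν = A 0 0 * ν + A 0 1 * μ := by
    simpa [Matrix.mulVec, dotProduct, Fin.sum_univ_two] using congrFun hk 0
  have hk1 : k * μ = A 1 1 * μ := by
    simpa [Matrix.mulVec, dotProduct, Fin.sum_univ_two, hc] using congrFun hk 1
  have hkd : k = A 1 1 := mul_right_cancel₀ hμ.ne' hk1
  subst hkd
  rw [Matrix.det_fin_two, hc, mul_zero, sub_zero] at hdet
  have hA : A = !![A 0 0, A 0 1; 0, A 1 1] := by
    rw [← hc]
    exact Matrix.eta_fin_two A
  generalize A 0 0 = a at *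
  generalize A 0 1 = b at *
  generalize A 1 1 = d at *
  subst hA
  have hd : d = 1 ∨ d = -1 := by
    rw [← Int.isUnit_iff]
    exact isUnit_of_mul_isUnit_right (Int.isUnit_iff.mpr hdet)
  have had : a = d ∨ a = -d := by
    rcases hd with rfl | rfl <;> omega
  refine ⟨d, hd, ?_⟩
  rcases had with rfl | rfl
  · left
    have hb : b = 0 := by
      have : b * μ = 0 := by linarith
      exact (mul_eq_zero.mp this).resolve_right hμ.ne'
    subst hb
    simp
  · right
    have hdvd : μ ∣ 2 := by
      have h2 : μ ∣ ν * 2 := by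
        have hdd : d * d = 1 := by rcases hd with rfl | rfl <;> norm_num
        exact ⟨d * b, by linear_combination (-2 * ν) * hdd + d * hk0⟩
      exact IsCoprime.dvd_of_dvd_mul_left (Int.isCoprime_iff_gcd_eq_one.mpr hco).symm h2
    have hle : μ ≤ 2 := Int.le_of_dvd two_pos hdvd
    obtain ⟨rfl, rfl⟩ | ⟨rfl, rfl⟩ : (ν = 0 ∧ μ = 1) ∨ (ν = 1 ∧ μ = 2) := by
      interval_cases μ
      · omega
      · interval_cases ν
        · simp at hco
        · simp
    · right
      have hb : b = 0 := by linarith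
      simp [hb]
    · left
      have hb : b = d := by linarith
      simp [hb]
end

section
/- Let A and B be nontrivial groups and let G = A ∗ B be their free product. If G has a normal subgroup N that is nontrivial and cyclic, then A and B each have exactly two elements (so that G is the infinite dihedral group ℤ/2 ∗ ℤ/2). -/
/-!
Write `N = ⟨g⟩` and look at the reduced word of `g` in the free product; a nonempty reduced word
determines the factors in which it starts and ends.

* If `g` starts and ends in the same factor `i`, pick `b ≠ 1` in the other factor. Then
  `b g b⁻¹ ∈ N` commutes with `g`, but `b g b⁻¹ g` and `g b g b⁻¹` are both reduced as written and
  start in different factors (`not_normal_of_same_ends`).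
* If `g` starts in `i` with the letter `a` and ends in `j ≠ i`, then every nontrivial power of `g`
  starts and ends in different factors. For `x` in the factor `i` with `x ≠ 1` and `x ≠ a⁻¹`, the
  element `x g x⁻¹ ∈ N` starts and ends in `i`, which is impossible. So `a⁻¹` is the only
  nontrivial element of the factor `i` (`eq_inv_head`). Applying this to `g⁻¹` gives the same for
  the factor `j`.

The argument runs in `Monoid.CoprodI` indexed by `Bool`, where reduced words are available, and
transfers along an isomorphism with the binary coproduct (`coprodEquiv`).
-/

namespace FreeProductCyclic

open Monoid CoprodI

section Words

variable {ι : Type*} {M : ι → Type*} [∀ i, Group (M i)]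

theorem ends_eq {i j k l : ι} (w : NeWord M i j) (w' : NeWord M k l)
    (h : w.prod = w'.prod) : i = k ∧ j = l := by
  classical
  have hw : w.toWord = w'.toWord := Word.equiv.symm.injective h
  have hl : w.toList = w'.toList := congrArg Word.toList hw
  have h1 := w.toList_head?
  have h2 := w.toList_getLast?
  rw [hl, w'.toList_head?] at h1
  rw [hl, w'.toList_getLast?] at h2
  simp only [Option.some.injEq, Sigma.mk.injEq] at h1 h2
  exact ⟨h1.1.symm, h2.1.symm⟩

theorem prod_ne_one {i j : ι} (w : NeWord M i j) : w.prod ≠ 1 := by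
  classical
  intro h
  have hw : w.toWord = Word.empty := Word.equiv.symm.injective (h.trans Word.prod_empty.symm)
  exact w.toList_ne_nil (congrArg Word.toList hw)

theorem exists_pow {i j : ι} (hij : i ≠ j) (w : NeWord M i j) (n : ℕ) :
    ∃ w' : NeWord M i j, w'.prod = w.prod ^ (n + 1) := by
  induction n with
  | zero => exact ⟨w, by simp⟩
  | succ n ih =>
    obtain ⟨w', hw'⟩ := ih
    exact ⟨.append w' hij.symm w, by rw [NeWord.append_prod, hw', pow_succ _ (n + 1)]⟩

/-- A nontrivial power of an element starting and ending in different factors also starts and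
ends in different factors. -/
theorem not_mem_zpowers {i j k : ι} (hij : i ≠ j) (w : NeWord M i j) (v : NeWord M k k) :
    v.prod ∉ Subgroup.zpowers w.prod := by
  rintro ⟨n, hn⟩
  obtain ⟨n, rfl | rfl⟩ := n.eq_nat_or_neg <;> rcases n with _ | n
  · exact prod_ne_one v (by simpa using hn.symm)
  · obtain ⟨w', hw'⟩ := exists_pow hij w n
    obtain ⟨h1, h2⟩ := ends_eq w' v (by rw [hw', ← hn]; exact (zpow_natCast _ _).symm)
    exact hij (h1.trans h2.symm)
  · exact prod_ne_one v (by simpa using hn.symm)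
  · obtain ⟨w', hw'⟩ := exists_pow hij.symm w.inv n
    obtain ⟨h1, h2⟩ := ends_eq w' v (by
      rw [hw', ← hn, NeWord.inv_prod]
      simp only [zpow_neg, zpow_natCast, inv_pow])
    exact hij (h2.trans h1.symm)

theorem eq_inv_head {i j : ι} (hij : i ≠ j) (w : NeWord M i j)
    (hN : (Subgroup.zpowers w.prod).Normal) (x : M i) (hx : x ≠ 1) : x = w.head⁻¹ := by
  by_contra hne
  have hx' : x * w.head ≠ 1 := fun h => hne (eq_inv_of_mul_eq_one_left h)
  refine not_mem_zpowers hij w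
    (.append (w.mulHead x hx') hij.symm (.singleton x⁻¹ (inv_ne_one.mpr hx))) ?_
  rw [NeWord.append_prod, NeWord.mulHead_prod, NeWord.prod_singleton, map_inv]
  exact hN.conj_mem _ (Subgroup.mem_zpowers _) _

theorem card_eq_two {i j : ι} (hij : i ≠ j) (w : NeWord M i j) [Nontrivial (M i)]
    (hN : (Subgroup.zpowers w.prod).Normal) : Nat.card (M i) = 2 := by
  obtain ⟨x, hx⟩ := exists_ne (1 : M i)
  rw [Nat.card_eq_two_iff' 1]
  exact ⟨x, hx, fun y hy => (eq_inv_head hij w hN y hy).trans (eq_inv_head hij w hN x hx).symm⟩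

theorem not_normal_of_same_ends {i j : ι} (hij : i ≠ j) [Nontrivial (M j)] (w : NeWord M i i) :
    ¬ (Subgroup.zpowers w.prod).Normal := by
  intro hN
  obtain ⟨b, hb⟩ := exists_ne (1 : M j)
  -- the reduced word of `b g b⁻¹`
  let v : NeWord M j j := .append (.append (.singleton b hb) hij.symm w) hij
    (.singleton b⁻¹ (inv_ne_one.mpr hb))
  have hv : v.prod ∈ Subgroup.zpowers w.prod := by
    simp only [v, NeWord.append_prod, NeWord.prod_singleton, map_inv]
    exact hN.conj_mem _ (Subgroup.mem_zpowers _) _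
  obtain ⟨n, hn⟩ := hv
  have hcomm : Commute v.prod w.prod := by
    rw [← hn]
    exact (Commute.refl w.prod).zpow_left n
  have := ends_eq (.append v hij.symm w) (.append w hij v) (by
    simpa only [NeWord.append_prod] using hcomm.eq)
  exact hij this.2

end Words

theorem card_eq_two_of_coprodI {M : Bool → Type*} [∀ i, Group (M i)] [∀ i, Nontrivial (M i)]
    (g : CoprodI M) (hg : g ≠ 1) (hN : (Subgroup.zpowers g).Normal) (i : Bool) :
    Nat.card (M i) = 2 := by
  classical
  have hne : Word.equiv g ≠ Word.empty := fun h => hg <| by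
    rw [← Word.equiv.symm_apply_apply g, h]
    exact Word.prod_empty
  obtain ⟨k, l, w, hw⟩ := NeWord.of_word _ hne
  obtain rfl : w.prod = g := by
    rw [NeWord.prod, hw]
    exact Word.equiv.symm_apply_apply g
  by_cases hkl : k = l
  · subst hkl
    exact absurd hN (not_normal_of_same_ends (j := !k) (by simp) w)
  by_cases hik : i = k
  · subst hik
    exact card_eq_two hkl w hN
  · obtain rfl : i = l := by revert hkl hik; cases i <;> cases k <;> cases l <;> simp
    refine card_eq_two (Ne.symm hkl) w.inv ?_
    rwa [NeWord.inv_prod, Subgroup.zpowers_inv]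

universe u v

/-- The two factors as a family over `Bool`, lifted to a common universe. -/
def Fam (A : Type u) (B : Type v) : Bool → Type (max u v)
  | true => ULift.{v} A
  | false => ULift.{u} B

instance (A : Type u) (B : Type v) [Group A] [Group B] : ∀ i, Group (Fam A B i)
  | true => inferInstanceAs (Group (ULift.{v} A))
  | false => inferInstanceAs (Group (ULift.{u} B))

instance (A : Type u) (B : Type v) [Nontrivial A] [Nontrivial B] : ∀ i, Nontrivial (Fam A B i)
  | true => inferInstanceAs (Nontrivial (ULift.{v} A))
  | false => inferInstanceAs (Nontrivial (ULift.{u} B))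

section Equiv

variable (A : Type u) (B : Type v) [Group A] [Group B]

def famTrue : A ≃* Fam A B true := (MulEquiv.ulift (α := A)).symm

def famFalse : B ≃* Fam A B false := (MulEquiv.ulift (α := B)).symm

/-- The homomorphisms from the members of the family to the binary coproduct. -/
def famHom : ∀ i, Fam A B i →* Coprod A B
  | true => Coprod.inl.comp (famTrue A B).symm.toMonoidHom
  | false => Coprod.inr.comp (famFalse A B).symm.toMonoidHom

/-- The binary free product is the free product of the family `Fam A B`. -/
def coprodEquiv : Coprod A B ≃* CoprodI (Fam A B) :=
  MonoidHom.toMulEquiv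
    (Coprod.lift ((of (i := true)).comp (famTrue A B).toMonoidHom)
      ((of (i := false)).comp (famFalse A B).toMonoidHom))
    (CoprodI.lift (famHom A B))
    (by
      apply Coprod.hom_ext <;> ext x <;> simp [famHom])
    (by
      apply CoprodI.ext_hom
      rintro (_ | _) <;> ext x <;> simp [famHom])

end Equiv

end FreeProductCyclic

open FreeProductCyclic in
/-- The only nontrivial free product with a nontrivial cyclic normal subgroup
is the infinite dihedral group `ℤ/2 ∗ ℤ/2`: if `A ∗ B` (with `A`, `B` nontrivial) has a
nontrivial cyclic normal subgroup, then `A` and `B` both have exactly two elements. -/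
theorem free_product_with_cyclic_normal_subgroup
    {A B : Type*} [Group A] [Group B] [Nontrivial A] [Nontrivial B]
    (N : Subgroup (Monoid.Coprod A B)) (hnormal : N.Normal) (hnontriv : N ≠ ⊥)
    (hcyclic : ∃ g, N = Subgroup.zpowers g) :
    Nat.card A = 2 ∧ Nat.card B = 2 := by
  obtain ⟨g, rfl⟩ := hcyclic
  let e := coprodEquiv A B
  have hg : e g ≠ 1 := fun h => hnontriv <| by
    rw [Subgroup.zpowers_eq_bot]
    exact (map_eq_one_iff e e.injective).mp h
  have hN : (Subgroup.zpowers (e g)).Normal := by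
    have := hnormal.map e.toMonoidHom e.surjective
    rwa [MonoidHom.map_zpowers] at this
  have h := card_eq_two_of_coprodI (e g) hg hN
  exact ⟨(Nat.card_congr (famTrue A B).toEquiv).trans (h true),
    (Nat.card_congr (famFalse A B).toEquiv).trans (h false)⟩
end

section
/- For all integers p ≥ 2, q ≥ 2 and r ≥ 2, there exists a finite group G and elements a, b ∈ G such that the order of a is exactly p, the order of b is exactly q, and the order of a·b is exactly r. -/
/-!
Choose a prime `ℓ ≡ 1` modulo `2pqr`; the cyclic group `(ZMod ℓ)ˣ` then contains elements
`u`, `v`, `w` of orders `2p`, `2q`, `2r`. In `SL₂(ZMod ℓ)` take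
`A = !![u, 1; 0, u⁻¹]` and `B = !![v, 0; t, v⁻¹]`. The trace of `A * B` is `uv + t + u⁻¹v⁻¹`,
so `t` can be chosen to make it `w + w⁻¹`.

An element of `SL₂` over a field with trace `w + w⁻¹`, where `w` has order `2n` with `n ≥ 2`,
has distinct eigenvalues `w` and `w⁻¹`, so its `k`-th power is scalar iff `w ^ (2 * k) = 1`,
that is, iff `n ∣ k`. Hence its image modulo the centre has order exactly `n`
(`orderOf_mk_of_trace`), and the finite group `SL₂(ZMod ℓ)` modulo its centre has the required
elements.
-/

/-- The Cayley–Hamilton relation `M² = (w + winv) M - 1`, iterated. Here `winv` is the inverse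
of `w`; the factor `w - winv` clears the denominator of `(w ^ k - winv ^ k) / (w - winv)`. -/
lemma smul_pow_of_trace {F : Type*} [Field F] (M : Matrix (Fin 2) (Fin 2) F) (w winv : F)
    (hw : w * winv = 1) (hd : M 0 0 * M 1 1 - M 0 1 * M 1 0 = 1) (ht : M 0 0 + M 1 1 = w + winv)
    (k : ℕ) :
    (w - winv) • M ^ k = (w ^ k - winv ^ k) • M - (w ^ k * winv - winv ^ k * w) • 1 := by
  have h2 : M * M = (w + winv) • M - 1 := by
    ext i j
    fin_cases i <;> fin_cases j <;> simp [Matrix.mul_apply, Fin.sum_univ_two]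
    · linear_combination M 0 0 * ht - hd
    · linear_combination M 0 1 * ht
    · linear_combination M 1 0 * ht
    · linear_combination M 1 1 * ht - hd
  induction k with
  | zero =>
    ext i j
    simp
    ring
  | succ k ih =>
    rw [pow_succ, ← smul_mul_assoc, ih, sub_mul, smul_mul_assoc, smul_mul_assoc, one_mul, h2]
    ext i j
    simp only [Matrix.sub_apply, Matrix.smul_apply, smul_eq_mul]
    linear_combination (w ^ k - winv ^ k) * (1 : Matrix (Fin 2) (Fin 2) F) i j * hw

/-- An element of `SL₂(F)` with trace `w + w⁻¹`, where `w` has order `2n` with `n ≥ 2`, has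
order `n` modulo the centre. -/
lemma orderOf_mk_of_trace {F : Type*} [Field F] (M : Matrix.SpecialLinearGroup (Fin 2) F) (w : Fˣ)
    (n : ℕ) (hn : 2 ≤ n) (hw : orderOf w = 2 * n)
    (ht : M.1 0 0 + M.1 1 1 = (w : F) + ((w⁻¹ : Fˣ) : F)) :
    orderOf (QuotientGroup.mk M :
      Matrix.SpecialLinearGroup (Fin 2) F ⧸ Subgroup.center (Matrix.SpecialLinearGroup (Fin 2) F)) = n := by
  have hww : (w : F) * ((w⁻¹ : Fˣ) : F) = 1 := by simp
  have hd : M.1 0 0 * M.1 1 1 - M.1 0 1 * M.1 1 0 = 1 := by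
    rw [← Matrix.det_fin_two]; exact M.2
  have hpow : ∀ k : ℕ, (w : F) ^ k = ((w⁻¹ : Fˣ) : F) ^ k ↔ n ∣ k := by
    intro k
    rw [← Nat.mul_dvd_mul_iff_left (show 0 < 2 by norm_num), ← hw, orderOf_dvd_iff_pow_eq_one,
      ← Units.val_pow_eq_pow_val, ← Units.val_pow_eq_pow_val, Units.val_inj, inv_pow,
      eq_inv_iff_mul_eq_one, ← pow_add, two_mul]
  have hne : (w : F) - ((w⁻¹ : Fˣ) : F) ≠ 0 := by
    intro h
    have := (hpow 1).1 (by simpa using sub_eq_zero.1 h)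
    have := Nat.le_of_dvd one_pos this
    omega
  have key : ∀ k : ℕ, (QuotientGroup.mk M :
      Matrix.SpecialLinearGroup (Fin 2) F ⧸ Subgroup.center (Matrix.SpecialLinearGroup (Fin 2) F)) ^ k = 1 ↔
      n ∣ k := by
    intro k
    rw [← QuotientGroup.mk_pow, QuotientGroup.eq_one_iff,
      Matrix.SpecialLinearGroup.mem_center_iff, ← hpow]
    have hk := smul_pow_of_trace M.1 w ((w⁻¹ : Fˣ) : F) hww hd ht k
    generalize ((w⁻¹ : Fˣ) : F) = winv at *
    generalize (w : F) = w at *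
    constructor
    · rintro ⟨c, -, hc⟩
      by_contra hcon
      have hcon := sub_ne_zero.2 hcon
      rw [Matrix.SpecialLinearGroup.coe_pow] at hc
      rw [← hc] at hk
      have e00 := congrFun (congrFun hk 0) 0
      have e01 := congrFun (congrFun hk 0) 1
      have e11 := congrFun (congrFun hk 1) 1
      simp at e00 e01 e11
      have h01 : M.1 0 1 = 0 := by
        rcases e01 with h | h
        · exact absurd h hcon
        · exact h
      have hdiag : M.1 0 0 = M.1 1 1 := mul_left_cancel₀ hcon (by linear_combination e11 - e00)
      -- `M` would be scalar, so its two eigenvalues `w` and `winv` would coincide.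
      apply hne
      have : (w - winv) ^ 2 = 0 := by
        rw [h01] at hd
        rw [hdiag] at hd ht
        linear_combination 4 * hd - 4 * hww - (2 * M.1 1 1 + w + winv) * ht
      exact pow_eq_zero_iff (two_ne_zero) |>.1 this
    · intro h
      refine ⟨w ^ k, ?_, ?_⟩
      · have : w ^ k * winv ^ k = 1 := by rw [← mul_pow, hww, one_pow]
        rw [← h] at this
        simpa [sq] using this
      · rw [Matrix.SpecialLinearGroup.coe_pow]
        rw [← h, sub_self, zero_smul, zero_sub] at hk
        apply smul_right_injective _ hne
        simp only
        rw [hk]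
        ext i j
        simp only [Matrix.smul_apply, Matrix.neg_apply, smul_eq_mul, Matrix.scalar_apply,
          Matrix.diagonal_apply, Matrix.one_apply]
        split_ifs <;> ring
  exact Nat.dvd_antisymm (orderOf_dvd_iff_pow_eq_one.2 ((key n).2 dvd_rfl))
    ((key _).1 (pow_orderOf_eq_one _))

lemma exists_unit_orderOf (ℓ d : ℕ) [Fact ℓ.Prime] (h : d ∣ ℓ - 1) :
    ∃ u : (ZMod ℓ)ˣ, orderOf u = d := by
  obtain ⟨g, hg⟩ := IsCyclic.exists_ofOrder_eq_natCard (α := (ZMod ℓ)ˣ)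
  rw [Nat.card_eq_fintype_card, ZMod.card_units] at hg
  have hpos : ℓ - 1 ≠ 0 := by
    have := (Fact.out : ℓ.Prime).two_le
    omega
  exact ⟨g ^ (orderOf g / d), orderOf_pow_orderOf_div (by omega) (hg ▸ h)⟩

/-- Fox's theorem on Fenchel's conjecture: for all integers `p, q, r ≥ 2`
there is a finite group with elements `a`, `b` such that the orders of `a`, `b` and `a*b`
are exactly `p`, `q` and `r` respectively. -/
theorem exists_finite_group_with_orders (p q r : ℕ) (hp : 2 ≤ p) (hq : 2 ≤ q) (hr : 2 ≤ r) :
    ∃ (G : Type) (instG : Group G) (a b : G),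
      Finite G ∧
      (letI := instG
       orderOf a = p ∧ orderOf b = q ∧ orderOf (a * b) = r) := by
  obtain ⟨ℓ, hℓ, -, hmod⟩ := Nat.exists_prime_gt_modEq_one (k := 2 * p * q * r) 0 (by positivity)
  have : Fact ℓ.Prime := ⟨hℓ⟩
  have hdvd : 2 * p * q * r ∣ ℓ - 1 := (Nat.modEq_iff_dvd' hℓ.one_le).1 hmod.symm
  obtain ⟨u, hu⟩ := exists_unit_orderOf ℓ (2 * p) (Dvd.dvd.trans ⟨q * r, by ring⟩ hdvd)
  obtain ⟨v, hv⟩ := exists_unit_orderOf ℓ (2 * q) (Dvd.dvd.trans ⟨p * r, by ring⟩ hdvd)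
  obtain ⟨w, hw⟩ := exists_unit_orderOf ℓ (2 * r) (Dvd.dvd.trans ⟨p * q, by ring⟩ hdvd)
  let t : ZMod ℓ := (w : ZMod ℓ) + ((w⁻¹ : (ZMod ℓ)ˣ) : ZMod ℓ) - u * v
    - ((u⁻¹ : (ZMod ℓ)ˣ) : ZMod ℓ) * ((v⁻¹ : (ZMod ℓ)ˣ) : ZMod ℓ)
  let A : Matrix.SpecialLinearGroup (Fin 2) (ZMod ℓ) :=
    ⟨!![(u : ZMod ℓ), 1; 0, ((u⁻¹ : (ZMod ℓ)ˣ) : ZMod ℓ)], by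
      rw [Matrix.det_fin_two_of, Units.mul_inv]; ring⟩
  let B : Matrix.SpecialLinearGroup (Fin 2) (ZMod ℓ) :=
    ⟨!![(v : ZMod ℓ), 0; t, ((v⁻¹ : (ZMod ℓ)ˣ) : ZMod ℓ)], by
      rw [Matrix.det_fin_two_of, Units.mul_inv]; ring⟩
  refine ⟨Matrix.SpecialLinearGroup (Fin 2) (ZMod ℓ) ⧸
    Subgroup.center (Matrix.SpecialLinearGroup (Fin 2) (ZMod ℓ)), inferInstance,
    QuotientGroup.mk A, QuotientGroup.mk B, inferInstance, ?_, ?_, ?_⟩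
  · exact orderOf_mk_of_trace A u p hp hu rfl
  · exact orderOf_mk_of_trace B v q hq hv rfl
  · rw [← QuotientGroup.mk_mul]
    refine orderOf_mk_of_trace (A * B) w r hr hw ?_
    change (A.1 * B.1) 0 0 + (A.1 * B.1) 1 1 = _
    simp only [Matrix.mul_apply, Fin.sum_univ_two]
    change (u : ZMod ℓ) * v + 1 * t + (0 * 0 +
      ((u⁻¹ : (ZMod ℓ)ˣ) : ZMod ℓ) * ((v⁻¹ : (ZMod ℓ)ˣ) : ZMod ℓ)) = _
    ring
end

section
/- The triangle group Γ(2,3,3) is a finite group of order exactly 12, the triangle group Γ(2,3,4) is a finite group of order exactly 24, and the triangle group Γ(2,3,5) is a finite group of order exactly 60. -/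
/-!
Write `a`, `b` for the generators of `Γ(2,3,r)`, where `r = 3, 4, 5`, and `c = a * b`. Then
`a ^ 2 = c ^ r = (a * c) ^ 3 = 1` and the group is generated by `a` and `c`. A set of `m` left coset
representatives of `⟨c⟩` is guessed geometrically: the cosets correspond to the vertices of the
tetrahedron, octahedron or icosahedron (`m = 4, 6, 12`), on which `c` acts as a rotation about the
base vertex, and `a` as the half-turn about the midpoint of an edge at that vertex.

The union of the listed cosets is stable under left multiplication by `a` and `c`, as follows from
the rewriting rules `a c a = c⁻¹ a c⁻¹`, `a c⁻¹ a = c a c` and `a c⁻² a = c a c² a c`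
(`a_c_a`, `a_cinv_a`, `a_cinv_sq_a`). Hence the group has at most `m * r` elements. Conversely,
the `m * r` products (representative) * (power of `c`) have distinct images under a homomorphism to
`Equiv.Perm (Fin 4)` (`r = 3, 4`) or `Equiv.Perm (Fin 5)` (`r = 5`), so the bound is attained
(`card_of_cosetReps`).
-/

/-- The relation set of the triangle group `Γ(p,q,r)`: `a^p`, `b^q`, `(a*b)^r`
in the free group on two generators. -/
def triangleRels (p q r : ℕ) : Set (FreeGroup (Fin 2)) :=
  {FreeGroup.of 0 ^ p, FreeGroup.of 1 ^ q, (FreeGroup.of 0 * FreeGroup.of 1) ^ r}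

/-- The triangle group `Γ(p,q,r) = ⟨a, b ∣ a^p = b^q = (a*b)^r = 1⟩`. -/
abbrev TriangleGroup (p q r : ℕ) : Type := PresentedGroup (triangleRels p q r)

/-! ### Counting by coset representatives -/

/-- If the cosets `w i * ⟨c⟩` are permuted by generators `a`, `c` and `c ^ r = 1`, then the products
`w i * c ^ k` exhaust the group; if a homomorphism separates them, the group has order `n * r`. -/
theorem card_of_cosetReps {G P : Type*} [Group G] [Group P] {n r : ℕ} (hr : 0 < r)
    (a c : G) (gen : Subgroup.closure {a, c} = ⊤) (ha : a ^ 2 = 1) (hc : c ^ r = 1)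
    (w : Fin n → G) (h1 : ∃ i, w i = 1)
    (haw : ∀ i, ∃ j, ∃ k : ℕ, a * w i = w j * c ^ k)
    (hcw : ∀ i, ∃ j, ∃ k : ℕ, c * w i = w j * c ^ k)
    (f : G →* P)
    (hinj : Function.Injective fun p : Fin n × Fin r => f (w p.1) * f c ^ (p.2 : ℕ)) :
    Finite G ∧ Nat.card G = n * r := by
  have stable : ∀ x : G, (∀ i, ∃ j, ∃ k : ℕ, x * w i = w j * c ^ k) →
      ∀ g, (∃ i, ∃ k : ℕ, g = w i * c ^ k) → ∃ i, ∃ k : ℕ, x * g = w i * c ^ k := by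
    rintro x hx g ⟨i, k, rfl⟩
    obtain ⟨j, l, h⟩ := hx i
    exact ⟨j, l + k, by rw [← mul_assoc, h, mul_assoc, pow_add]⟩
  have stable_pow : ∀ (m : ℕ) g, (∃ i, ∃ k : ℕ, g = w i * c ^ k) →
      ∃ i, ∃ k : ℕ, c ^ m * g = w i * c ^ k := by
    intro m
    induction m with
    | zero => intro g hg; simpa using hg
    | succ m ih => intro g hg; rw [pow_succ, mul_assoc]; exact ih _ (stable c hcw g hg)
  have a_inv : a⁻¹ = a := inv_eq_of_mul_eq_one_left (by rw [← sq, ha])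
  have c_inv : c⁻¹ = c ^ (r - 1) :=
    inv_eq_of_mul_eq_one_left (by rw [← pow_succ, Nat.sub_add_cancel hr, hc])
  have all : ∀ g : G, ∃ i, ∃ k : ℕ, g = w i * c ^ k := by
    intro g
    have hg : g ∈ Subgroup.closure {a, c} := gen ▸ Subgroup.mem_top g
    induction hg using Subgroup.closure_induction_left with
    | one => obtain ⟨i, hi⟩ := h1; exact ⟨i, 0, by simp [hi]⟩
    | mul_left x hx y hy ih =>
      rcases hx with rfl | rfl
      · exact stable _ haw _ ih
      · exact stable _ hcw _ ih
    | inv_mul_cancel x hx y hy ih =>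
      rcases hx with rfl | rfl
      · rw [a_inv]; exact stable _ haw _ ih
      · rw [c_inv]; exact stable_pow _ _ ih
  have bij : Function.Bijective fun p : Fin n × Fin r => w p.1 * c ^ (p.2 : ℕ) := by
    constructor
    · intro p q h
      apply hinj
      simpa using congrArg f h
    · intro g
      obtain ⟨i, k, rfl⟩ := all g
      exact ⟨(i, ⟨k % r, Nat.mod_lt _ hr⟩), by simp [← pow_eq_pow_mod k hc]⟩
  refine ⟨Finite.of_surjective _ bij.2, ?_⟩
  rw [← Nat.card_congr (Equiv.ofBijective _ bij)]
  simp

/-! ### Rewriting rules and stability of the cosets -/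

section Rules

variable {G : Type*} [Group G] {a c : G}

theorem a_c_a (ha : a * a = 1) (h : a * c * (a * c) * (a * c) = 1) :
    a * c * a = c⁻¹ * a * c⁻¹ := by
  have a_inv : a⁻¹ = a := inv_eq_of_mul_eq_one_left ha
  calc a * c * a = (a * c * (a * c) * (a * c)) * c⁻¹ * a⁻¹ * c⁻¹ := by group
    _ = c⁻¹ * a * c⁻¹ := by rw [h, a_inv, one_mul]

theorem a_cinv_a (ha : a * a = 1) (h : a * c * (a * c) * (a * c) = 1) :
    a * c⁻¹ * a = c * a * c := by
  have a_inv : a⁻¹ = a := inv_eq_of_mul_eq_one_left ha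
  calc a * c⁻¹ * a = (a * c * a)⁻¹ := by simp [a_inv, mul_assoc]
    _ = (c⁻¹ * a * c⁻¹)⁻¹ := by rw [a_c_a ha h]
    _ = c * a⁻¹ * c := by group
    _ = c * a * c := by rw [a_inv]

theorem a_cinv_sq_a (ha : a * a = 1) (h : a * c * (a * c) * (a * c) = 1) :
    a * c⁻¹ ^ 2 * a = c * (a * c ^ 2 * a) * c := by
  calc a * c⁻¹ ^ 2 * a = a * c⁻¹ * (1 * (c⁻¹ * a)) := by group
    _ = (a * c⁻¹ * a) * (a * c⁻¹ * a) := by rw [← ha]; group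
    _ = c * (a * c ^ 2 * a) * c := by rw [a_cinv_a ha h]; simp [pow_succ, mul_assoc]

/-- Coset representatives of `⟨c⟩` for `r = 3`: base vertex and its neighbours `c ^ j * a`. -/
def tetraReps (a c : G) : Fin 4 → G := ![1, a, c * a, c ^ 2 * a]

/-- Coset representatives of `⟨c⟩` for `r = 4`: base vertex, its neighbours `c ^ j * a`, and the
antipode of the base vertex. -/
def octaReps (a c : G) : Fin 6 → G :=
  ![1, a, c * a, c ^ 2 * a, c ^ 3 * a, a * c ^ 2 * a]

/-- Coset representatives of `⟨c⟩` for `r = 5`: base vertex, its neighbours `c ^ j * a`, the vertices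
`c ^ j * (a * c ^ 2 * a)` at distance two, and the antipode of the base vertex. -/
def icosaReps (a c : G) : Fin 12 → G :=
  ![1, a, c * a, c ^ 2 * a, c ^ 3 * a, c ^ 4 * a,
    a * c ^ 2 * a, c * (a * c ^ 2 * a), c ^ 2 * (a * c ^ 2 * a), c ^ 3 * (a * c ^ 2 * a),
    c ^ 4 * (a * c ^ 2 * a), a * c ^ 3 * (a * c ^ 2 * a)]

theorem tetra_a (ha : a * a = 1) (h : a * c * (a * c) * (a * c) = 1) (hc : c ^ 3 = 1) (i : Fin 4) :
    ∃ j, ∃ k : ℕ, a * tetraReps a c i = tetraReps a c j * c ^ k := by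
  have c2 : c⁻¹ = c ^ 2 := inv_eq_of_mul_eq_one_left (by rw [← pow_succ, hc])
  have e1 := a_c_a ha h
  have e2 := a_cinv_a ha h
  rw [c2] at e1 e2
  fin_cases i
  · exact ⟨1, 0, by simp [tetraReps]⟩
  · exact ⟨0, 0, by simp [tetraReps, ha]⟩
  · exact ⟨3, 2, by simpa [tetraReps, mul_assoc] using e1⟩
  · exact ⟨2, 1, by simpa [tetraReps, mul_assoc] using e2⟩

theorem tetra_c (hc : c ^ 3 = 1) (i : Fin 4) :
    ∃ j, ∃ k : ℕ, c * tetraReps a c i = tetraReps a c j * c ^ k := by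
  fin_cases i
  · exact ⟨0, 1, by simp [tetraReps]⟩
  · exact ⟨2, 0, by simp [tetraReps]⟩
  · exact ⟨3, 0, by simp [tetraReps, pow_succ, mul_assoc]⟩
  · exact ⟨1, 0, by simp [tetraReps, ← mul_assoc, ← pow_succ', hc]⟩

theorem octa_a (ha : a * a = 1) (h : a * c * (a * c) * (a * c) = 1) (hc : c ^ 4 = 1) (i : Fin 6) :
    ∃ j, ∃ k : ℕ, a * octaReps a c i = octaReps a c j * c ^ k := by
  have c3 : c⁻¹ = c ^ 3 := inv_eq_of_mul_eq_one_left (by rw [← pow_succ, hc])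
  have e1 := a_c_a ha h
  have e2 := a_cinv_a ha h
  rw [c3] at e1 e2
  fin_cases i
  · exact ⟨1, 0, by simp [octaReps]⟩
  · exact ⟨0, 0, by simp [octaReps, ha]⟩
  · exact ⟨4, 3, by simpa [octaReps, mul_assoc] using e1⟩
  · exact ⟨5, 0, by simp [octaReps, mul_assoc]⟩
  · exact ⟨2, 1, by simpa [octaReps, mul_assoc] using e2⟩
  · exact ⟨3, 0, by simp [octaReps, ← mul_assoc, ha]⟩

theorem octa_c (ha : a * a = 1) (h : a * c * (a * c) * (a * c) = 1) (hc : c ^ 4 = 1) (i : Fin 6) :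
    ∃ j, ∃ k : ℕ, c * octaReps a c i = octaReps a c j * c ^ k := by
  have c3 : c⁻¹ = c ^ 3 := inv_eq_of_mul_eq_one_left (by rw [← pow_succ, hc])
  have c2 : c⁻¹ ^ 2 = c ^ 2 := by
    rw [inv_pow]; exact inv_eq_of_mul_eq_one_left (by rw [← pow_add, hc])
  have e3 := a_cinv_sq_a ha h
  rw [c2] at e3
  fin_cases i
  · exact ⟨0, 1, by simp [octaReps]⟩
  · exact ⟨2, 0, by simp [octaReps]⟩
  · exact ⟨3, 0, by simp [octaReps, pow_succ, mul_assoc]⟩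
  · exact ⟨4, 0, by simp [octaReps, pow_succ, mul_assoc]⟩
  · exact ⟨1, 0, by simp [octaReps, ← mul_assoc, ← pow_succ', hc]⟩
  · refine ⟨5, 3, ?_⟩
    change c * (a * c ^ 2 * a) = (a * c ^ 2 * a) * c ^ 3
    rw [← c3, eq_mul_inv_iff_mul_eq, ← e3]

theorem icosa_a (ha : a * a = 1) (h : a * c * (a * c) * (a * c) = 1) (hc : c ^ 5 = 1)
    (i : Fin 12) : ∃ j, ∃ k : ℕ, a * icosaReps a c i = icosaReps a c j * c ^ k := by
  have c4 : c⁻¹ = c ^ 4 := inv_eq_of_mul_eq_one_left (by rw [← pow_succ, hc])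
  have c3 : c⁻¹ ^ 2 = c ^ 3 := by
    rw [inv_pow]; exact inv_eq_of_mul_eq_one_left (by rw [← pow_add, hc])
  have e1 := a_c_a ha h
  have e2 := a_cinv_a ha h
  have e3 := a_cinv_sq_a ha h
  rw [c3] at e3
  have m1 : a * (c * (a * c ^ 2 * a)) = c ^ 3 * a * c ^ 4 :=
    calc a * (c * (a * c ^ 2 * a)) = (a * c * a) * c ^ 2 * a := by group
      _ = (c⁻¹ * a * c⁻¹) * c ^ 2 * a := by rw [e1]
      _ = c⁻¹ * (a * c * a) := by simp [pow_succ, mul_assoc]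
      _ = c⁻¹ ^ 2 * a * c⁻¹ := by rw [e1]; simp [pow_succ, mul_assoc]
      _ = c ^ 3 * a * c ^ 4 := by rw [c3, c4]
  have m4 : a * (c⁻¹ * (a * c ^ 2 * a)) = c ^ 2 * (a * c ^ 2 * a) * c :=
    calc a * (c⁻¹ * (a * c ^ 2 * a)) = (a * c⁻¹ * a) * c ^ 2 * a := by group
      _ = c * (a * c ^ 3 * a) := by rw [e2]; group
      _ = c ^ 2 * (a * c ^ 2 * a) * c := by rw [e3]; simp [pow_succ, mul_assoc]
  have m2 : a * (c ^ 2 * (a * c ^ 2 * a)) = c ^ 4 * (a * c ^ 2 * a) * c ^ 4 :=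
    calc a * (c ^ 2 * (a * c ^ 2 * a)) = a * (c ^ 2 * (a * c ^ 2 * a) * c) * c⁻¹ := by group
      _ = (a * a) * (c⁻¹ * (a * c ^ 2 * a)) * c⁻¹ := by rw [← m4]; group
      _ = c ^ 4 * (a * c ^ 2 * a) * c ^ 4 := by rw [ha, one_mul, c4]
  rw [c4] at e1 e2 m4
  fin_cases i
  · exact ⟨1, 0, by simp [icosaReps]⟩
  · exact ⟨0, 0, by simp [icosaReps, ha]⟩
  · exact ⟨5, 4, by simpa [icosaReps, mul_assoc] using e1⟩
  · exact ⟨6, 0, by simp [icosaReps, mul_assoc]⟩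
  · exact ⟨7, 1, by simpa [icosaReps, mul_assoc] using e3⟩
  · exact ⟨2, 1, by simpa [icosaReps, mul_assoc] using e2⟩
  · exact ⟨3, 0, by simp [icosaReps, ← mul_assoc, ha]⟩
  · exact ⟨4, 4, m1⟩
  · exact ⟨10, 4, m2⟩
  · exact ⟨11, 0, by simp [icosaReps, mul_assoc]⟩
  · exact ⟨8, 1, by simpa [icosaReps, mul_assoc] using m4⟩
  · exact ⟨9, 0, by simp [icosaReps, ← mul_assoc, ha]⟩

theorem icosa_c (ha : a * a = 1) (h : a * c * (a * c) * (a * c) = 1) (hc : c ^ 5 = 1)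
    (i : Fin 12) : ∃ j, ∃ k : ℕ, c * icosaReps a c i = icosaReps a c j * c ^ k := by
  have c4 : c⁻¹ = c ^ 4 := inv_eq_of_mul_eq_one_left (by rw [← pow_succ, hc])
  have c3 : c⁻¹ ^ 2 = c ^ 3 := by
    rw [inv_pow]; exact inv_eq_of_mul_eq_one_left (by rw [← pow_add, hc])
  have e3 := a_cinv_sq_a ha h
  rw [c3] at e3
  have z : a * c ^ 3 * (a * c ^ 2 * a) = c * (a * c ^ 3 * (a * c ^ 2 * a)) * c :=
    calc a * c ^ 3 * (a * c ^ 2 * a) = (a * c ^ 3 * a) * c ^ 2 * a := by group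
      _ = (c * (a * c ^ 2 * a) * c) * c ^ 2 * a := by rw [e3]
      _ = c * (a * c ^ 2) * (a * c ^ 3 * a) := by simp [pow_succ, mul_assoc]
      _ = c * (a * c ^ 2) * (c * (a * c ^ 2 * a) * c) := by rw [e3]
      _ = c * (a * c ^ 3 * (a * c ^ 2 * a)) * c := by simp [pow_succ, mul_assoc]
  fin_cases i
  · exact ⟨0, 1, by simp [icosaReps]⟩
  · exact ⟨2, 0, by simp [icosaReps]⟩
  · exact ⟨3, 0, by simp [icosaReps, pow_succ, mul_assoc]⟩
  · exact ⟨4, 0, by simp [icosaReps, pow_succ, mul_assoc]⟩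
  · exact ⟨5, 0, by simp [icosaReps, pow_succ, mul_assoc]⟩
  · exact ⟨1, 0, by simp [icosaReps, ← mul_assoc, ← pow_succ', hc]⟩
  · exact ⟨7, 0, by simp [icosaReps]⟩
  · exact ⟨8, 0, by simp [icosaReps, pow_succ, mul_assoc]⟩
  · exact ⟨9, 0, by simp [icosaReps, pow_succ, mul_assoc]⟩
  · exact ⟨10, 0, by simp [icosaReps, pow_succ, mul_assoc]⟩
  · exact ⟨6, 0, by simp [icosaReps, ← mul_assoc, ← pow_succ', hc]⟩
  · refine ⟨11, 4, ?_⟩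
    change c * (a * c ^ 3 * (a * c ^ 2 * a)) = (a * c ^ 3 * (a * c ^ 2 * a)) * c ^ 4
    rw [← c4, eq_mul_inv_iff_mul_eq, ← z]

end Rules

/-! ### The triangle groups -/

section Triangle

variable {r : ℕ}

/-- The first generator `a` of `Γ(2,3,r)`. -/
def triA (r : ℕ) : TriangleGroup 2 3 r := PresentedGroup.of 0

/-- The product `c = a * b` of the two generators of `Γ(2,3,r)`. -/
def triC (r : ℕ) : TriangleGroup 2 3 r := PresentedGroup.of 0 * PresentedGroup.of 1

theorem triA_sq : triA r ^ 2 = 1 :=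
  PresentedGroup.one_of_mem (rels := triangleRels 2 3 r) (x := FreeGroup.of 0 ^ 2)
    (by simp [triangleRels])

theorem triC_pow : triC r ^ r = 1 :=
  PresentedGroup.one_of_mem (rels := triangleRels 2 3 r)
    (x := (FreeGroup.of 0 * FreeGroup.of 1) ^ r) (by simp [triangleRels])

theorem triA_mul_self : triA r * triA r = 1 := by rw [← sq, triA_sq]

theorem triA_mul_triC : triA r * triC r = PresentedGroup.of 1 := by
  have := triA_mul_self (r := r)
  unfold triC
  rw [← mul_assoc]
  change triA r * triA r * _ = _
  rw [this, one_mul]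

theorem triA_mul_triC_cube :
    triA r * triC r * (triA r * triC r) * (triA r * triC r) = 1 := by
  rw [triA_mul_triC, ← pow_two, ← pow_succ]
  exact PresentedGroup.one_of_mem (rels := triangleRels 2 3 r) (x := FreeGroup.of 1 ^ 3)
    (by simp [triangleRels])

theorem tri_gen : Subgroup.closure {triA r, triC r} = ⊤ := by
  rw [eq_top_iff, ← PresentedGroup.closure_range_of (triangleRels 2 3 r), Subgroup.closure_le]
  have hA : triA r ∈ Subgroup.closure {triA r, triC r} := Subgroup.subset_closure (by simp)
  have hC : triC r ∈ Subgroup.closure {triA r, triC r} := Subgroup.subset_closure (by simp)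
  rintro _ ⟨i, rfl⟩
  fin_cases i
  · exact hA
  · exact triA_mul_triC (r := r) ▸ mul_mem hA hC

/-- The homomorphism from `Γ(2,3,r)` sending the generators to given elements `x`, `y` that satisfy
the relations. -/
def triLift {P : Type*} [Group P] (x y : P) (hx : x ^ 2 = 1) (hy : y ^ 3 = 1)
    (hxy : (x * y) ^ r = 1) : TriangleGroup 2 3 r →* P :=
  PresentedGroup.toGroup (f := ![x, y]) (by
    rintro _ (rfl | rfl | rfl) <;> simpa)

variable {P : Type*} [Group P] {x y : P} {hx : x ^ 2 = 1} {hy : y ^ 3 = 1} {hxy : (x * y) ^ r = 1}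

theorem triLift_triA : triLift x y hx hy hxy (triA r) = x := by
  simp [triLift, triA]

theorem triLift_triC : triLift x y hx hy hxy (triC r) = x * y := by
  simp [triLift, triC]

end Triangle

section MapReps

variable {G P : Type*} [Group G] [Group P] (f : G →* P) (a c : G)

theorem map_tetraReps (i : Fin 4) : f (tetraReps a c i) = tetraReps (f a) (f c) i := by
  fin_cases i <;> simp [tetraReps]

theorem map_octaReps (i : Fin 6) : f (octaReps a c i) = octaReps (f a) (f c) i := by
  fin_cases i <;> simp [octaReps]

theorem map_icosaReps (i : Fin 12) : f (icosaReps a c i) = icosaReps (f a) (f c) i := by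
  fin_cases i <;> simp [icosaReps]

end MapReps

open Equiv in
theorem tetra_injective : Function.Injective fun p : Fin 4 × Fin 3 =>
    tetraReps (swap 0 1 * swap 2 3 : Perm (Fin 4)) (swap 0 1 * swap 2 3 * (swap 0 1 * swap 1 2)) p.1
      * (swap 0 1 * swap 2 3 * (swap 0 1 * swap 1 2)) ^ (p.2 : ℕ) := by
  decide +kernel

open Equiv in
theorem octa_injective : Function.Injective fun p : Fin 6 × Fin 4 =>
    octaReps (swap 0 1 : Perm (Fin 4)) (swap 0 1 * (swap 1 2 * swap 2 3)) p.1
      * (swap 0 1 * (swap 1 2 * swap 2 3)) ^ (p.2 : ℕ) := by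
  decide +kernel

open Equiv in
theorem icosa_injective : Function.Injective fun p : Fin 12 × Fin 5 =>
    icosaReps (swap 0 1 * swap 2 3 : Perm (Fin 5)) (swap 0 1 * swap 2 3 * (swap 0 2 * swap 2 4)) p.1
      * (swap 0 1 * swap 2 3 * (swap 0 2 * swap 2 4)) ^ (p.2 : ℕ) := by
  decide +kernel

open Equiv in
/-- `Γ(2,3,3)` is finite of order 12, `Γ(2,3,4)` is finite of order 24, and
`Γ(2,3,5)` is finite of order 60. -/
theorem triangleGroup_platonic_orders :
    (Finite (TriangleGroup 2 3 3) ∧ Nat.card (TriangleGroup 2 3 3) = 12) ∧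
    (Finite (TriangleGroup 2 3 4) ∧ Nat.card (TriangleGroup 2 3 4) = 24) ∧
    (Finite (TriangleGroup 2 3 5) ∧ Nat.card (TriangleGroup 2 3 5) = 60) := by
  refine ⟨?_, ?_, ?_⟩
  · refine card_of_cosetReps (n := 4) (r := 3) (by norm_num) (triA 3) (triC 3) tri_gen triA_sq
      triC_pow (tetraReps _ _) ⟨0, rfl⟩ (tetra_a triA_mul_self triA_mul_triC_cube triC_pow)
      (tetra_c triC_pow)
      (triLift (swap 0 1 * swap 2 3 : Perm (Fin 4)) (swap 0 1 * swap 1 2)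
        (by decide +kernel) (by decide +kernel) (by decide +kernel)) ?_
    simp only [map_tetraReps, triLift_triA, triLift_triC]
    exact tetra_injective
  · refine card_of_cosetReps (n := 6) (r := 4) (by norm_num) (triA 4) (triC 4) tri_gen triA_sq
      triC_pow (octaReps _ _) ⟨0, rfl⟩ (octa_a triA_mul_self triA_mul_triC_cube triC_pow)
      (octa_c triA_mul_self triA_mul_triC_cube triC_pow)
      (triLift (swap 0 1 : Perm (Fin 4)) (swap 1 2 * swap 2 3)
        (by decide +kernel) (by decide +kernel) (by decide +kernel)) ?_
    simp only [map_octaReps, triLift_triA, triLift_triC]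
    exact octa_injective
  · refine card_of_cosetReps (n := 12) (r := 5) (by norm_num) (triA 5) (triC 5) tri_gen triA_sq
      triC_pow (icosaReps _ _) ⟨0, rfl⟩ (icosa_a triA_mul_self triA_mul_triC_cube triC_pow)
      (icosa_c triA_mul_self triA_mul_triC_cube triC_pow)
      (triLift (swap 0 1 * swap 2 3 : Perm (Fin 5)) (swap 0 2 * swap 2 4)
        (by decide +kernel) (by decide +kernel) (by decide +kernel)) ?_
    simp only [map_icosaReps, triLift_triA, triLift_triC]
    exact icosa_injective
end

section
/- For all integers p, q, r ≥ 2, in the triangle group Γ(p,q,r) the image of the generator a has order exactly p, the image of the generator b has order exactly q, and the image of the product a·b has order exactly r. -/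
open scoped MatrixGroups in
/-- Cayley–Hamilton, iterated: powers of a unimodular `2 × 2` matrix with eigenvalues `z`, `z⁻¹`. -/
lemma sl_two_pow_formula (M : SL(2, ℂ)) (z : ℂ) (hz : z ≠ 0)
    (hM : (M : Matrix (Fin 2) (Fin 2) ℂ).trace = z + z⁻¹) (n : ℕ) :
    (z - z⁻¹) • (M : Matrix (Fin 2) (Fin 2) ℂ) ^ n =
      (z ^ n - z⁻¹ ^ n) • (M : Matrix (Fin 2) (Fin 2) ℂ) -
        (z ^ n * z⁻¹ - z⁻¹ ^ n * z) • (1 : Matrix (Fin 2) (Fin 2) ℂ) := by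
  have hsq : (M : Matrix (Fin 2) (Fin 2) ℂ) * M =
      (z + z⁻¹) • (M : Matrix (Fin 2) (Fin 2) ℂ) - 1 := by
    have hd := M.det_coe
    rw [Matrix.det_fin_two] at hd
    rw [← hM, Matrix.trace_fin_two]
    ext i j
    fin_cases i <;> fin_cases j <;> simp [Matrix.mul_apply, Fin.sum_univ_two] <;>
      first | linear_combination -hd | ring
  have hzz : z * z⁻¹ = 1 := mul_inv_cancel₀ hz
  induction n with
  | zero =>
    simp only [pow_zero, sub_self, zero_smul, one_mul, zero_sub, ← neg_smul, neg_sub]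
  | succ n ih =>
    rw [pow_succ, ← smul_mul_assoc, ih, sub_mul, smul_mul_assoc, hsq, smul_mul_assoc, one_mul]
    generalize z⁻¹ = w at *
    ext i j
    simp only [Matrix.sub_apply, Matrix.smul_apply, smul_eq_mul]
    linear_combination ((1 : Matrix (Fin 2) (Fin 2) ℂ) i j * (z ^ n - w ^ n)) * hzz

open scoped MatrixGroups in
/-- If the trace of `M ∈ SL(2, ℂ)` is `z + z⁻¹` with `z` a primitive `2p`-th root of unity and
`p ≥ 2`, then `Mⁿ` is central exactly when `p ∣ n`. The bound `p ≥ 2` gives `z ≠ z⁻¹`. -/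
lemma pow_mem_center_iff (M : SL(2, ℂ)) (z : ℂ) (p : ℕ) (hp : 2 ≤ p)
    (hz : IsPrimitiveRoot z (2 * p))
    (hM : (M : Matrix (Fin 2) (Fin 2) ℂ).trace = z + z⁻¹) (n : ℕ) :
    M ^ n ∈ Subgroup.center SL(2, ℂ) ↔ p ∣ n := by
  have hz0 : z ≠ 0 := hz.ne_zero (by omega)
  have key : ∀ k : ℕ, z ^ k - z⁻¹ ^ k = 0 ↔ p ∣ k := by
    intro k
    rw [← Nat.mul_dvd_mul_iff_left (by norm_num : 0 < 2), ← hz.pow_eq_one_iff_dvd, sub_eq_zero,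
      inv_pow, ← mul_eq_one_iff_eq_inv₀ (pow_ne_zero _ hz0), ← pow_add, two_mul]
  have hd : z - z⁻¹ ≠ 0 := by
    intro h
    have := (key 1).1 (by simpa using h)
    have := Nat.le_of_dvd one_pos this
    omega
  have hf := sl_two_pow_formula M z hz0 hM n
  -- The commutators of `Mⁿ` and of `M` with any `N` are proportional.
  have hcomm : ∀ N : Matrix (Fin 2) (Fin 2) ℂ,
      (z - z⁻¹) • (N * (M : Matrix (Fin 2) (Fin 2) ℂ) ^ n -
        (M : Matrix (Fin 2) (Fin 2) ℂ) ^ n * N) =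
      (z ^ n - z⁻¹ ^ n) • (N * (M : Matrix (Fin 2) (Fin 2) ℂ) - M * N) := by
    intro N
    rw [smul_sub, ← mul_smul_comm, ← smul_mul_assoc, hf]
    simp only [mul_sub, sub_mul, mul_smul_comm, smul_mul_assoc, mul_one, one_mul, smul_sub]
    abel
  rw [← key n]
  constructor
  · intro h
    by_contra hn
    have hMc : M ∈ Subgroup.center SL(2, ℂ) := by
      rw [Subgroup.mem_center_iff] at h ⊢
      intro N
      have h1 := congrArg (fun X : SL(2, ℂ) => (X : Matrix (Fin 2) (Fin 2) ℂ)) (h N)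
      simp only [Matrix.SpecialLinearGroup.coe_mul, Matrix.SpecialLinearGroup.coe_pow] at h1
      have h2 := hcomm N
      rw [h1, sub_self, smul_zero, eq_comm, smul_eq_zero_iff_right hn, sub_eq_zero] at h2
      exact Subtype.ext (by simpa using h2)
    obtain ⟨s, hs, hsM⟩ := Matrix.SpecialLinearGroup.mem_center_iff.1 hMc
    -- A central `M` is `s • 1` with `s² = 1`, so `z + z⁻¹ = 2s` forces `z = s = z⁻¹`.
    rw [← hsM, Matrix.trace_fin_two] at hM
    simp only [Matrix.scalar_apply, Matrix.diagonal_apply_eq] at hM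
    simp only [Fintype.card_fin] at hs
    have hzz : z * z⁻¹ = 1 := mul_inv_cancel₀ hz0
    refine hd (pow_eq_zero_iff two_ne_zero |>.1 ?_)
    linear_combination -(z + z⁻¹ + 2 * s) * hM + 4 * hs - 4 * hzz
  · intro h
    rw [Subgroup.mem_center_iff]
    intro N
    have h2 := hcomm N
    rw [h, zero_smul, smul_eq_zero_iff_right hd, sub_eq_zero] at h2
    exact Subtype.ext (by simpa using h2)

open scoped MatrixGroups in
lemma exists_traces (x y t : ℂ) (hx : x ≠ 0) (hy : y ≠ 0) :
    ∃ A B : SL(2, ℂ), (A : Matrix (Fin 2) (Fin 2) ℂ).trace = x + x⁻¹ ∧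
      (B : Matrix (Fin 2) (Fin 2) ℂ).trace = y + y⁻¹ ∧
      ((A * B : SL(2, ℂ)) : Matrix (Fin 2) (Fin 2) ℂ).trace = t := by
  obtain ⟨A, hA⟩ : ∃ A : SL(2, ℂ), (A : Matrix (Fin 2) (Fin 2) ℂ) = !![x, 1; 0, x⁻¹] :=
    ⟨⟨_, by simp [Matrix.det_fin_two, hx]⟩, rfl⟩
  obtain ⟨B, hB⟩ : ∃ B : SL(2, ℂ), (B : Matrix (Fin 2) (Fin 2) ℂ) =
      !![y, 0; t - x * y - x⁻¹ * y⁻¹, y⁻¹] :=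
    ⟨⟨_, by simp [Matrix.det_fin_two, hy]⟩, rfl⟩
  refine ⟨A, B, ?_, ?_, ?_⟩
  · simp [hA, Matrix.trace_fin_two]
  · simp [hB, Matrix.trace_fin_two]
  · rw [Matrix.SpecialLinearGroup.coe_mul, hA, hB]
    simp [Matrix.trace_fin_two]
    ring

open scoped MatrixGroups in
lemma orderOf_mk_center (M : SL(2, ℂ)) (z : ℂ) (p : ℕ) (hp : 2 ≤ p)
    (hz : IsPrimitiveRoot z (2 * p))
    (hM : (M : Matrix (Fin 2) (Fin 2) ℂ).trace = z + z⁻¹) :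
    orderOf (M : SL(2, ℂ) ⧸ Subgroup.center SL(2, ℂ)) = p := by
  refine Nat.dvd_right_iff_eq.1 fun n => ?_
  rw [orderOf_dvd_iff_pow_eq_one, ← QuotientGroup.mk_pow, QuotientGroup.eq_one_iff,
    pow_mem_center_iff M z p hp hz hM]

/-- in `Γ(p,q,r)` (with `p, q, r ≥ 2`) the images of the generators `a`, `b`
and of the product `a*b` have orders exactly `p`, `q` and `r` respectively. -/
theorem triangleGroup_generator_orders (p q r : ℕ) (hp : 2 ≤ p) (hq : 2 ≤ q) (hr : 2 ≤ r) :
    orderOf (PresentedGroup.of (rels := triangleRels p q r) 0) = p ∧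
    orderOf (PresentedGroup.of (rels := triangleRels p q r) 1) = q ∧
    orderOf (PresentedGroup.of (rels := triangleRels p q r) 0 *
      PresentedGroup.of (rels := triangleRels p q r) 1) = r := by
  have hx := Complex.isPrimitiveRoot_exp (2 * p) (by omega)
  have hy := Complex.isPrimitiveRoot_exp (2 * q) (by omega)
  have hz := Complex.isPrimitiveRoot_exp (2 * r) (by omega)
  obtain ⟨A, B, hA, hB, hAB⟩ := exists_traces _ _ _
    (hx.ne_zero (by omega)) (hy.ne_zero (by omega))
  have oA := orderOf_mk_center A _ p hp hx hA
  have oB := orderOf_mk_center B _ q hq hy hB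
  have oAB := orderOf_mk_center (A * B) _ r hr hz hAB
  rw [QuotientGroup.mk_mul] at oAB
  generalize (A : Matrix.SpecialLinearGroup (Fin 2) ℂ ⧸ Subgroup.center _) = a at oA oAB
  generalize (B : Matrix.SpecialLinearGroup (Fin 2) ℂ ⧸ Subgroup.center _) = b at oB oAB
  have hrel : ∀ w ∈ triangleRels p q r, FreeGroup.lift ![a, b] w = 1 := by
    rintro w (rfl | rfl | rfl)
    · simp [← oA, pow_orderOf_eq_one]
    · simp [← oB, pow_orderOf_eq_one]
    · simp [← oAB, pow_orderOf_eq_one]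
  have rel_one : ∀ w ∈ triangleRels p q r, PresentedGroup.mk (triangleRels p q r) w = 1 :=
    fun w hw => PresentedGroup.one_of_mem hw
  have f0 : PresentedGroup.toGroup hrel (PresentedGroup.of 0) = a := by simp
  have f1 : PresentedGroup.toGroup hrel (PresentedGroup.of 1) = b := by simp
  refine ⟨Nat.dvd_antisymm ?_ ?_, Nat.dvd_antisymm ?_ ?_, Nat.dvd_antisymm ?_ ?_⟩
  · exact orderOf_dvd_of_pow_eq_one (rel_one _ (Or.inl rfl))
  · have := orderOf_map_dvd (PresentedGroup.toGroup hrel) (PresentedGroup.of 0)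
    rwa [f0, oA] at this
  · exact orderOf_dvd_of_pow_eq_one (rel_one _ (Or.inr (Or.inl rfl)))
  · have := orderOf_map_dvd (PresentedGroup.toGroup hrel) (PresentedGroup.of 1)
    rwa [f1, oB] at this
  · exact orderOf_dvd_of_pow_eq_one (rel_one _ (Or.inr (Or.inr rfl)))
  · have := orderOf_map_dvd (PresentedGroup.toGroup hrel)
      (PresentedGroup.of 0 * PresentedGroup.of 1)
    rwa [map_mul, f0, f1, oAB] at this
end

section
/- For all integers p, q, r ≥ 2, the triangle group Γ(p,q,r) is infinite if and only if 1/p + 1/q + 1/r ≤ 1 (as rational numbers). -/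
namespace TriangleGroupAux

/-! ### Finiteness -/

/-- The union of the double cosets `⟨t⟩ w ⟨t⟩`, `w ∈ F`, is finite, contains `1` and is stable
under right multiplication by both generators, so it is the whole group. -/
theorem finite_of_doubleCosets {G : Type} [Group G] {x t : G} {n : ℕ}
    (hgen : Subgroup.closure {x, t} = ⊤) (hx : x * x = 1) (hn : 0 < n) (ht : t ^ n = 1)
    (F : Set G) (hF : F.Finite) (h1 : (1 : G) ∈ F)
    (hmul : ∀ w ∈ F, ∀ k < n, ∃ w' ∈ F, ∃ i j : ℤ, w * t ^ k * x = t ^ i * w' * t ^ j) :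
    Finite G := by
  set H : Subgroup G := Subgroup.zpowers t with hH
  have hHfin : (H : Set G).Finite := by
    have : IsOfFinOrder t := isOfFinOrder_iff_pow_eq_one.2 ⟨n, hn, ht⟩
    exact (finite_zpowers.2 this)
  let S : Set G := {g | ∃ w ∈ F, ∃ i j : ℤ, g = t ^ i * w * t ^ j}
  have hSfin : S.Finite := by
    refine ((hHfin.mul hF).mul hHfin).subset ?_
    rintro _ ⟨w, hw, i, j, rfl⟩
    exact Set.mul_mem_mul (Set.mul_mem_mul ⟨i, rfl⟩ hw) ⟨j, rfl⟩
  have hSx : ∀ g ∈ S, g * x ∈ S := by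
    rintro _ ⟨w, hw, i, j, rfl⟩
    -- Only exponents in `[0, n)` are covered by `hmul`, so reduce `j` modulo `n`.
    obtain ⟨k, hk, hjk⟩ : ∃ k < n, t ^ j = t ^ k := by
      have hn' : (0 : ℤ) < n := by exact_mod_cast hn
      refine ⟨(j % n).toNat, by have := Int.emod_lt_of_pos j hn'; omega, ?_⟩
      rw [← zpow_natCast, Int.toNat_of_nonneg (Int.emod_nonneg j hn'.ne')]
      conv_lhs => rw [← Int.mul_ediv_add_emod j n, zpow_add, zpow_mul, zpow_natCast, ht, one_zpow,
        one_mul]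
    obtain ⟨w', hw', i', j', h⟩ := hmul w hw k hk
    refine ⟨w', hw', i + i', j', ?_⟩
    rw [hjk, zpow_add, mul_assoc (t ^ i), mul_assoc (t ^ i), h]
    simp only [mul_assoc]
  have hSt : ∀ (m : ℤ), ∀ g ∈ S, g * t ^ m ∈ S := by
    rintro m _ ⟨w, hw, i, j, rfl⟩
    exact ⟨w, hw, i, j + m, by rw [zpow_add, mul_assoc (t ^ i * w)]⟩
  -- An equivalence rather than an implication, so that the induction passes through inverses.
  have key : ∀ g : G, ∀ s, s ∈ S ↔ s * g ∈ S := by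
    intro g
    have hg : g ∈ Subgroup.closure {x, t} := by rw [hgen]; trivial
    induction hg using Subgroup.closure_induction with
    | mem y hy =>
      rcases hy with rfl | rfl
      · exact fun s => ⟨hSx s, fun h => by simpa [mul_assoc, hx] using hSx _ h⟩
      · exact fun s => ⟨fun h => by simpa using hSt 1 s h,
          fun h => by simpa [mul_assoc] using hSt (-1) _ h⟩
    | one => simp
    | mul a b _ _ ha hb => intro s; rw [ha s, hb (s * a), mul_assoc]
    | inv a _ ha => intro s; rw [ha (s * a⁻¹)]; simp
  have hall : S = Set.univ := by
    ext g
    simpa using (key g 1).1 ⟨1, h1, 0, 0, by simp⟩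
  exact Set.finite_univ_iff.1 (hall ▸ hSfin)

/-- Every group generated by `a`, `b` with `a ^ p = b ^ q = (a * b) ^ r = 1` is finite. -/
def ForcesFinite (p q r : ℕ) : Prop :=
  ∀ (G : Type) [Group G] (a b : G), Subgroup.closure {a, b} = ⊤ →
    a ^ p = 1 → b ^ q = 1 → (a * b) ^ r = 1 → Finite G

/-- The generators `b⁻¹, a⁻¹` have product `(a * b)⁻¹`. -/
theorem ForcesFinite.swap {p q r : ℕ} (h : ForcesFinite p q r) : ForcesFinite q p r := by
  intro G _ a b hgen ha hb hab
  refine h G b⁻¹ a⁻¹ ?_ (by simpa using hb) (by simpa using ha)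
    (by rw [← mul_inv_rev, inv_pow, hab, inv_one])
  rw [eq_top_iff, ← hgen, Subgroup.closure_le]
  rintro _ (rfl | rfl)
  · exact inv_mem_iff.1 (Subgroup.subset_closure (by simp))
  · exact inv_mem_iff.1 (Subgroup.subset_closure (by simp))

/-- The generators `(a * b)⁻¹, a` have product `b⁻¹ * a⁻¹ * a = b⁻¹`. -/
theorem ForcesFinite.rotate {p q r : ℕ} (h : ForcesFinite p q r) : ForcesFinite q r p := by
  intro G _ a b hgen ha hb hab
  refine h G (a * b)⁻¹ a ?_ (by rw [inv_pow, hab, inv_one]) ha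
    (by simpa [mul_assoc] using hb)
  have h1 : a ∈ Subgroup.closure {(a * b)⁻¹, a} := Subgroup.subset_closure (by simp)
  have h2 : (a * b)⁻¹ ∈ Subgroup.closure {(a * b)⁻¹, a} := Subgroup.subset_closure (by simp)
  rw [eq_top_iff, ← hgen, Subgroup.closure_le]
  rintro _ (rfl | rfl)
  · exact h1
  · simpa using mul_mem (inv_mem h1) (inv_mem h2)

theorem closure_mul {G : Type} [Group G] {a b : G} (h : Subgroup.closure {a, b} = ⊤) :
    Subgroup.closure {a, a * b} = ⊤ := by
  have h1 : a ∈ Subgroup.closure {a, a * b} := Subgroup.subset_closure (by simp)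
  have h2 : a * b ∈ Subgroup.closure {a, a * b} := Subgroup.subset_closure (by simp)
  rw [eq_top_iff, ← h, Subgroup.closure_le]
  rintro _ (rfl | rfl)
  · exact h1
  · simpa using mul_mem (inv_mem h1) h2

theorem forcesFinite_two_two {n : ℕ} (hn : 0 < n) : ForcesFinite 2 2 n := by
  intro G _ x y hgen hx hy ht
  have hx2 : x * x = 1 := by rw [← sq, hx]
  have hy2 : y * y = 1 := by rw [← sq, hy]
  have hxi : x⁻¹ = x := inv_eq_of_mul_eq_one_left hx2
  have hyi : y⁻¹ = y := inv_eq_of_mul_eq_one_left hy2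
  have hconj : ∀ k : ℕ, x * (x * y) ^ k * x = (x * y) ^ (-k : ℤ) := by
    intro k
    have : x * (x * y) * x⁻¹ = (x * y)⁻¹ := by
      rw [mul_inv_rev, hxi, hyi, ← mul_assoc x x, hx2, one_mul]
    rw [zpow_neg, zpow_natCast, ← inv_pow, ← this, conj_pow, hxi]
  refine finite_of_doubleCosets (closure_mul hgen) hx2 hn ht {1, x} (by simp) (by simp) ?_
  rintro w (rfl | rfl) k -
  · exact ⟨x, by simp, k, 0, by simp⟩
  · exact ⟨1, by simp, -k, 0, by simp [hconj]⟩

section TwoThree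

variable {G : Type} [Group G] {x t : G}

/-- For an involution `x`, the relation `(x t)³ = 1` shortens `x t x`, a word with two letters `x`,
to one with a single `x`. -/
theorem braid_of_pow_three (hx : x * x = 1) (h : (x * t) ^ 3 = 1) :
    x * t * x = t⁻¹ * x * t⁻¹ := by
  have hxi : x⁻¹ = x := inv_eq_of_mul_eq_one_left hx
  have h' : (x * t * x) * (t * x * t) = 1 := by rw [← h]; simp [pow_succ, mul_assoc]
  rw [eq_inv_of_mul_eq_one_left h']
  simp [mul_assoc, hxi]

theorem braid_inv (hx : x * x = 1) (h : x * t * x = t⁻¹ * x * t⁻¹) :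
    x * t⁻¹ * x = t * x * t := by
  have hxi : x⁻¹ = x := inv_eq_of_mul_eq_one_left hx
  simpa [mul_assoc, hxi] using congrArg (·⁻¹) h

/-- Squaring `x t x = t⁻¹ x t⁻¹` gives `x t² x = t⁻¹ (x t⁻² x) t⁻¹`. -/
theorem braid_sq_inv (hx : x * x = 1) (h : x * t * x = t⁻¹ * x * t⁻¹) :
    x * (t ^ 2)⁻¹ * x = t * (x * t ^ 2 * x) * t := by
  have h2 : x * t ^ 2 * x = (x * t * x) * (x * t * x) := by
    calc x * t ^ 2 * x = x * t * 1 * t * x := by simp [sq, mul_assoc]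
      _ = _ := by rw [← hx]; simp only [mul_assoc]
  rw [h2, h]
  simp [sq, mul_assoc]

end TwoThree

theorem forcesFinite_two_three {n : ℕ} (h3 : 3 ≤ n) (h5 : n ≤ 5) : ForcesFinite 2 3 n := by
  intro G _ x y hgen hx hy ht
  have hx2 : x * x = 1 := by rw [← sq, hx]
  have hgen' := closure_mul hgen
  obtain ⟨t, htdef⟩ : ∃ t, t = x * y := ⟨_, rfl⟩
  rw [← htdef] at ht hgen'
  have hxt : (x * t) ^ 3 = 1 := by rw [htdef, ← mul_assoc, hx2, one_mul, hy]
  have b1 := braid_of_pow_three hx2 hxt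
  have b2 := braid_inv hx2 b1
  have b3 := braid_sq_inv hx2 b1
  have one_case : ∀ k : ℕ, (1 : G) * t ^ k * x = t ^ (k : ℤ) * x * t ^ (0 : ℤ) := by simp
  -- `v = t v t` says that `v` conjugates `t` to `t⁻¹`.
  have pow_conj : ∀ v : G, v = t * v * t → ∀ k : ℕ, v * t ^ k = t ^ (-k : ℤ) * v := by
    intro v hv k
    induction k with
    | zero => simp
    | succ k ih =>
      have hv' : v * t = t⁻¹ * v := by
        conv_rhs => rw [hv]
        simp [mul_assoc]
      rw [pow_succ, ← mul_assoc, ih, mul_assoc, hv', ← mul_assoc, ← zpow_sub_one]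
      congr 2; push_cast; ring
  obtain rfl | rfl | rfl : n = 3 ∨ n = 4 ∨ n = 5 := by omega
  · have e2 : t ^ 2 = t⁻¹ := eq_inv_of_mul_eq_one_left (by rw [← pow_succ, ht])
    refine finite_of_doubleCosets hgen' hx2 (by norm_num) ht {1, x} (by simp) (by simp) ?_
    rintro w (rfl | rfl) k hk
    · exact ⟨x, by simp, k, 0, one_case k⟩
    · interval_cases k
      · exact ⟨1, by simp, 0, 0, by simp [hx2]⟩
      · exact ⟨w, by simp, -1, -1, by simp [b1]⟩
      · exact ⟨w, by simp, 1, 1, by simp [e2, b2]⟩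
  · have e3 : t ^ 3 = t⁻¹ := eq_inv_of_mul_eq_one_left (by rw [← pow_succ, ht])
    have e2 : (t ^ 2)⁻¹ = t ^ 2 := inv_eq_of_mul_eq_one_left (by rw [← pow_add, ht])
    rw [e2] at b3
    refine finite_of_doubleCosets hgen' hx2 (by norm_num) ht {1, x, x * t ^ 2 * x}
      (by simp) (by simp) ?_
    rintro w (rfl | rfl | rfl) k hk
    · exact ⟨x, by simp, k, 0, one_case k⟩
    · interval_cases k
      · exact ⟨1, by simp, 0, 0, by simp [hx2]⟩
      · exact ⟨w, by simp, -1, -1, by simp [b1]⟩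
      · exact ⟨w * t ^ 2 * w, by simp, 0, 0, by simp⟩
      · exact ⟨w, by simp, 1, 1, by simp [e3, b2]⟩
    · refine ⟨x, by simp, -k, 2, ?_⟩
      rw [pow_conj _ b3 k]
      simp only [mul_assoc, hx2, mul_one, zpow_ofNat]
  · have e4 : t ^ 4 = t⁻¹ := eq_inv_of_mul_eq_one_left (by rw [← pow_succ, ht])
    have e2 : (t ^ 2)⁻¹ = t ^ 3 := inv_eq_of_mul_eq_one_left (by rw [← pow_add, ht])
    rw [e2] at b3
    -- Abstracted names keep `simp` from unfolding the representatives `u` and `v`.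
    obtain ⟨u, hu⟩ : ∃ u, u = x * t ^ 2 * x := ⟨_, rfl⟩
    rw [← hu] at b3
    obtain ⟨v, hv⟩ : ∃ v, v = u * t ^ 3 * x := ⟨_, rfl⟩
    have hvt : v = t * v * t := by
      calc v = x * t ^ 2 * (x * t ^ 3 * x) := by rw [hv, hu]; simp only [mul_assoc]
        _ = x * t ^ 2 * (t * u * t) := by rw [b3]
        _ = (x * t ^ 3 * x) * t ^ 2 * x * t := by rw [hu]; simp [pow_succ, mul_assoc]
        _ = t * (u * t ^ 3 * x) * t := by rw [b3]; simp [pow_succ, mul_assoc]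
        _ = t * v * t := by rw [hv]
    refine finite_of_doubleCosets hgen' hx2 (by norm_num) ht {1, x, u, v}
      (by simp) (by simp) ?_
    rintro w (rfl | rfl | rfl | rfl) k hk
    · exact ⟨x, by simp, k, 0, one_case k⟩
    · interval_cases k
      · exact ⟨1, by simp, 0, 0, by simp [hx2]⟩
      · exact ⟨w, by simp, -1, -1, by simp [b1]⟩
      · exact ⟨u, by simp, 0, 0, by simp [hu]⟩
      · exact ⟨u, by simp, 1, 1, by simp [b3]⟩
      · exact ⟨w, by simp, 1, 1, by simp [e4, b2]⟩
    · have split : w * t ^ k * x = x * t ^ 2 * (x * t ^ k * x) := by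
        rw [hu]; simp only [mul_assoc]
      interval_cases k
      · refine ⟨x, by simp, 0, 2, ?_⟩
        rw [split, pow_zero, mul_one, hx2]
        simp
      · refine ⟨x, by simp, -1, -2, ?_⟩
        rw [split, pow_one, b1]
        calc x * t ^ 2 * (t⁻¹ * x * t⁻¹) = (x * t * x) * t⁻¹ := by simp [sq, mul_assoc]
          _ = _ := by rw [b1]; simp [zpow_neg, mul_assoc]; rw [← mul_inv_rev, ← sq]
      · refine ⟨w, by simp, -1, -1, ?_⟩
        have b3' : w = t⁻¹ * (x * t ^ 3 * x) * t⁻¹ := by rw [b3]; simp [mul_assoc]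
        have e22 : t⁻¹ * t ^ 3 = t ^ 2 := by simp [pow_succ', ← mul_assoc]
        calc w * t ^ 2 * x = x * t ^ 2 * (x * t ^ 2 * x) := split
          _ = x * t ^ 2 * w := by rw [hu]
          _ = x * t ^ 2 * (t⁻¹ * (x * t ^ 3 * x) * t⁻¹) := by rw [← b3']
          _ = (x * t * x) * t ^ 3 * x * t⁻¹ := by simp [sq, mul_assoc]
          _ = t⁻¹ * x * (t⁻¹ * t ^ 3) * x * t⁻¹ := by rw [b1]; simp only [mul_assoc]
          _ = t⁻¹ * (x * t ^ 2 * x) * t⁻¹ := by rw [e22]; simp only [mul_assoc]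
          _ = _ := by rw [← hu]; simp
      · exact ⟨v, by simp, 0, 0, by simp [hv]⟩
      · refine ⟨w, by simp, 1, 2, ?_⟩
        rw [split, e4, b2]
        calc x * t ^ 2 * (t * x * t) = (x * t ^ 3 * x) * t := by simp [pow_succ, mul_assoc]
          _ = _ := by rw [b3]; simp [mul_assoc, ← sq]
    · refine ⟨u, by simp, -k, 3, ?_⟩
      rw [pow_conj _ hvt k]
      rw [hv]
      simp only [mul_assoc, hx2, mul_one, zpow_ofNat]

theorem forcesFinite {p q r : ℕ} (hp : 2 ≤ p) (hq : 2 ≤ q) (hr : 2 ≤ r)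
    (h : p * q * r < q * r + p * r + p * q) : ForcesFinite p q r := by
  have sorted : ∀ p q r : ℕ, 2 ≤ p → p ≤ q → q ≤ r → p * q * r < q * r + p * r + p * q →
      ForcesFinite p q r := by
    intro p q r hp hpq hqr h
    have hp2 : p = 2 := by
      by_contra hne
      have hp3 : 3 ≤ p := by omega
      nlinarith [Nat.mul_le_mul_right (q * r) hp3, Nat.mul_le_mul_right r hpq,
        Nat.mul_le_mul_left p hqr, Nat.mul_le_mul hpq hqr]
    subst hp2
    have hq3 : q < 4 := by
      by_contra hne
      have hq4 : 4 ≤ q := by omega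
      nlinarith [Nat.mul_le_mul_right r hq4]
    interval_cases q
    · exact forcesFinite_two_two (by omega)
    · exact forcesFinite_two_three hqr (by omega)
  rcases le_total p q with h1 | h1 <;> rcases le_total q r with h2 | h2 <;>
    rcases le_total p r with h3 | h3
  · exact sorted p q r hp h1 h2 h
  · exact sorted p q r hp h1 h2 h
  · exact (sorted p r q hp h3 h2 (by nlinarith)).swap.rotate
  · exact (sorted r p q hr h3 h1 (by nlinarith)).rotate
  · exact (sorted q p r hq h1 h3 (by nlinarith)).swap
  · exact (sorted q r p hq h2 h3 (by nlinarith)).rotate.rotate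
  · exact (sorted r q p hr h2 h1 (by nlinarith)).rotate.swap
  · exact (sorted r q p hr h2 h1 (by nlinarith)).rotate.swap

/-! ### Infiniteness -/

open Matrix

/-- Cayley–Hamilton for a `2 × 2` matrix of determinant `1`. -/
theorem cayley_two (M : Matrix (Fin 2) (Fin 2) ℂ) (hM : M.det = 1) :
    M * M = M.trace • M - 1 := by
  rw [Matrix.det_fin_two] at hM
  ext i j
  fin_cases i <;> fin_cases j <;>
    simp [Matrix.mul_apply, Fin.sum_univ_two, Matrix.trace_fin_two] <;>
    first | linear_combination hM | linear_combination -hM | ring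

/-- Powers of a matrix of determinant `1` and trace `2 cos θ` in closed form: both sides satisfy the
Chebyshev recursion. -/
theorem sin_smul_pow (M : Matrix (Fin 2) (Fin 2) ℂ) (hM : M.det = 1) (θ : ℝ)
    (htr : M.trace = 2 * Complex.cos θ) (n : ℕ) :
    Complex.sin θ • M ^ (n + 1) =
      Complex.sin ((n + 1) * θ) • M - Complex.sin (n * θ) • (1 : Matrix (Fin 2) (Fin 2) ℂ) := by
  induction n with
  | zero => simp
  | succ n ih =>
    rw [pow_succ, ← smul_mul_assoc, ih, sub_mul, smul_mul_assoc, smul_mul_assoc, cayley_two M hM,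
      htr, one_mul, smul_sub, smul_smul]
    have : Complex.sin (((n + 1 : ℕ) + 1) * θ) =
        Complex.sin ((n + 1) * θ) * (2 * Complex.cos θ) - Complex.sin (n * θ) := by
      have e1 : (((n + 1 : ℕ) : ℂ) + 1) * θ = (n + 1) * θ + θ := by push_cast; ring
      have e2 : (n : ℂ) * θ = (n + 1) * θ - θ := by ring
      rw [e1, e2, Complex.sin_add, Complex.sin_sub]; ring
    rw [this, sub_smul]
    push_cast
    abel

/-- At `θ = π / n` the coefficient `sin (n θ)` vanishes and `sin ((n - 1) θ) = sin θ ≠ 0`. -/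
theorem pow_eq_neg_one (M : Matrix (Fin 2) (Fin 2) ℂ) (hM : M.det = 1) (n : ℕ) (hn : 2 ≤ n)
    (htr : M.trace = 2 * Complex.cos (Real.pi / n : ℝ)) : M ^ n = -1 := by
  obtain ⟨m, rfl⟩ : ∃ m, n = m + 1 := ⟨n - 1, by omega⟩
  have h := sin_smul_pow M hM _ htr m
  have hm : ((m : ℂ) + 1) ≠ 0 := by exact_mod_cast Nat.succ_ne_zero m
  have e1 : ((m : ℂ) + 1) * (Real.pi / (m + 1 : ℕ) : ℝ) = Real.pi := by
    push_cast; field_simp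
  have e2 : (m : ℂ) * (Real.pi / (m + 1 : ℕ) : ℝ) = Real.pi - (Real.pi / (m + 1 : ℕ) : ℝ) := by
    push_cast; field_simp; ring
  have hs : Complex.sin (Real.pi / (m + 1 : ℕ) : ℝ) ≠ 0 := by
    rw [← Complex.ofReal_sin]
    have hn' : (2 : ℝ) ≤ (m + 1 : ℕ) := by exact_mod_cast hn
    exact_mod_cast (Real.sin_pos_of_pos_of_lt_pi (by positivity)
      (div_lt_self Real.pi_pos (by linarith))).ne'
  rw [e1, e2, Complex.sin_pi_sub, Complex.sin_pi, zero_smul, zero_sub, ← smul_neg] at h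
  exact smul_right_injective _ hs h

/-- The coefficients satisfy the Chebyshev recursion `u' = τ u - v`, `v' = u`; for `τ ≥ 2` the first
one is nondecreasing in the exponent, so it never vanishes. -/
theorem exists_pow_eq (C : Matrix (Fin 2) (Fin 2) ℂ) (hC : C.det = 1) (τ : ℝ) (hτ : 2 ≤ τ)
    (htr : C.trace = τ) (n : ℕ) :
    ∃ u v : ℝ, 0 < u ∧ v ≤ u ∧ C ^ (n + 1) = (u : ℂ) • C - (v : ℂ) • 1 := by
  induction n with
  | zero => exact ⟨1, 0, one_pos, zero_le_one, by simp⟩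
  | succ n ih =>
    obtain ⟨u, v, hu, hvu, h⟩ := ih
    refine ⟨τ * u - v, u, by nlinarith, by nlinarith, ?_⟩
    rw [pow_succ, h, sub_mul, smul_mul_assoc, smul_mul_assoc, cayley_two C hC, htr, one_mul,
      smul_sub, smul_smul]
    push_cast
    rw [sub_smul, mul_comm (τ : ℂ)]
    abel

/-- If `C ^ n = u C - v` is scalar with `u ≠ 0`, then `C` is itself scalar, hence `± 1`, and the trace
bound excludes `-1`. -/
theorem eq_one_of_pow_scalar (C : Matrix (Fin 2) (Fin 2) ℂ) (hC : C.det = 1) (τ : ℝ) (hτ : 2 ≤ τ)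
    (htr : C.trace = τ) (n : ℕ) (hn : 0 < n) (s : ℂ) (hs : C ^ n = s • 1) : C = 1 := by
  obtain ⟨m, rfl⟩ : ∃ m, n = m + 1 := ⟨n - 1, by omega⟩
  obtain ⟨u, v, hu, -, h⟩ := exists_pow_eq C hC τ hτ htr m
  have hu' : (u : ℂ) ≠ 0 := by exact_mod_cast hu.ne'
  obtain ⟨c, rfl⟩ : ∃ c : ℂ, C = c • 1 := by
    refine ⟨(u : ℂ)⁻¹ * (s + v), ?_⟩
    rw [mul_smul, add_smul, ← hs, h, sub_add_cancel, smul_smul, inv_mul_cancel₀ hu', one_smul]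
  have htr' : c * 2 = τ := by simpa [Matrix.trace_fin_two] using htr
  have hdet : c = 1 ∨ c = -1 := by simpa [Matrix.det_fin_two] using hC
  rcases hdet with rfl | rfl
  · simp
  · exfalso
    have : (-1 * 2 : ℝ) = τ := by exact_mod_cast htr'
    linarith

/-- From `cos γ ≥ cos (π - α - β)` follows `cos γ + cos α cos β ≥ sin α sin β ≥ 0`; square this. -/
theorem cos_ineq {α β γ : ℝ} (hα : 0 ≤ α) (hβ : 0 ≤ β) (hγ : 0 ≤ γ)
    (h : α + β + γ ≤ Real.pi) :
    1 ≤ Real.cos α ^ 2 + Real.cos β ^ 2 + Real.cos γ ^ 2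
      + 2 * Real.cos α * Real.cos β * Real.cos γ := by
  have h1 : Real.cos (Real.pi - (α + β)) ≤ Real.cos γ :=
    Real.cos_le_cos_of_nonneg_of_le_pi hγ (by linarith) (by linarith)
  rw [Real.cos_pi_sub, Real.cos_add] at h1
  have hs : 0 ≤ Real.sin α * Real.sin β :=
    mul_nonneg (Real.sin_nonneg_of_nonneg_of_le_pi hα (by linarith))
      (Real.sin_nonneg_of_nonneg_of_le_pi hβ (by linarith))
  have h2 : (Real.sin α * Real.sin β) ^ 2 ≤ (Real.cos γ + Real.cos α * Real.cos β) ^ 2 :=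
    pow_le_pow_left₀ hs (by linarith) 2
  rw [mul_pow, Real.sin_sq, Real.sin_sq] at h2
  nlinarith

/-- Fricke's trace identity for the commutator in `SL₂(ℂ)`. -/
theorem trace_commutator (A B : SpecialLinearGroup (Fin 2) ℂ) :
    (A * B * A⁻¹ * B⁻¹).1.trace = A.1.trace ^ 2 + B.1.trace ^ 2 + (A * B).1.trace ^ 2
      - A.1.trace * B.1.trace * (A * B).1.trace - 2 := by
  have hA : A.1.det = 1 := A.2
  have hB : B.1.det = 1 := B.2
  change (A.1 * B.1 * A.1.adjugate * B.1.adjugate).trace = A.1.trace ^ 2 + B.1.trace ^ 2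
    + (A.1 * B.1).trace ^ 2 - A.1.trace * B.1.trace * (A.1 * B.1).trace - 2
  generalize A.1 = M at *
  generalize B.1 = N at *
  rw [Matrix.det_fin_two] at hA hB
  simp only [Matrix.adjugate_fin_two, Matrix.trace_fin_two, Matrix.mul_apply, Fin.sum_univ_two,
    Matrix.of_apply, Matrix.cons_val', Matrix.cons_val_zero, Matrix.cons_val_one,
    Matrix.cons_val_fin_one]
  -- The identity is bihomogeneous of degree `(2, 2)` once each term is completed with the factors
  -- `det M`, `det N` it lacks; the coefficients replace these factors by `1`.
  linear_combination (M 0 0 + M 1 1) ^ 2 * hB + (N 0 0 + N 1 1) ^ 2 * hA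
    - 2 * (N 0 0 * N 1 1 - N 0 1 * N 1 0) * hA - 2 * hB

/-- Take `A = diag (ζ, ζ⁻¹)` with `ζ = exp (iπ/p)`. Since `ζ ≠ ζ⁻¹`, the traces of `B` and `A B`
determine the diagonal of `B`; its upper right entry is set to `1`, which prevents commutation. -/
theorem exists_matrices (p q r : ℕ) (hp : 2 ≤ p) :
    ∃ A B : SpecialLinearGroup (Fin 2) ℂ,
      A.1.trace = 2 * Complex.cos (Real.pi / p : ℝ) ∧
      B.1.trace = 2 * Complex.cos (Real.pi / q : ℝ) ∧
      (A * B).1.trace = -(2 * Complex.cos (Real.pi / r : ℝ)) ∧ A * B ≠ B * A := by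
  set θ : ℂ := ((Real.pi / p : ℝ) : ℂ) with hθ
  set ζ : ℂ := Complex.exp (θ * Complex.I) with hζ
  set ξ : ℂ := Complex.exp (-θ * Complex.I) with hξ
  have hmul : ζ * ξ = 1 := by rw [hζ, hξ, ← Complex.exp_add]; simp
  have hadd : ζ + ξ = 2 * Complex.cos θ := by rw [Complex.two_cos]
  have hs : Complex.sin θ ≠ 0 := by
    rw [hθ, ← Complex.ofReal_sin]
    have hp' : (2 : ℝ) ≤ p := by exact_mod_cast hp
    exact_mod_cast (Real.sin_pos_of_pos_of_lt_pi (by positivity)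
      (div_lt_self Real.pi_pos (by linarith))).ne'
  have hne : ζ - ξ ≠ 0 := by
    have : ζ - ξ = 2 * Complex.sin θ * Complex.I := by
      rw [Complex.two_sin, mul_assoc, Complex.I_mul_I]; ring
    rw [this]
    exact mul_ne_zero (mul_ne_zero two_ne_zero hs) Complex.I_ne_zero
  set y : ℂ := 2 * Complex.cos (Real.pi / q : ℝ)
  set z : ℂ := -(2 * Complex.cos (Real.pi / r : ℝ))
  obtain ⟨s, t, hst, hz⟩ : ∃ s t : ℂ, s + t = y ∧ ζ * s + ξ * t = z := by
    refine ⟨(z - ξ * y) / (ζ - ξ), (ζ * y - z) / (ζ - ξ), ?_, ?_⟩ <;> field_simp <;> ring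
  refine ⟨⟨!![ζ, 0; 0, ξ], by simp [Matrix.det_fin_two, hmul]⟩,
    ⟨!![s, 1; s * t - 1, t], by simp [Matrix.det_fin_two]⟩, ?_, ?_, ?_, ?_⟩
  · simpa [Matrix.trace_fin_two] using hadd
  · simpa [Matrix.trace_fin_two] using hst
  · change (!![ζ, 0; 0, ξ] * !![s, 1; s * t - 1, t]).trace = z
    simpa [Matrix.trace_fin_two, Matrix.mul_apply, Fin.sum_univ_two] using hz
  · intro h
    have h01 : (!![ζ, 0; 0, ξ] * !![s, 1; s * t - 1, t]) 0 1 =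
        (!![s, 1; s * t - 1, t] * !![ζ, 0; 0, ξ]) 0 1 :=
      congrFun (congrFun (congrArg Subtype.val h) 0) 1
    simp [Matrix.mul_apply, Fin.sum_univ_two] at h01
    exact hne (sub_eq_zero.2 h01)

/-- The commutator of the generators has infinite order in the triangle group. -/
theorem infinite_of_le (p q r : ℕ) (hp : 2 ≤ p) (hq : 2 ≤ q) (hr : 2 ≤ r)
    (h : (1 : ℚ) / (p : ℚ) + 1 / (q : ℚ) + 1 / (r : ℚ) ≤ 1) : Infinite (TriangleGroup p q r) := by
  obtain ⟨A, B, hA, hB, hAB, hcomm⟩ := exists_matrices p q r hp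
  have hτ : (2 : ℝ) ≤ 4 * (Real.cos (Real.pi / p) ^ 2 + Real.cos (Real.pi / q) ^ 2
      + Real.cos (Real.pi / r) ^ 2
      + 2 * Real.cos (Real.pi / p) * Real.cos (Real.pi / q) * Real.cos (Real.pi / r)) - 2 := by
    have h' : (1 : ℝ) / p + 1 / q + 1 / r ≤ 1 := by
      have := (Rat.cast_le (K := ℝ)).2 h
      push_cast at this
      exact this
    have := cos_ineq (α := Real.pi / p) (β := Real.pi / q) (γ := Real.pi / r)
      (by positivity) (by positivity) (by positivity) (by
        have := mul_le_mul_of_nonneg_left h' Real.pi_pos.le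
        rw [mul_one] at this
        refine le_trans (le_of_eq ?_) this
        ring)
    linarith
  have htr : (A * B * A⁻¹ * B⁻¹).1.trace = ((4 * (Real.cos (Real.pi / p) ^ 2
      + Real.cos (Real.pi / q) ^ 2 + Real.cos (Real.pi / r) ^ 2
      + 2 * Real.cos (Real.pi / p) * Real.cos (Real.pi / q) * Real.cos (Real.pi / r)) - 2 : ℝ)
      : ℂ) := by
    rw [trace_commutator, hA, hB, hAB]
    push_cast
    ring
  let Q := SpecialLinearGroup (Fin 2) ℂ ⧸ Subgroup.center (SpecialLinearGroup (Fin 2) ℂ)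
  let π : SpecialLinearGroup (Fin 2) ℂ →* Q := QuotientGroup.mk' _
  have hπ : ∀ (M : SpecialLinearGroup (Fin 2) ℂ) (n : ℕ) (s : ℂ), M.1 ^ n = s • 1 →
      π M ^ n = 1 := by
    intro M n s hs
    rw [← map_pow]
    refine (QuotientGroup.eq_one_iff _).2 (Subgroup.mem_center_iff.2 fun N => ?_)
    apply Subtype.ext
    change N.1 * M.1 ^ n = M.1 ^ n * N.1
    rw [hs]
    simp
  let f : Fin 2 → Q := ![π A, π B]
  have hrel : ∀ w ∈ triangleRels p q r, FreeGroup.lift f w = 1 := by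
    rintro w (rfl | rfl | rfl)
    · simpa [f] using hπ A p (-1) (by simpa using pow_eq_neg_one A.1 A.2 p hp hA)
    · simpa [f] using hπ B q (-1) (by simpa using pow_eq_neg_one B.1 B.2 q hq hB)
    · have h1 : (-(A * B).1) ^ r = -1 := by
        refine pow_eq_neg_one _ ?_ r hr ?_
        · rw [Matrix.det_neg, (A * B).2]; simp
        · rw [Matrix.trace_neg, hAB, neg_neg]
      have h2 : (A * B).1 ^ r = (-(-1) ^ r : ℂ) • 1 := by
        have : (A * B).1 = (-1 : ℂ) • (-(A * B).1) := by simp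
        rw [this, smul_pow, h1]
        simp
      simpa [f] using hπ (A * B) r _ h2
  let φ : TriangleGroup p q r →* Q := PresentedGroup.toGroup hrel
  rw [← not_finite_iff_infinite]
  intro hfin
  let a : TriangleGroup p q r := PresentedGroup.of 0
  let b : TriangleGroup p q r := PresentedGroup.of 1
  have hφa : φ a = π A := PresentedGroup.toGroup.of hrel
  have hφb : φ b = π B := PresentedGroup.toGroup.of hrel
  obtain ⟨n, hn, hpow⟩ := isOfFinOrder_iff_pow_eq_one.1
    (isOfFinOrder_of_finite (a * b * a⁻¹ * b⁻¹))
  have h1 : π ((A * B * A⁻¹ * B⁻¹) ^ n) = 1 := by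
    have := congrArg φ hpow
    simpa [hφa, hφb] using this
  have hcenter : (A * B * A⁻¹ * B⁻¹) ^ n ∈ Subgroup.center (SpecialLinearGroup (Fin 2) ℂ) :=
    (QuotientGroup.eq_one_iff _).1 h1
  obtain ⟨s, -, hs⟩ := Matrix.SpecialLinearGroup.mem_center_iff.1 hcenter
  have hC : (A * B * A⁻¹ * B⁻¹).1 = 1 := by
    refine eq_one_of_pow_scalar _ (A * B * A⁻¹ * B⁻¹).2 _ hτ htr n hn s ?_
    rw [Matrix.smul_one_eq_diagonal]
    exact hs.symm
  have hC' : A * B * A⁻¹ * B⁻¹ = 1 := Subtype.ext hC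
  rw [mul_inv_eq_one, mul_inv_eq_iff_eq_mul] at hC'
  exact hcomm hC'

end TriangleGroupAux

open TriangleGroupAux in
/-- for `p, q, r ≥ 2`, the triangle group `Γ(p,q,r)` is infinite if and only
if `1/p + 1/q + 1/r ≤ 1` as rational numbers. -/
theorem triangleGroup_infinite_iff (p q r : ℕ) (hp : 2 ≤ p) (hq : 2 ≤ q) (hr : 2 ≤ r) :
    Infinite (TriangleGroup p q r) ↔
      (1 : ℚ) / (p : ℚ) + 1 / (q : ℚ) + 1 / (r : ℚ) ≤ 1 := by
  refine ⟨fun hinf => ?_, infinite_of_le p q r hp hq hr⟩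
  by_contra! hlt
  have hlt' : p * q * r < q * r + p * r + p * q := by
    have hp' : (0 : ℚ) < p := by positivity
    have hq' : (0 : ℚ) < q := by positivity
    have hr' : (0 : ℚ) < r := by positivity
    have : (1 : ℚ) / p + 1 / q + 1 / r = (q * r + p * r + p * q) / (p * q * r) := by
      field_simp
    rw [this, lt_div_iff₀ (by positivity), one_mul] at hlt
    exact_mod_cast hlt
  have hone : ∀ w ∈ triangleRels p q r, (PresentedGroup.mk (triangleRels p q r)) w = 1 :=
    fun w hw => PresentedGroup.one_of_mem hw
  refine hinf.not_finite (forcesFinite hp hq hr hlt' (TriangleGroup p q r)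
    (PresentedGroup.of 0) (PresentedGroup.of 1) ?_ ?_ ?_ ?_)
  · rw [← PresentedGroup.closure_range_of]
    congr 1
    ext g
    simp [Fin.exists_fin_two, eq_comm]
  · exact hone (FreeGroup.of 0 ^ p) (by simp [triangleRels])
  · exact hone (FreeGroup.of 1 ^ q) (by simp [triangleRels])
  · exact hone ((FreeGroup.of 0 * FreeGroup.of 1) ^ r) (by simp [triangleRels])
end

section
/- For all integers p, q, r ≥ 2, the triangle group Γ(p,q,r) is not a cyclic group. -/
/-- `x - y` times the remainder of `X ^ n` modulo the characteristic polynomial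
`(X - x) * (X - y)`, evaluated
at `M` by Cayley–Hamilton. -/
lemma sub_smul_pow_eq (M : Matrix (Fin 2) (Fin 2) ℂ) (x y : ℂ)
    (htr : M 0 0 + M 1 1 = x + y) (hdet : M 0 0 * M 1 1 - M 0 1 * M 1 0 = x * y) (n : ℕ) :
    (x - y) • M ^ n = (x ^ n - y ^ n) • M + (x * y ^ n - y * x ^ n) • 1 := by
  have hCH : M * M = (x + y) • M - (x * y) • 1 := by
    rw [← htr, ← hdet]
    ext i j
    fin_cases i <;> fin_cases j <;> simp [Matrix.mul_apply, Fin.sum_univ_two] <;> ring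
  induction n with
  | zero => simp
  | succ n ih =>
    rw [pow_succ, ← smul_mul_assoc, ih, add_mul, smul_mul_assoc, smul_mul_assoc, one_mul, hCH]
    module

lemma pow_mem_center (M : GL (Fin 2) ℂ) (x y : ℂ)
    (htr : M.1 0 0 + M.1 1 1 = x + y) (hdet : M.1 0 0 * M.1 1 1 - M.1 0 1 * M.1 1 0 = x * y)
    (hxy : x ≠ y) (n : ℕ) (hn : x ^ n = y ^ n) :
    M ^ n ∈ Subgroup.center (GL (Fin 2) ℂ) := by
  have h := sub_smul_pow_eq M.1 x y htr hdet n
  have hs : M.1 ^ n = x ^ n • 1 := by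
    have h0 : x - y ≠ 0 := sub_ne_zero.mpr hxy
    apply smul_right_injective _ h0
    simp only [h, ← hn]
    module
  rw [Subgroup.mem_center_iff]
  intro g
  apply Units.ext
  simp [hs]

lemma exists_root_of_unity (n : ℕ) (hn : 2 ≤ n) : ∃ x : ℂ, x ^ n = 1 ∧ x ≠ 1 ∧ x ≠ 0 := by
  have h := Complex.isPrimitiveRoot_exp n (by omega)
  exact ⟨_, h.pow_eq_one, h.ne_one (by omega), Complex.exp_ne_zero _⟩

lemma exists_noncommuting (p q r : ℕ) (hp : 2 ≤ p) (hq : 2 ≤ q) (hr : 2 ≤ r) :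
    ∃ A B : GL (Fin 2) ℂ, A ^ p ∈ Subgroup.center (GL (Fin 2) ℂ) ∧
      B ^ q ∈ Subgroup.center (GL (Fin 2) ℂ) ∧ (A * B) ^ r ∈ Subgroup.center (GL (Fin 2) ℂ) ∧
      A * B ≠ B * A := by
  obtain ⟨l, hlp, hl1, hl0⟩ := exists_root_of_unity p hp
  obtain ⟨m, hmq, hm1, hm0⟩ := exists_root_of_unity q hq
  obtain ⟨v, hvr, hv1, hv0⟩ := exists_root_of_unity r hr
  obtain ⟨k, hk⟩ := IsAlgClosed.exists_pow_nat_eq (l * m / v) (n := 2) (by norm_num)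
  have hk' : k * (k * v) = l * m := by
    rw [← mul_assoc, ← sq, hk]; field_simp
  have hk0 : k ≠ 0 := by
    rintro rfl
    simp [hl0, hm0] at hk'
  obtain ⟨s, hs⟩ : ∃ s : ℂ, (l - 1) * s = k + k * v - (1 + m) :=
    ⟨(k + k * v - (1 + m)) / (l - 1), mul_div_cancel₀ _ (sub_ne_zero.mpr hl1)⟩
  let A : GL (Fin 2) ℂ := Matrix.GeneralLinearGroup.mkOfDetNeZero !![l, 0; 0, 1]
    (by simpa [Matrix.det_fin_two] using hl0)
  let B : GL (Fin 2) ℂ := Matrix.GeneralLinearGroup.mkOfDetNeZero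
    !![s, 1; s * (1 + m - s) - m, 1 + m - s] (by simpa [Matrix.det_fin_two] using hm0)
  have hA : A.1 = !![l, 0; 0, 1] := rfl
  have hB : B.1 = !![s, 1; s * (1 + m - s) - m, 1 + m - s] := rfl
  refine ⟨A, B, pow_mem_center A l 1 ?_ ?_ hl1 p (by simp [hlp]),
    pow_mem_center B 1 m ?_ ?_ hm1.symm q (by simp [hmq]),
    pow_mem_center (A * B) k (k * v) ?_ ?_ ?_ r (by simp [mul_pow, hvr]), ?_⟩
  · simp [hA]
  · simp [hA]
  · simp [hB]
  · simp [hB]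
  · simp [hA, hB]
    linear_combination hs
  · simp [hA, hB]
    linear_combination -hk'
  · intro h
    exact hv1 (mul_left_cancel₀ hk0 (by rw [← h, mul_one]))
  · intro h
    have h01 := congrArg (fun M : GL (Fin 2) ℂ => M.1 0 1) h
    simp [hA, hB] at h01
    exact hl1 h01

/-- for `p, q, r ≥ 2`, the triangle group `Γ(p,q,r)` is not cyclic. -/
theorem triangleGroup_not_cyclic (p q r : ℕ) (hp : 2 ≤ p) (hq : 2 ≤ q) (hr : 2 ≤ r) :
    ¬ IsCyclic (TriangleGroup p q r) := by
  rintro ⟨g, hg⟩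
  obtain ⟨A, B, hA, hB, hAB, hne⟩ := exists_noncommuting p q r hp hq hr
  let π := QuotientGroup.mk' (Subgroup.center (GL (Fin 2) ℂ))
  have hπ : ∀ x, x ∈ Subgroup.center (GL (Fin 2) ℂ) → π x = 1 := fun x hx =>
    (QuotientGroup.eq_one_iff x).mpr hx
  have hrel : ∀ w ∈ triangleRels p q r, FreeGroup.lift ![π A, π B] w = 1 := by
    rintro w (rfl | rfl | rfl)
    · simpa using hπ _ hA
    · simpa using hπ _ hB
    · simpa using hπ _ hAB
  let f : TriangleGroup p q r →* _ := PresentedGroup.toGroup hrel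
  obtain ⟨X, hX⟩ := QuotientGroup.mk'_surjective _ (f g)
  -- Every lift of an element of the image of `f` is a power of `X` times a central element.
  have key : ∀ (C : GL (Fin 2) ℂ) (t : TriangleGroup p q r), f t = π C →
      ∃ n : ℤ, ∃ z ∈ Subgroup.center (GL (Fin 2) ℂ), X ^ n * z = C := by
    intro C t ht
    obtain ⟨n, rfl⟩ := hg t
    refine ⟨n, _, ?_, mul_inv_cancel_left (X ^ n) C⟩
    rw [← QuotientGroup.eq, QuotientGroup.mk_zpow]
    have h : f g ^ n = π C := by rw [← ht]; exact (map_zpow f g n).symm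
    rw [← hX] at h
    exact h
  obtain ⟨n, z, hz, rfl⟩ := key A (PresentedGroup.of 0) (by simp [f])
  obtain ⟨n', z', hz', rfl⟩ := key B (PresentedGroup.of 1) (by simp [f])
  rw [Subgroup.mem_center_iff] at hz hz'
  have hc : ∀ w, Commute z w := fun w => (hz w).symm
  have hc' : ∀ w, Commute w z' := hz'
  exact hne (((Commute.refl X).zpow_zpow n n').mul_right (hc' _) |>.mul_left (hc _)).eq
end

section
/- For all integers p, q, r ≥ 2, the triangle group Γ(p,q,r) is not isomorphic to any free product A ∗ B in which both A and B are nontrivial groups. -/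
namespace FreeProductTorsion

open Monoid Monoid.CoprodI

variable {ι : Type*} {M : ι → Type*} [∀ i, Group (M i)]

/-- The value in the free product of a list of letters that need not be reduced. -/
def listProd (l : List (Σ i, M i)) : CoprodI M := (l.map fun s => of s.2).prod

@[simp] lemma listProd_nil : listProd ([] : List (Σ i, M i)) = 1 := rfl

@[simp] lemma listProd_cons (s : Σ i, M i) (l : List (Σ i, M i)) :
    listProd (s :: l) = of s.2 * listProd l := by simp [listProd]

@[simp] lemma listProd_append (l l' : List (Σ i, M i)) :
    listProd (l ++ l') = listProd l * listProd l' := by simp [listProd]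

lemma listProd_toList {i j : ι} (w : NeWord M i j) : listProd w.toList = w.prod := rfl

lemma exists_listProd (x : CoprodI M) : ∃ l, listProd l = x := by
  induction x using CoprodI.induction_left with
  | one => exact ⟨[], rfl⟩
  | @mul i m x ih =>
    obtain ⟨l, rfl⟩ := ih
    exact ⟨⟨i, m⟩ :: l, by simp⟩

lemma NeWord.exists_cons {i j : ι} (w : NeWord M i j) : ∃ t, w.toList = ⟨i, w.head⟩ :: t := by
  have h := w.toList_head?
  cases hl : w.toList with
  | nil => simp [hl] at h
  | cons s t => exact ⟨t, by rw [hl] at h; simp at h; rw [h]⟩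

lemma NeWord.exists_concat {i j : ι} (w : NeWord M i j) :
    ∃ t, w.toList = t ++ [⟨j, w.last⟩] := by
  have h := w.toList_getLast?
  rcases List.eq_nil_or_concat w.toList with hl | ⟨t, s, hl⟩
  · simp [hl] at h
  · exact ⟨t, by rw [hl] at h; simp at h; simp [hl, h]⟩

/-- Either a list of letters is reduced, or deleting a trivial letter or merging two neighbours
from the same factor shortens it. -/
lemma reduced_or_shorten (l : List (Σ i, M i)) :
    l = [] ∨ (∃ (i j : ι) (w : NeWord M i j), w.toList = l) ∨
      ∃ l' : List (Σ i, M i), l'.length < l.length ∧ listProd l' = listProd l := by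
  classical
  induction l with
  | nil => exact Or.inl rfl
  | cons s l ih =>
    right
    obtain ⟨k, m⟩ := s
    by_cases hm : m = 1
    · exact Or.inr ⟨l, by simp, by simp [hm]⟩
    rcases ih with rfl | ⟨i, j, w, rfl⟩ | ⟨l', hlen, hprod⟩
    · exact Or.inl ⟨k, k, .singleton m hm, rfl⟩
    · by_cases hk : k = i
      · subst hk
        obtain ⟨t, ht⟩ := NeWord.exists_cons w
        exact Or.inr ⟨⟨k, m * w.head⟩ :: t, by simp [ht], by simp [ht, mul_assoc]⟩
      · exact Or.inl ⟨k, j, .append (.singleton m hm) hk w, rfl⟩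
    · exact Or.inr ⟨⟨k, m⟩ :: l', by simpa using hlen, by simp [hprod]⟩

lemma NeWord.prod_ne_one {i j : ι} (w : NeWord M i j) : w.prod ≠ 1 := by
  classical
  intro h
  have h1 : w.toWord = Word.empty := by
    apply (Word.equiv (M := M)).symm.injective
    change w.toWord.prod = Word.empty.prod
    rw [Word.prod_empty]
    exact h
  exact w.toList_ne_nil (congrArg Word.toList h1)

/-- Powers of a cyclically reduced word are formed by concatenation, so they stay reduced. -/
lemma NeWord.prod_not_isOfFinOrder {i j : ι} (w : NeWord M i j) (hij : i ≠ j) :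
    ¬ IsOfFinOrder w.prod := by
  have key : ∀ n : ℕ, ∃ v : NeWord M i j, v.prod = w.prod ^ (n + 1) := by
    intro n
    induction n with
    | zero => exact ⟨w, by simp⟩
    | succ n ih =>
      obtain ⟨v, hv⟩ := ih
      exact ⟨.append v hij.symm w, by rw [NeWord.append_prod, hv, pow_succ _ (n + 1)]⟩
  rw [isOfFinOrder_iff_pow_eq_one]
  rintro ⟨n, hn, h⟩
  obtain ⟨v, hv⟩ := key (n - 1)
  rw [Nat.sub_add_cancel hn, h] at hv
  exact NeWord.prod_ne_one v hv

lemma conj_factor_or_cyclically_reduced [Nonempty ι] (x : CoprodI M) :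
    (∃ (g : CoprodI M) (i : ι) (m : M i), x = g * of m * g⁻¹) ∨
      ∃ (g : CoprodI M) (i j : ι) (w : NeWord M i j), i ≠ j ∧ x = g * w.prod * g⁻¹ := by
  obtain ⟨l, rfl⟩ := exists_listProd x
  induction hn : l.length using Nat.strong_induction_on generalizing l with
  | _ n ih =>
    subst hn
    rcases reduced_or_shorten l with rfl | ⟨i, j, w, hw⟩ | ⟨l', hlen, hprod⟩
    · exact Or.inl ⟨1, Classical.arbitrary ι, 1, by simp⟩
    · by_cases hij : i = j
      · subst hij
        obtain ⟨t, ht⟩ := NeWord.exists_cons w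
        rcases List.eq_nil_or_concat t with rfl | ⟨t, s, rfl⟩
        · exact Or.inl ⟨1, i, w.head, by simp [← hw, ht]⟩
        -- The first and last letters lie in the same factor: rotating the last letter to the
        -- front and merging the two gives a shorter conjugate.
        have hs : s = ⟨i, w.last⟩ := by
          have h := w.toList_getLast?
          rw [ht] at h
          simpa [List.getLast?_cons] using h
        have hl : l = ⟨i, w.head⟩ :: (t ++ [⟨i, w.last⟩]) := by
          rw [← hw, ht, hs, List.concat_eq_append]
        have hlt : (⟨i, w.last * w.head⟩ :: t : List (Σ i, M i)).length < l.length := by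
          simp [hl]
        have hc : listProd l = (of w.last)⁻¹ *
            listProd (⟨i, w.last * w.head⟩ :: t) * of w.last := by
          simp [hl, mul_assoc]
        rcases ih _ hlt _ rfl with ⟨g, k, m, h⟩ | ⟨g, k, k', v, hk, h⟩
        · exact Or.inl ⟨(of w.last)⁻¹ * g, k, m, by rw [hc, h]; group⟩
        · exact Or.inr ⟨(of w.last)⁻¹ * g, k, k', v, hk, by rw [hc, h]; group⟩
      · exact Or.inr ⟨1, i, j, w, hij, by simp [← hw, listProd_toList]⟩
    · rw [← hprod]
      exact ih _ hlen _ rfl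

lemma isOfFinOrder_of_conj {G : Type*} [Group G] {g z : G} (h : IsOfFinOrder (g * z * g⁻¹)) :
    IsOfFinOrder z :=
  (MulAut.conj g).injective.isOfFinOrder_iff (f := (MulAut.conj g).toMonoidHom) |>.1 h

lemma conj_factor_of_isOfFinOrder [Nonempty ι] {x : CoprodI M} (hx : IsOfFinOrder x) :
    ∃ (g : CoprodI M) (i : ι) (m : M i), x = g * of m * g⁻¹ := by
  rcases conj_factor_or_cyclically_reduced x with h | ⟨g, i, j, w, hij, rfl⟩
  · exact h
  · refine absurd ?_ (NeWord.prod_not_isOfFinOrder w hij)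
    exact isOfFinOrder_of_conj hx

/-- Reduced representatives for the double cosets of the free product modulo the factors `i` on
the left and `j` on the right. -/
lemma doubleCoset_reduced (i j : ι) (h : CoprodI M) :
    ∃ (a : M i) (b : M j), h = of a * of b ∨
      ∃ (k l : ι) (w : NeWord M k l), i ≠ k ∧ l ≠ j ∧ h = of a * w.prod * of b := by
  obtain ⟨l, rfl⟩ := exists_listProd h
  induction hn : l.length using Nat.strong_induction_on generalizing l with
  | _ n ih =>
    subst hn
    rcases reduced_or_shorten l with rfl | ⟨k, k', w, hw⟩ | ⟨l', hlen, hprod⟩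
    · exact ⟨1, 1, Or.inl (by simp)⟩
    · by_cases hik : i = k
      · subst hik
        obtain ⟨t, ht⟩ := NeWord.exists_cons w
        rw [hw] at ht
        subst ht
        obtain ⟨a, b, h | ⟨c, d, v, hc, hd, h⟩⟩ := ih t.length (by simp) t rfl
        · exact ⟨w.head * a, b, Or.inl (by simp [h, mul_assoc])⟩
        · exact ⟨w.head * a, b, Or.inr ⟨c, d, v, hc, hd, by simp [h, mul_assoc]⟩⟩
      by_cases hjk : k' = j
      · subst hjk
        obtain ⟨t, ht⟩ := NeWord.exists_concat w
        rw [hw] at ht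
        subst ht
        obtain ⟨a, b, h | ⟨c, d, v, hc, hd, h⟩⟩ := ih t.length (by simp) t rfl
        · exact ⟨a, b * w.last, Or.inl (by simp [h, mul_assoc])⟩
        · exact ⟨a, b * w.last, Or.inr ⟨c, d, v, hc, hd, by simp [h, mul_assoc]⟩⟩
      exact ⟨1, 1, Or.inr ⟨k, k', w, hik, hjk, by simp [← hw, listProd_toList]⟩⟩
    · rw [← hprod]
      exact ih _ hlen _ rfl

/-- Serre's lemma for free products: in the Bass–Serre tree, two elliptic elements with elliptic
product have a common fixed vertex. -/
theorem exists_common_conj [Nonempty ι] {x y : CoprodI M} (hx : IsOfFinOrder x)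
    (hy : IsOfFinOrder y) (hxy : IsOfFinOrder (x * y)) :
    ∃ (g : CoprodI M) (i : ι) (m n : M i), x = g * of m * g⁻¹ ∧ y = g * of n * g⁻¹ := by
  classical
  obtain ⟨g, i, m, rfl⟩ := conj_factor_of_isOfFinOrder hx
  obtain ⟨g', j, n, rfl⟩ := conj_factor_of_isOfFinOrder hy
  by_cases hm : m = 1
  · exact ⟨g', j, 1, n, by simp [hm], rfl⟩
  by_cases hn : n = 1
  · exact ⟨g, i, m, 1, rfl, by simp [hn]⟩
  obtain ⟨a, b, h⟩ := doubleCoset_reduced i j (g⁻¹ * g')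
  have hm' : a⁻¹ * m * a ≠ 1 := fun h =>
    hm (conj_eq_one_iff.1 (by simpa using h : a⁻¹ * m * a⁻¹⁻¹ = 1))
  have hn' : b * n * b⁻¹ ≠ 1 := fun h => hn (conj_eq_one_iff.1 h)
  -- Conjugating by `g * of a` turns `x` into the letter `a⁻¹ * m * a`, and `y` into the conjugate of
  -- the letter `b * n * b⁻¹` by the reduced part of `g⁻¹ * g'`.
  have hfin : ∀ z : CoprodI M, g * of m * g⁻¹ * (g' * of n * g'⁻¹) = g * of a * z * (g * of a)⁻¹ →
      IsOfFinOrder z := by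
    intro z hz
    rw [hz] at hxy
    exact isOfFinOrder_of_conj hxy
  rcases h with h | ⟨k, l, w, hik, hlj, h⟩
  · obtain rfl : g' = g * (of a * of b) := by rw [← h]; group
    by_cases hij : i = j
    · subst hij
      exact ⟨g, i, m, a * b * n * (a * b)⁻¹, rfl, by simp [mul_assoc]⟩
    · refine absurd (hfin _ ?_) (NeWord.prod_not_isOfFinOrder
        (.append (.singleton _ hm') hij (.singleton _ hn')) hij)
      simp [mul_assoc]
  · obtain rfl : g' = g * (of a * w.prod * of b) := by rw [← h]; group
    refine absurd (hfin _ ?_) (NeWord.prod_not_isOfFinOrder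
      (.append (.singleton _ hm') hik
        (.append w hlj (.append (.singleton _ hn') hlj.symm w.inv))) hik)
    simp [mul_assoc]

/-- The two factors `A` and `B` as a family indexed by `Bool`, lifted to a common universe. -/
def Factor.{u, v} (A : Type u) (B : Type v) : Bool → Type (max u v)
  | true => ULift.{v} A
  | false => ULift.{u} B

instance Factor.group {A B : Type*} [Group A] [Group B] : ∀ i, Group (Factor A B i)
  | true => inferInstanceAs (Group (ULift A))
  | false => inferInstanceAs (Group (ULift B))

instance Factor.nontrivial {A B : Type*} [Nontrivial A] [Nontrivial B] :
    ∀ i, Nontrivial (Factor A B i)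
  | true => inferInstanceAs (Nontrivial (ULift A))
  | false => inferInstanceAs (Nontrivial (ULift B))

lemma exists_surjective_coprodI (A B : Type*) [Group A] [Group B] :
    ∃ f : Monoid.Coprod A B →* CoprodI (Factor A B), Function.Surjective f := by
  let fA : A →* CoprodI (Factor A B) :=
    (of (M := Factor A B) (i := true)).comp (MulEquiv.ulift (α := A)).symm.toMonoidHom
  let fB : B →* CoprodI (Factor A B) :=
    (of (M := Factor A B) (i := false)).comp (MulEquiv.ulift (α := B)).symm.toMonoidHom
  refine ⟨Monoid.Coprod.lift fA fB, fun x => ?_⟩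
  induction x using CoprodI.induction_on with
  | one => exact ⟨1, map_one _⟩
  | of i m =>
    cases i with
    | true => exact ⟨.inl (ULift.down m), by rw [Monoid.Coprod.lift_apply_inl]; rfl⟩
    | false => exact ⟨.inr (ULift.down m), by rw [Monoid.Coprod.lift_apply_inr]; rfl⟩
  | mul x y hx hy =>
    obtain ⟨a, rfl⟩ := hx
    obtain ⟨b, rfl⟩ := hy
    exact ⟨a * b, map_mul _ _ _⟩

lemma isOfFinOrder_mk {p q r : ℕ} {w : FreeGroup (Fin 2)} {n : ℕ} (hn : 0 < n)
    (hw : w ^ n ∈ triangleRels p q r) :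
    IsOfFinOrder (PresentedGroup.mk (triangleRels p q r) w) := by
  rw [isOfFinOrder_iff_pow_eq_one]
  refine ⟨n, hn, ?_⟩
  rw [← map_pow]
  exact PresentedGroup.one_of_mem hw

end FreeProductTorsion

open FreeProductTorsion in
/-- for `p, q, r ≥ 2`, the triangle group `Γ(p,q,r)` is not isomorphic to a
free product `A ∗ B` of two nontrivial groups. -/
theorem triangleGroup_not_free_product (p q r : ℕ) (hp : 2 ≤ p) (hq : 2 ≤ q) (hr : 2 ≤ r)
    (A B : Type*) [Group A] [Group B] [Nontrivial A] [Nontrivial B] :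
    ¬ Nonempty (TriangleGroup p q r ≃* Monoid.Coprod A B) := by
  rintro ⟨e⟩
  obtain ⟨f, hf⟩ := exists_surjective_coprodI A B
  let F : TriangleGroup p q r →* Monoid.CoprodI (Factor A B) := f.comp e.toMonoidHom
  have hF : Function.Surjective F := hf.comp e.surjective
  let a : TriangleGroup p q r := PresentedGroup.of 0
  let b : TriangleGroup p q r := PresentedGroup.of 1
  have ha : IsOfFinOrder a :=
    isOfFinOrder_mk (w := FreeGroup.of 0) (n := p) (by omega) (by simp [triangleRels])
  have hb : IsOfFinOrder b :=
    isOfFinOrder_mk (w := FreeGroup.of 1) (n := q) (by omega) (by simp [triangleRels])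
  have hab : IsOfFinOrder (a * b) :=
    isOfFinOrder_mk (w := FreeGroup.of 0 * FreeGroup.of 1) (n := r) (by omega)
      (by simp [triangleRels])
  obtain ⟨g, i, m, n, hm, hn⟩ := exists_common_conj (F.isOfFinOrder ha) (F.isOfFinOrder hb)
    (by rw [← map_mul]; exact F.isOfFinOrder hab)
  -- The retraction onto the factor other than `i`.
  let π : Monoid.CoprodI (Factor A B) →* Factor A B (!i) :=
    Monoid.CoprodI.lift (Pi.mulSingle (!i) (MonoidHom.id _))
  have hπ : ∀ x : Factor A B i, π (Monoid.CoprodI.of x) = 1 := by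
    intro x
    simp only [π, Monoid.CoprodI.lift_of]
    rw [Pi.mulSingle_eq_of_ne (by simp)]
    rfl
  have htriv : π.comp F = 1 := by
    refine PresentedGroup.ext fun k => ?_
    fin_cases k
    · change π (F a) = 1
      simp [hm, hπ]
    · change π (F b) = 1
      simp [hn, hπ]
  obtain ⟨c, hc⟩ := exists_ne (1 : Factor A B (!i))
  obtain ⟨t, ht⟩ := hF (Monoid.CoprodI.of c)
  have h1 : π (F t) = 1 := DFunLike.congr_fun htriv t
  rw [ht, Monoid.CoprodI.of_leftInverse] at h1
  exact hc h1
end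

section
/- For all integers p, q, r ≥ 2, the triangle group Γ(p,q,r) has a normal subgroup N of finite index that is torsion-free, i.e. every element of N of finite order is the identity. -/
/-! ### Torsion in congruence subgroups -/

theorem one_add_pow_expand {E : Type*} [Ring E] (Y : E) (n : ℕ) :
    ∃ Z : E, (1 + Y) ^ n = 1 + (n : ℤ) • Y + Y * Y * Z := by
  induction n with
  | zero => exact ⟨0, by simp⟩
  | succ n ih =>
    obtain ⟨Z, hZ⟩ := ih
    refine ⟨(n : ℤ) • 1 + Z * (1 + Y), ?_⟩
    rw [pow_succ, hZ]
    push_cast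
    simp only [mul_add, add_mul, add_smul, one_smul, mul_one, one_mul, smul_mul_assoc,
      mul_smul_comm, mul_assoc]
    abel

/-- An integer matrix divisible by `3` vanishes if divisibility by `3 ^ (k + 1)` always improves to
divisibility by `3 ^ (k + 2)`. -/
theorem matrix_eq_zero_of_forall_dvd {ι : Type*} (Y : Matrix ι ι ℤ)
    (h1 : ∃ U : Matrix ι ι ℤ, Y = (3 : ℤ) • U)
    (hstep : ∀ (k : ℕ) (U : Matrix ι ι ℤ), Y = (3 : ℤ) ^ (k + 1) • U →
      ∃ V : Matrix ι ι ℤ, U = (3 : ℤ) • V) : Y = 0 := by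
  have key : ∀ k : ℕ, ∃ U : Matrix ι ι ℤ, Y = (3 : ℤ) ^ (k + 1) • U := by
    intro k
    induction k with
    | zero => simpa using h1
    | succ k ih =>
      obtain ⟨U, hU⟩ := ih
      obtain ⟨V, hV⟩ := hstep k U hU
      exact ⟨V, by rw [hU, hV, smul_smul, ← pow_succ]⟩
  ext i j
  by_contra hne
  have hfin : FiniteMultiplicity (3 : ℤ) (Y i j) :=
    Int.finiteMultiplicity_iff.2 ⟨by decide, hne⟩
  obtain ⟨k, hk⟩ := hfin
  obtain ⟨U, hU⟩ := key k
  exact hk ⟨U i j, by rw [hU]; simp⟩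

theorem eq_zero_of_one_add_pow_eq_one {ι : Type*} [Fintype ι] [DecidableEq ι]
    (Y : Matrix ι ι ℤ) (hY : ∃ U : Matrix ι ι ℤ, Y = (3 : ℤ) • U) {n : ℕ} (hn : ¬ 3 ∣ n)
    (h : (1 + Y) ^ n = 1) : Y = 0 := by
  refine matrix_eq_zero_of_forall_dvd Y hY fun k U hU => ?_
  obtain ⟨Z, hZ⟩ := one_add_pow_expand Y n
  rw [h, add_assoc, left_eq_add] at hZ
  have hcop : IsCoprime (n : ℤ) 3 := by
    have := ((Nat.Prime.coprime_iff_not_dvd Nat.prime_three).2 hn).symm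
    exact_mod_cast Nat.isCoprime_iff_coprime.2 this
  obtain ⟨a, b, hab⟩ := hcop
  have h2 : (n : ℤ) • U = (3 : ℤ) • (-((3 : ℤ) ^ k • (U * U * Z))) := by
    have h3 : (3 : ℤ) ^ (k + 1) • ((n : ℤ) • U + (3 : ℤ) ^ (k + 1) • (U * U * Z)) = 0 := by
      rw [← hZ, hU]
      simp only [smul_mul_assoc, mul_smul_comm, smul_add, smul_smul, mul_comm]
    rw [smul_eq_zero_iff_right (by positivity)] at h3
    rw [eq_neg_of_add_eq_zero_left h3, smul_neg, smul_smul, pow_succ']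
  refine ⟨a • (-((3 : ℤ) ^ k • (U * U * Z))) + b • U, ?_⟩
  calc U = (a * n + b * 3) • U := by rw [hab, one_smul]
    _ = a • ((n : ℤ) • U) + (b * 3) • U := by rw [add_smul, mul_smul]
    _ = _ := by rw [h2]; module

theorem eq_zero_of_one_add_pow_three_eq_one {ι : Type*} [Fintype ι] [DecidableEq ι]
    (Y : Matrix ι ι ℤ) (hY : ∃ U : Matrix ι ι ℤ, Y = (3 : ℤ) • U)
    (h : (1 + Y) ^ 3 = 1) : Y = 0 := by
  refine matrix_eq_zero_of_forall_dvd Y hY fun k U hU => ?_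
  have h1 : (3 : ℤ) • Y + (3 : ℤ) • (Y * Y) + Y * Y * Y = 0 := by
    have : (1 + Y) ^ 3 = 1 + ((3 : ℤ) • Y + (3 : ℤ) • (Y * Y) + Y * Y * Y) := by
      simp only [pow_succ, pow_zero, mul_add, add_mul, mul_one, one_mul]
      module
    rwa [this, add_eq_left] at h
  have h3 : (3 : ℤ) ^ (k + 2) •
      (U + (3 : ℤ) • ((3 : ℤ) ^ k • (U * U) + (3 : ℤ) ^ (2 * k) • (U * U * U))) = 0 := by
    rw [← h1, hU]
    simp only [smul_mul_assoc, mul_smul_comm, smul_add, smul_smul]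
    module
  rw [smul_eq_zero_iff_right (by positivity)] at h3
  exact ⟨_, by rw [eq_neg_of_add_eq_zero_left h3, ← smul_neg]⟩

/-- Minkowski's lemma for the prime `3`: an integer matrix of finite order congruent to `1` modulo
`3` is `1`. -/
theorem matrix_eq_one_of_pow_eq_one {ι : Type*} [Fintype ι] [DecidableEq ι] (n : ℕ) (hn : 0 < n)
    (g : Matrix ι ι ℤ) (hg : (Int.castRingHom (ZMod 3)).mapMatrix g = 1) (h : g ^ n = 1) :
    g = 1 := by
  have hdiv : ∀ g : Matrix ι ι ℤ, (Int.castRingHom (ZMod 3)).mapMatrix g = 1 →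
      ∃ U : Matrix ι ι ℤ, g - 1 = (3 : ℤ) • U := by
    intro g hg
    have : ∀ i j, (3 : ℤ) ∣ (g - 1) i j := by
      intro i j
      have h0 : (Int.castRingHom (ZMod 3)).mapMatrix (g - 1) = 0 := by
        rw [map_sub, hg, map_one, sub_self]
      have := congrFun (congrFun h0 i) j
      exact (ZMod.intCast_zmod_eq_zero_iff_dvd _ 3).1 (by simpa using this)
    choose U hU using this
    exact ⟨Matrix.of U, by ext i j; simpa using hU i j⟩
  induction n using Nat.strong_induction_on with
  | _ n ih =>
    by_cases h3 : 3 ∣ n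
    · obtain ⟨m, rfl⟩ := h3
      refine ih m (by lia) (by lia) ?_
      rw [← sub_eq_zero]
      refine eq_zero_of_one_add_pow_three_eq_one _ (hdiv _ (by rw [map_pow, hg, one_pow])) ?_
      rw [add_sub_cancel, ← pow_mul, mul_comm, h]
    · rw [← sub_eq_zero]
      exact eq_zero_of_one_add_pow_eq_one _ (hdiv g hg) h3 (by rw [add_sub_cancel, h])

/-- The congruence subgroup of level `3` of a group of integer matrices is torsion-free. -/
theorem exists_torsionfree_of_injective {G ι : Type*} [Group G] [Fintype ι] [DecidableEq ι]
    (φ : G →* Matrix ι ι ℤ) (hφ : Function.Injective φ) :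
    ∃ N : Subgroup G, N.Normal ∧ N.FiniteIndex ∧ ∀ g ∈ N, IsOfFinOrder g → g = 1 := by
  let ψ : G →* (Matrix ι ι (ZMod 3))ˣ :=
    (((Int.castRingHom (ZMod 3)).mapMatrix : Matrix ι ι ℤ →+* Matrix ι ι (ZMod 3)).toMonoidHom.comp
      φ).toHomUnits
  refine ⟨ψ.ker, inferInstance, inferInstance, fun g hg hfin => ?_⟩
  obtain ⟨n, hn, hgn⟩ := isOfFinOrder_iff_pow_eq_one.1 hfin
  apply hφ
  rw [map_one]
  refine matrix_eq_one_of_pow_eq_one n hn (φ g) ?_ (by rw [← map_pow, hgn, map_one])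
  exact congrArg Units.val (MonoidHom.mem_ker.1 hg)

/-- Restriction of scalars: matrices over `A` act by left multiplication on the matrix ring, which is a
free `ℤ`-module of finite rank. -/
theorem exists_injective_int {G B A : Type*} [Group G] [Fintype B] [DecidableEq B] [CommRing A]
    [Module.Finite ℤ A] [Module.Free ℤ A]
    (φ : G →* Matrix B B A) (hφ : Function.Injective φ) :
    ∃ (n : ℕ) (ψ : G →* Matrix (Fin n) (Fin n) ℤ), Function.Injective ψ := by
  let b := Module.finBasis ℤ (Matrix B B A)
  exact ⟨_, (MonoidHomClass.toMonoidHom (Algebra.leftMulMatrix b)).comp φ,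
    (Algebra.leftMulMatrix_injective b).comp hφ⟩

/-! ### The Tits representation of a Coxeter group -/

section Cosine
open Real
variable {B : Type*} (M : CoxeterMatrix B)

/-- The numbers `2 cos (π / m)` are `-2` times the values of the Tits form on two simple roots of
norm `1`. On the diagonal `M s s = 1` gives `2 cos π = -2`; an entry `0` of `M` (meaning `∞`) gives
`2 cos 0 = 2`, thanks to `π / 0 = 0`. -/
noncomputable def cosMat (s t : B) : ℝ := 2 * cos (π / M s t)

theorem cosMat_self (s : B) : cosMat M s s = -2 := by simp [cosMat]

theorem cosMat_symm (s t : B) : cosMat M s t = cosMat M t s := by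
  rw [cosMat, cosMat, M.symmetric]

theorem cosMat_mul_sin_sub (s t : B) (x : ℝ) :
    cosMat M s t * sin (x + π / M s t) - sin x = sin (x + 2 * (π / M s t)) := by
  have h1 : sin x = sin ((x + π / M s t) - π / M s t) := by ring_nf
  have h2 : sin (x + 2 * (π / M s t)) = sin ((x + π / M s t) + π / M s t) := by ring_nf
  rw [h1, h2, sin_sub, sin_add (x + _), cosMat]
  ring

theorem two_le_of_ne {s t : B} (hst : s ≠ t) (h0 : M s t ≠ 0) : 2 ≤ M s t := by
  have := M.off_diagonal s t hst
  lia

theorem sin_pi_div_pos {m : ℕ} (hm : 2 ≤ m) : 0 < sin (π / m) := by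
  have : (2 : ℝ) ≤ m := by exact_mod_cast hm
  apply sin_pos_of_pos_of_lt_pi (by positivity)
  exact div_lt_self pi_pos (by linarith)

end Cosine

section Refl
open Matrix Real
variable {B : Type*} [Fintype B] [DecidableEq B]

/-- The matrix of `v ↦ v + (∑ t, c s t * v t) • α_s`, where `α_s = Pi.single s 1`. For
`c = cosMat M` this is the simple reflection of the Tits representation in the basis of simple
roots. The ring is arbitrary, so that the matrices can also be formed over a ring of algebraic
integers. -/
def simpleRefl {R : Type*} [CommRing R] (c : B → B → R) (s : B) : Matrix B B R :=
  1 + vecMulVec (Pi.single s 1) (c s)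

theorem simpleRefl_mulVec {R : Type*} [CommRing R] (c : B → B → R) (s : B) (v : B → R) :
    simpleRefl c s *ᵥ v = v + (c s ⬝ᵥ v) • Pi.single s 1 := by
  rw [simpleRefl, add_mulVec, one_mulVec, vecMulVec_mulVec, op_smul_eq_smul]

theorem simpleRefl_mulVec_single {R : Type*} [CommRing R] (c : B → B → R) (s t : B) :
    simpleRefl c s *ᵥ Pi.single t 1 = Pi.single t 1 + c s t • Pi.single s 1 := by
  rw [simpleRefl_mulVec, dotProduct_single, mul_one]

theorem simpleRefl_map {R S : Type*} [CommRing R] [CommRing S] (f : R →+* S) (c : B → B → R)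
    (s : B) : f.mapMatrix (simpleRefl c s) = simpleRefl (fun i j => f (c i j)) s := by
  rw [simpleRefl, map_add, map_one, simpleRefl]
  congr 1
  ext i j
  simp [vecMulVec_apply, Pi.single_apply, apply_ite f]

variable (M : CoxeterMatrix B)

theorem simpleRefl_mulVec_self (s : B) :
    simpleRefl (cosMat M) s *ᵥ Pi.single s 1 = -Pi.single s 1 := by
  rw [simpleRefl_mulVec_single, cosMat_self]; module

theorem simpleRefl_mul_self (s : B) : simpleRefl (cosMat M) s * simpleRefl (cosMat M) s = 1 := by
  apply mulVec_injective
  ext1 v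
  rw [← mulVec_mulVec, simpleRefl_mulVec _ _ v, mulVec_add, mulVec_smul, simpleRefl_mulVec_self,
    simpleRefl_mulVec, one_mulVec]
  module

/-- On the plane spanned by `α_s` and `α_t` the product of the two reflections acts as the rotation
by `2π / M s t`. -/
theorem simpleRefl_mul_pow_mulVec (s t : B) (x : ℝ) (n : ℕ) :
    (simpleRefl (cosMat M) s * simpleRefl (cosMat M) t) ^ n *ᵥ
      (sin (x + π / M s t) • Pi.single s 1 + sin x • Pi.single t 1) =
    sin (x + (2 * n + 1) * (π / M s t)) • Pi.single s 1 +
      sin (x + 2 * n * (π / M s t)) • Pi.single t 1 := by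
  induction n with
  | zero => simp
  | succ n ih =>
    rw [pow_succ', ← mulVec_mulVec, ih, ← mulVec_mulVec]
    simp only [mulVec_add, mulVec_smul, simpleRefl_mulVec_single, cosMat_self,
      cosMat_symm M t s]
    have h1 := cosMat_mul_sin_sub M s t (x + 2 * n * (π / M s t))
    have h2 := cosMat_mul_sin_sub M s t (x + (2 * n + 1) * (π / M s t))
    rw [show x + 2 * n * (π / M s t) + π / M s t = x + (2 * n + 1) * (π / M s t) by ring,
      show x + 2 * n * (π / M s t) + 2 * (π / M s t) = x + 2 * (n + 1) * (π / M s t) by ring] at h1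
    rw [show x + (2 * n + 1) * (π / M s t) + π / M s t = x + 2 * (n + 1) * (π / M s t) by ring,
      show x + (2 * n + 1) * (π / M s t) + 2 * (π / M s t) =
        x + (2 * (n + 1) + 1) * (π / M s t) by ring] at h2
    push_cast
    rw [← h2, ← h1]
    module

/-- The matrices of the simple reflections satisfy the Coxeter relations: for `s ≠ t` the Tits form
is nondegenerate on the span of `α_s` and `α_t`, so each vector is the sum of one in this plane, on
which `(s t) ^ M s t` is a full rotation, and one fixed by both reflections. -/
theorem simpleRefl_isLiftable : M.IsLiftable (simpleRefl (cosMat M)) := by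
  intro s t
  by_cases h0 : M s t = 0
  · rw [h0, pow_zero]
  by_cases hst : s = t
  · subst hst
    rw [M.diagonal, pow_one, simpleRefl_mul_self]
  have hm := two_le_of_ne M hst h0
  have hsin := sin_pi_div_pos hm
  have hm0 : (M s t : ℝ) ≠ 0 := by exact_mod_cast h0
  set P := simpleRefl (cosMat M) s * simpleRefl (cosMat M) t with hP
  have hfix (x : ℝ) := simpleRefl_mul_pow_mulVec M s t x (M s t)
  simp only [← hP, show ∀ x : ℝ, x + (2 * (M s t : ℝ) + 1) * (π / M s t) =
    x + π / M s t + 2 * π by intro x; field_simp; ring, show ∀ x : ℝ,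
    x + 2 * (M s t : ℝ) * (π / M s t) = x + 2 * π by intro x; field_simp,
    sin_add_two_pi] at hfix
  -- The values `x = 0` and `x = -π / M s t` single out `α_s` and `α_t`.
  have hs : P ^ M s t *ᵥ Pi.single s 1 = Pi.single s 1 := by
    have := hfix 0
    rw [zero_add, sin_zero, zero_smul, add_zero, mulVec_smul] at this
    exact smul_right_injective _ hsin.ne' this
  have ht : P ^ M s t *ᵥ Pi.single t 1 = Pi.single t 1 := by
    have := hfix (-(π / M s t))
    rw [neg_add_cancel, sin_zero, zero_smul, zero_add, mulVec_smul, sin_neg] at this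
    exact smul_right_injective _ (neg_ne_zero.2 hsin.ne') this
  apply mulVec_injective
  ext1 v
  rw [one_mulVec]
  set c := cosMat M s t with hc
  have hdet : 4 - c ^ 2 ≠ 0 := by
    have : 4 - c ^ 2 = 4 * sin (π / M s t) ^ 2 := by
      rw [sin_sq, hc, cosMat]; ring
    rw [this]; positivity
  -- `a` and `b` solve the linear system making `w` orthogonal to `α_s` and `α_t`.
  set a := (2 * (cosMat M s ⬝ᵥ v) + c * (cosMat M t ⬝ᵥ v)) / (4 - c ^ 2) with ha
  set b := (2 * (cosMat M t ⬝ᵥ v) + c * (cosMat M s ⬝ᵥ v)) / (4 - c ^ 2) with hb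
  set w : B → ℝ := v + a • Pi.single s 1 + b • Pi.single t 1 with hw
  have hws : simpleRefl (cosMat M) s *ᵥ w = w := by
    rw [simpleRefl_mulVec]
    have : cosMat M s ⬝ᵥ w = 0 := by
      simp only [hw, dotProduct_add, dotProduct_smul, dotProduct_single, cosMat_self, smul_eq_mul,
        mul_one, ← hc, ha, hb]
      field_simp; ring
    rw [this, zero_smul, add_zero]
  have hwt : simpleRefl (cosMat M) t *ᵥ w = w := by
    rw [simpleRefl_mulVec]
    have : cosMat M t ⬝ᵥ w = 0 := by
      simp only [hw, dotProduct_add, dotProduct_smul, dotProduct_single, cosMat_self, smul_eq_mul,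
        mul_one, cosMat_symm M t s, ← hc, ha, hb]
      field_simp; ring
    rw [this, zero_smul, add_zero]
  have hPw : ∀ n : ℕ, P ^ n *ᵥ w = w := by
    intro n
    induction n with
    | zero => simp
    | succ n ih => rw [pow_succ, ← mulVec_mulVec, hP, ← mulVec_mulVec, hwt, hws, ← hP, ih]
  have hv : v = w - a • Pi.single s 1 - b • Pi.single t 1 := by rw [hw]; module
  rw [hv, mulVec_sub, mulVec_sub, mulVec_smul, mulVec_smul, hs, ht, hPw]

end Refl

namespace CoxeterSystem
open Matrix Real
variable {B W : Type*} [Group W] {M : CoxeterMatrix B} (cs : CoxeterSystem M W)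

/-- If `t` is a right descent of `w` and `s` is not, then `w` factors as `v * u` with `u` alternating
in `s` and `t`, shorter than the braid word, and `v` strictly shorter than `w` with neither `s` nor
`t` as a right descent. The factor `u` is obtained by cancelling `t, s, t, …` on the right of `w` as
long as the length drops. -/
theorem exists_dihedral_factor (w : W) (s t : B)
    (hs : cs.length w < cs.length (w * cs.simple s))
    (ht : cs.length (w * cs.simple t) < cs.length w) (h0 : M s t ≠ 0) :
    ∃ (v : W) (k : ℕ), w = v * cs.wordProd (alternatingWord s t k) ∧ k < M s t ∧
      cs.length v < cs.length w ∧ cs.length v < cs.length (v * cs.simple s) ∧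
      cs.length v < cs.length (v * cs.simple t) := by
  let u : ℕ → W := fun j => cs.wordProd (alternatingWord s t j)
  let x : ℕ → W := fun j => cs.simple (if Even j then t else s)
  have hu : ∀ j, w * (u (j + 1))⁻¹ = w * (u j)⁻¹ * x j := by
    intro j
    simp only [u, x, alternatingWord_succ', wordProd_cons, _root_.mul_inv_rev, inv_simple, mul_assoc]
  have hul : ∀ j, cs.length (u j) ≤ j := fun j => by
    simpa using cs.length_wordProd_le (alternatingWord s t j)
  have hQ1 : cs.length (w * (u 1)⁻¹) + 1 = cs.length w := by
    rw [hu 0]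
    have := cs.length_mul_simple w t
    simp only [u, x, alternatingWord, wordProd_nil, inv_one, mul_one, Even.zero, if_true]
    lia
  obtain ⟨k, hk1, hk, hk'⟩ : ∃ k, 1 ≤ k ∧ cs.length (w * (u k)⁻¹) + k = cs.length w ∧
      cs.length (w * (u (k + 1))⁻¹) + (k + 1) ≠ cs.length w := by
    by_contra! hcon
    have : ∀ k, cs.length (w * (u (k + 1))⁻¹) + (k + 1) = cs.length w := by
      intro k
      induction k with
      | zero => exact hQ1
      | succ k ih => exact hcon (k + 1) (by lia) ih
    have := this (cs.length w)
    lia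
  have hnext : cs.length (w * (u k)⁻¹) < cs.length (w * (u k)⁻¹ * x k) := by
    rw [hu] at hk'
    have := cs.length_mul_simple (w * (u k)⁻¹) (if Even k then t else s)
    lia
  have hprev : cs.length (w * (u k)⁻¹) < cs.length (w * (u k)⁻¹ * x (k - 1)) := by
    obtain ⟨j, rfl⟩ : ∃ j, k = j + 1 := ⟨k - 1, by lia⟩
    rw [hu, Nat.add_sub_cancel, cs.simple_mul_simple_cancel_right, ← hu]
    have h1 := cs.length_mul_le (w * (u j)⁻¹) (u j)
    rw [inv_mul_cancel_right] at h1
    have := hul j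
    lia
  refine ⟨w * (u k)⁻¹, k, (inv_mul_cancel_right _ _).symm, ?_, by lia, ?_, ?_⟩
  · -- Otherwise `u k * s` would be a reduced alternating word longer than the braid word.
    by_contra! hle
    refine cs.not_isReduced_alternatingWord t s (m := k + 1) (by rwa [M.symmetric])
      (by rw [M.symmetric]; lia) ?_
    refine le_antisymm (cs.length_wordProd_le _) ?_
    rw [length_alternatingWord, alternatingWord_succ, wordProd_concat]
    have h1 := cs.length_mul_le (w * (u k)⁻¹) (u k * cs.simple s)
    rw [← mul_assoc, inv_mul_cancel_right] at h1
    have h2 : cs.length (u k * cs.simple s) =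
      cs.length (cs.wordProd (alternatingWord s t k) * cs.simple s) := rfl
    lia
  · by_cases hev : Even k
    · have : ¬ Even (k - 1) := by grind
      simpa only [x, this, if_false] using hprev
    · simpa only [x, hev, if_false] using hnext
  · by_cases hev : Even k
    · simpa only [x, hev, if_true] using hnext
    · have : Even (k - 1) := by grind
      simpa only [x, this, if_true] using hprev

variable [Fintype B] [DecidableEq B]

/-- The Tits (geometric) representation, as matrices in the basis of simple roots. -/
noncomputable def geomRep : W →* Matrix B B ℝ := cs.lift ⟨_, simpleRefl_isLiftable M⟩

theorem geomRep_simple (s : B) : cs.geomRep (cs.simple s) = simpleRefl (cosMat M) s :=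
  cs.lift_apply_simple _ s

/-- The images of a simple root under the dihedral subgroup generated by `s` and `t`. The factor
`sin (π / M s t)` clears the denominators of the usual coefficients. -/
theorem geomRep_alternatingWord (s t : B) (k : ℕ) :
    sin (π / M s t) • (cs.geomRep (cs.wordProd (alternatingWord s t k)) *ᵥ Pi.single s 1) =
      if Even k then
        sin ((k + 1) * (π / M s t)) • Pi.single s 1 + sin (k * (π / M s t)) • Pi.single t 1
      else
        sin (k * (π / M s t)) • Pi.single s 1 + sin ((k + 1) * (π / M s t)) • Pi.single t 1 := by
  induction k with
  | zero => simp [alternatingWord, -mulVec_single]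
  | succ k ih =>
    rw [alternatingWord_succ', wordProd_cons, map_mul, ← mulVec_mulVec, ← mulVec_smul, ih,
      geomRep_simple]
    have h := cosMat_mul_sin_sub M s t (k * (π / M s t))
    rw [show (k : ℝ) * (π / M s t) + π / M s t = (k + 1) * (π / M s t) by ring,
      show (k : ℝ) * (π / M s t) + 2 * (π / M s t) = (k + 1 + 1) * (π / M s t) by ring] at h
    push_cast
    by_cases hk : Even k
    · simp only [hk, if_true, Nat.even_add_one, not_true, if_false]
      simp only [mulVec_add, mulVec_smul, simpleRefl_mulVec_single, cosMat_self,
        cosMat_symm M t s]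
      rw [← h]
      module
    · simp only [hk, if_false, Nat.even_add_one, not_false_eq_true, if_true]
      simp only [mulVec_add, mulVec_smul, simpleRefl_mulVec_single, cosMat_self]
      rw [← h]
      module

/-- If `s` is not a right descent of `w`, then the root `w α_s` is positive. -/
theorem geomRep_mulVec_nonneg (hM : ∀ i j, M i j ≠ 0) (w : W) (s : B)
    (hs : cs.length w < cs.length (w * cs.simple s)) : 0 ≤ cs.geomRep w *ᵥ Pi.single s 1 := by
  induction hn : cs.length w using Nat.strong_induction_on generalizing w s with
  | _ n ih =>
    subst hn
    by_cases hw : w = 1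
    · subst hw
      rw [map_one, one_mulVec]
      exact Pi.single_nonneg.2 zero_le_one
    obtain ⟨t, ht⟩ := cs.exists_rightDescent_of_ne_one hw
    have hst : s ≠ t := by
      rintro rfl
      exact lt_asymm hs ht
    obtain ⟨v, k, rfl, hk, hlt, hvs, hvt⟩ := cs.exists_dihedral_factor w s t hs ht (hM s t)
    have hvs_nonneg := ih _ hlt v s hvs rfl
    have hvt_nonneg := ih _ hlt v t hvt rfl
    have hsin := sin_pi_div_pos (two_le_of_ne M hst (hM s t))
    have hnn : ∀ j : ℕ, j ≤ M s t → 0 ≤ sin (j * (π / M s t)) := by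
      intro j hj
      have hj' : (j : ℝ) ≤ M s t := by exact_mod_cast hj
      have : (0 : ℝ) < M s t := by exact_mod_cast Nat.pos_of_ne_zero (hM s t)
      refine sin_nonneg_of_nonneg_of_le_pi (by positivity) ?_
      calc (j : ℝ) * (π / M s t) ≤ M s t * (π / M s t) := by gcongr
        _ = π := by field_simp
    have h1 := hnn k hk.le
    have h2 := hnn (k + 1) hk
    push_cast at h2
    suffices h : 0 ≤ sin (π / M s t) •
        (cs.geomRep (v * cs.wordProd (alternatingWord s t k)) *ᵥ Pi.single s 1) from
      fun i => nonneg_of_mul_nonneg_right (h i) hsin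
    rw [map_mul, ← mulVec_mulVec, ← mulVec_smul, geomRep_alternatingWord]
    split_ifs <;> rw [mulVec_add, mulVec_smul, mulVec_smul] <;>
      exact add_nonneg (smul_nonneg ‹_› hvs_nonneg) (smul_nonneg ‹_› hvt_nonneg)

/-- The Tits representation is faithful: if `w ≠ 1` acts trivially and `s` is a right descent of `w`,
then `w s` would send `α_s` to a positive root, whereas it sends it to `-α_s`. -/
theorem geomRep_injective (hM : ∀ i j, M i j ≠ 0) : Function.Injective cs.geomRep := by
  rw [injective_iff_map_eq_one]
  intro w hw
  by_contra hne
  obtain ⟨s, hs⟩ := cs.exists_rightDescent_of_ne_one hne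
  have h := cs.geomRep_mulVec_nonneg hM (w * cs.simple s) s
    (by rw [simple_mul_simple_cancel_right]; exact hs)
  rw [map_mul, hw, one_mul, geomRep_simple, simpleRefl_mulVec_self] at h
  have := h s
  simp at this
  linarith

/-- The Tits representation is defined over the ring generated by the numbers `2 cos (π / M s t)`,
which is a finite `ℤ`-module because these are algebraic integers. -/
theorem exists_injective_integral (cs : CoxeterSystem M W) (hM : ∀ i j, M i j ≠ 0) :
    ∃ (A : Subalgebra ℤ ℝ) (φ : W →* Matrix B B A), Module.Finite ℤ A ∧ Function.Injective φ := by
  let S : Set ℝ := Set.range fun ij : B × B => cosMat M ij.1 ij.2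
  let A := Algebra.adjoin ℤ S
  have hmem : ∀ i j, cosMat M i j ∈ A := fun i j => Algebra.subset_adjoin ⟨(i, j), rfl⟩
  have hfin : Module.Finite ℤ A := by
    refine ⟨(Submodule.fg_top _).2 (fg_adjoin_of_finite (Set.finite_range _) ?_)⟩
    rintro _ ⟨⟨i, j⟩, rfl⟩
    have := isIntegral_two_mul_cos_rat_mul_pi (1 / (M i j : ℚ))
    change IsIntegral ℤ (2 * cos (π / M i j))
    convert this using 3
    push_cast
    ring
  let c : B → B → A := fun i j => ⟨cosMat M i j, hmem i j⟩
  let f : A →+* ℝ := A.val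
  have hf : Function.Injective (f.mapMatrix (m := B)) :=
    Matrix.map_injective (f := f) Subtype.val_injective
  have hc : ∀ s, f.mapMatrix (simpleRefl c s) = simpleRefl (cosMat M) s :=
    fun s => simpleRefl_map f c s
  have hlift : M.IsLiftable (simpleRefl c) := by
    intro i j
    apply hf
    rw [map_pow, map_mul, hc, hc, map_one]
    exact simpleRefl_isLiftable M i j
  refine ⟨A, cs.lift ⟨_, hlift⟩, hfin, ?_⟩
  have hcomp : (f.mapMatrix (m := B)).toMonoidHom.comp (cs.lift ⟨_, hlift⟩) = cs.geomRep := by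
    apply cs.ext_simple
    intro i
    rw [MonoidHom.comp_apply, cs.lift_apply_simple, geomRep_simple]
    exact hc i
  have hinj := cs.geomRep_injective hM
  rw [← hcomp] at hinj
  exact Function.Injective.of_comp (f := (f.mapMatrix (m := B)).toMonoidHom) hinj

end CoxeterSystem

/-! ### Triangle groups as rotation subgroups of Coxeter groups -/

namespace TriangleGroup
variable (p q r : ℕ)

/-- The first generator of the triangle group. -/
def a : TriangleGroup p q r := PresentedGroup.of 0
/-- The second generator of the triangle group. -/
def b : TriangleGroup p q r := PresentedGroup.of 1

theorem a_pow : a p q r ^ p = 1 :=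
  PresentedGroup.one_of_mem (rels := triangleRels p q r) (x := FreeGroup.of 0 ^ p)
    (by simp [triangleRels])

theorem b_pow : b p q r ^ q = 1 :=
  PresentedGroup.one_of_mem (rels := triangleRels p q r) (x := FreeGroup.of 1 ^ q)
    (by simp [triangleRels])

theorem ab_pow : (a p q r * b p q r) ^ r = 1 :=
  PresentedGroup.one_of_mem (rels := triangleRels p q r)
    (x := (FreeGroup.of 0 * FreeGroup.of 1) ^ r) (by simp [triangleRels])

variable {p q r}

theorem exists_lift {G : Type*} [Group G] (x y : G) (hx : x ^ p = 1) (hy : y ^ q = 1)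
    (hxy : (x * y) ^ r = 1) :
    ∃ f : TriangleGroup p q r →* G, f (a p q r) = x ∧ f (b p q r) = y := by
  have h : ∀ w ∈ triangleRels p q r, FreeGroup.lift ![x, y] w = 1 := by
    rintro w (rfl | rfl | rfl) <;> simp [hx, hy, hxy]
  exact ⟨PresentedGroup.toGroup h, PresentedGroup.toGroup.of h, PresentedGroup.toGroup.of h⟩

theorem hom_ext {G : Type*} [Group G] {f g : TriangleGroup p q r →* G}
    (ha : f (a p q r) = g (a p q r)) (hb : f (b p q r) = g (b p q r)) : f = g := by
  refine PresentedGroup.ext fun i => ?_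
  fin_cases i
  exacts [ha, hb]

/-- The automorphism inverting both generators. -/
theorem exists_invol : ∃ τ : MulAut (TriangleGroup p q r),
    τ * τ = 1 ∧ τ (a p q r) = (a p q r)⁻¹ ∧ τ (b p q r) = (b p q r)⁻¹ := by
  obtain ⟨f, fa, fb⟩ := exists_lift (p := p) (q := q) (r := r) (a p q r)⁻¹ (b p q r)⁻¹
    (by rw [inv_pow, a_pow, inv_one]) (by rw [inv_pow, b_pow, inv_one]) (by
      have : (a p q r)⁻¹ * (b p q r)⁻¹ =
          (a p q r)⁻¹ * (a p q r * b p q r)⁻¹ * (a p q r)⁻¹⁻¹ := by group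
      rw [this, conj_pow, inv_pow, ab_pow]
      simp)
  have hff : f.comp f = MonoidHom.id _ := hom_ext (by simp [fa]) (by simp [fb])
  refine ⟨f.toMulEquiv f hff hff, ?_, fa, fb⟩
  ext x
  exact DFunLike.congr_fun hff x

/-- The Coxeter matrix of the reflection group of the triangle: `(s₀ s₁) ^ p = (s₁ s₂) ^ q =
(s₀ s₂) ^ r = 1`. -/
def coxeterMatrix (p q r : ℕ) (hp : 2 ≤ p) (hq : 2 ≤ q) (hr : 2 ≤ r) : CoxeterMatrix (Fin 3) where
  M := !![1, p, r; p, 1, q; r, q, 1]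
  isSymm := by ext i j; fin_cases i <;> fin_cases j <;> rfl
  diagonal i := by fin_cases i <;> rfl
  off_diagonal i j h := by fin_cases i <;> fin_cases j <;> simp at h ⊢ <;> lia

/-- The homomorphism `a ↦ s₀ s₁`, `b ↦ s₁ s₂` into the Coxeter group is injective: with `τ` the
automorphism inverting the generators, `s₀ ↦ a τ`, `s₁ ↦ τ`, `s₂ ↦ τ b` maps the Coxeter group to a
semidirect product, and the composite is the inclusion of the triangle group. -/
theorem exists_injective_coxeter (hp : 2 ≤ p) (hq : 2 ≤ q) (hr : 2 ≤ r) :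
    ∃ f : TriangleGroup p q r →* (coxeterMatrix p q r hp hq hr).Group, Function.Injective f := by
  let cs := (coxeterMatrix p q r hp hq hr).toCoxeterSystem
  obtain ⟨f, fa, fb⟩ := exists_lift (p := p) (q := q) (r := r)
    (cs.simple 0 * cs.simple 1) (cs.simple 1 * cs.simple 2)
    (cs.simple_mul_simple_pow 0 1) (cs.simple_mul_simple_pow 1 2)
    (by rw [mul_assoc, cs.simple_mul_simple_cancel_left]; exact cs.simple_mul_simple_pow 0 2)
  refine ⟨f, ?_⟩
  obtain ⟨τ, hτ, τa, τb⟩ := exists_invol (p := p) (q := q) (r := r)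
  let S := SemidirectProduct (TriangleGroup p q r) (MulAut (TriangleGroup p q r)) (MonoidHom.id _)
  let A : S := SemidirectProduct.inl (a p q r)
  let B : S := SemidirectProduct.inl (b p q r)
  let T : S := SemidirectProduct.inr τ
  have hA : A ^ p = 1 := by rw [← map_pow, a_pow, map_one]
  have hB : B ^ q = 1 := by rw [← map_pow, b_pow, map_one]
  have hAB : (A * B) ^ r = 1 := by rw [← map_mul, ← map_pow, ab_pow, map_one]
  have hT : T * T = 1 := by rw [← map_mul, hτ, map_one]
  have hTinv : SemidirectProduct.inr τ⁻¹ = T := by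
    rw [map_inv, inv_eq_of_mul_eq_one_left hT]
  have hTA : T * A * T = A⁻¹ := by
    have := SemidirectProduct.inl_aut (φ := MonoidHom.id _) τ (a p q r)
    rw [hTinv, MonoidHom.id_apply, τa, map_inv] at this
    exact this.symm
  have hTB : T * B * T = B⁻¹ := by
    have := SemidirectProduct.inl_aut (φ := MonoidHom.id _) τ (b p q r)
    rw [hTinv, MonoidHom.id_apply, τb, map_inv] at this
    exact this.symm
  have h00 : (A * T) * (A * T) = 1 := by
    rw [mul_assoc, ← mul_assoc T, hTA, mul_inv_cancel]
  have h22 : (T * B) * (T * B) = 1 := by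
    rw [← mul_assoc, hTB, inv_mul_cancel]
  have h01 : (A * T) * T = A := by rw [mul_assoc, hT, mul_one]
  have h12 : T * (T * B) = B := by rw [← mul_assoc, hT, one_mul]
  have h02 : (A * T) * (T * B) = A * B := by rw [mul_assoc, h12]
  have swap : ∀ {x y : S} {m : ℕ}, x * x = 1 → y * y = 1 → (x * y) ^ m = 1 → (y * x) ^ m = 1 := by
    intro x y m hx hy h
    rw [← inv_eq_one, ← inv_pow, mul_inv_rev, inv_eq_of_mul_eq_one_left hx,
      inv_eq_of_mul_eq_one_left hy, h]
  have hlift : (coxeterMatrix p q r hp hq hr).IsLiftable ![A * T, T, T * B] := by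
    have H01 : ((A * T) * T) ^ p = 1 := by rw [h01, hA]
    have H12 : (T * (T * B)) ^ q = 1 := by rw [h12, hB]
    have H02 : ((A * T) * (T * B)) ^ r = 1 := by rw [h02, hAB]
    intro i j
    fin_cases i <;> fin_cases j
    exacts [(pow_one _).trans h00, H01, H02, swap h00 hT H01, (pow_one _).trans hT, H12,
      swap h00 h22 H02, swap hT h22 H12, (pow_one _).trans h22]
  let g := cs.lift ⟨_, hlift⟩
  have hgf : g.comp f = SemidirectProduct.inl := by
    refine hom_ext ?_ ?_
    · rw [MonoidHom.comp_apply, fa, map_mul, cs.lift_apply_simple, cs.lift_apply_simple]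
      exact h01
    · rw [MonoidHom.comp_apply, fb, map_mul, cs.lift_apply_simple, cs.lift_apply_simple]
      exact h12
  have : Function.Injective (g.comp f) := by
    rw [hgf]; exact SemidirectProduct.inl_injective
  exact Function.Injective.of_comp (f := g) this

end TriangleGroup

/-- every triangle group `Γ(p,q,r)` (with `p, q, r ≥ 2`) has a torsion-free
normal subgroup of finite index. -/
theorem triangleGroup_has_torsionfree_finite_index_normal_subgroup
    (p q r : ℕ) (hp : 2 ≤ p) (hq : 2 ≤ q) (hr : 2 ≤ r) :
    ∃ N : Subgroup (TriangleGroup p q r), N.Normal ∧ N.FiniteIndex ∧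
      ∀ g ∈ N, IsOfFinOrder g → g = 1 := by
  obtain ⟨f, hf⟩ := TriangleGroup.exists_injective_coxeter hp hq hr
  have hM : ∀ i j, TriangleGroup.coxeterMatrix p q r hp hq hr i j ≠ 0 := by
    intro i j
    fin_cases i <;> fin_cases j <;> simp [TriangleGroup.coxeterMatrix] <;> lia
  obtain ⟨A, φ, hfin, hφ⟩ :=
    (TriangleGroup.coxeterMatrix p q r hp hq hr).toCoxeterSystem.exists_injective_integral hM
  obtain ⟨n, ψ, hψ⟩ := exists_injective_int (φ.comp f) (hφ.comp hf)
  exact exists_torsionfree_of_injective ψ hψ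
end

section
/- Let G be a group and let t be an element of the center of G of infinite order, so that the cyclic subgroup N = ⟨t⟩ generated by t is an infinite cyclic central (hence normal) subgroup. If the quotient group G/N is isomorphic to ℤ × ℤ, then either G is isomorphic to ℤ × ℤ × ℤ, or the center of G is equal to N. -/
/-!
Lift the two standard generators of `ℤ × ℤ` to `x, y : G`. Every element of `G` then has the form
`x ^ a * y ^ b * t ^ c` with `(a, b)` its image in `ℤ × ℤ`, and the commutator of `x` and `y` dies
in the quotient, so `x * y * x⁻¹ = y * t ^ n` for some `n`.

If `n = 0`, then `x, y, t` commute pairwise and `(a, b, c) ↦ x ^ a * y ^ b * t ^ c` is an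
isomorphism from `ℤ × ℤ × ℤ` onto `G` (injectivity in `c` is the infinite order of `t`).
If `n ≠ 0`, then, since `t` is central, `x * y ^ b * x⁻¹ = y ^ b * t ^ (n * b)`, and similarly with
the roles of `x` and `y` exchanged; so `x ^ a * y ^ b * t ^ c` can be central only for
`a = b = 0`, i.e. only inside `⟨t⟩`.
-/

/-- A subgroup generated by a central element is normal. -/
theorem zpowers_normal_of_mem_center {G : Type*} [Group G] {t : G}
    (ht : t ∈ Subgroup.center G) : (Subgroup.zpowers t).Normal := by
  constructor
  intro n hn g
  have hc : ∀ x : G, x * n = n * x :=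
    Subgroup.mem_center_iff.mp ((Subgroup.zpowers_le.mpr ht) hn)
  have : g * n * g⁻¹ = n := by rw [hc g]; group
  rwa [this]

/-- If conjugation by `x` multiplies `y` by a nontrivial power of a central element `t` of infinite
order, then no nontrivial power of `y` commutes with `x`. -/
theorem eq_zero_of_commute_zpow {G : Type*} [Group G] {t x y : G}
    (ht : t ∈ Subgroup.center G) (hinf : ¬ IsOfFinOrder t) {n b : ℤ} (hn : n ≠ 0)
    (hxy : x * y * x⁻¹ = y * t ^ n) (hb : Commute x (y ^ b)) : b = 0 := by
  have hyt : Commute y t := Subgroup.mem_center_iff.mp ht y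
  have h : x * y ^ b * x⁻¹ = y ^ b * t ^ (n * b) := by
    rw [← conj_zpow, hxy, (hyt.zpow_right n).mul_zpow, zpow_mul]
  rw [hb.eq, mul_inv_cancel_right, left_eq_mul] at h
  have h0 : n * b = 0 :=
    injective_zpow_iff_not_isOfFinOrder.mpr hinf (by simpa using h)
  exact (mul_eq_zero.mp h0).resolve_left hn

/-- The dichotomy for a homomorphism onto `ℤ × ℤ` with kernel `⟨t⟩`. -/
theorem dichotomy_of_surjective {G : Type*} [Group G] (t : G)
    (ht : t ∈ Subgroup.center G) (hinf : ¬ IsOfFinOrder t)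
    (f : G →* Multiplicative (ℤ × ℤ)) (hf : Function.Surjective f)
    (hker : f.ker = Subgroup.zpowers t) :
    Nonempty (G ≃* Multiplicative (ℤ × ℤ × ℤ)) ∨
      Subgroup.center G = Subgroup.zpowers t := by
  obtain ⟨x, hx⟩ := hf (Multiplicative.ofAdd (1, 0))
  obtain ⟨y, hy⟩ := hf (Multiplicative.ofAdd (0, 1))
  have htc : ∀ g : G, Commute g t := fun g => Subgroup.mem_center_iff.mp ht g
  have hft : f t = 1 := by
    rw [← MonoidHom.mem_ker, hker]; exact Subgroup.mem_zpowers t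
  have hfw : ∀ a b c : ℤ, f (x ^ a * y ^ b * t ^ c) = Multiplicative.ofAdd (a, b) := by
    intro a b c
    simp only [map_mul, map_zpow, hx, hy, hft, one_zpow, mul_one]
    rw [← ofAdd_zsmul, ← ofAdd_zsmul, ← ofAdd_add]
    simp
  have hnf : ∀ g : G, ∃ a b c : ℤ, x ^ a * y ^ b * t ^ c = g := by
    intro g
    let p : ℤ × ℤ := (f g).toAdd
    have hmem : (x ^ p.1 * y ^ p.2)⁻¹ * g ∈ f.ker := by
      have h := hfw p.1 p.2 0
      rw [zpow_zero, mul_one] at h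
      rw [MonoidHom.mem_ker, map_mul, map_inv, h]
      exact inv_mul_cancel (f g)
    rw [hker] at hmem
    obtain ⟨c, hc⟩ := hmem
    refine ⟨p.1, p.2, c, ?_⟩
    rw [show t ^ c = (x ^ p.1 * y ^ p.2)⁻¹ * g from hc, mul_inv_cancel_left]
  obtain ⟨n, hn⟩ : ∃ n : ℤ, t ^ n = y⁻¹ * (x * y * x⁻¹) := by
    have : y⁻¹ * (x * y * x⁻¹) ∈ f.ker := by
      rw [MonoidHom.mem_ker]
      simp only [map_mul, map_inv]
      rw [mul_inv_cancel_comm, inv_mul_cancel]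
    rw [hker] at this
    exact this
  have hxy : x * y * x⁻¹ = y * t ^ n := by rw [hn, mul_inv_cancel_left]
  by_cases hn0 : n = 0
  · left
    have hcomm : Commute x y := by
      rw [hn0, zpow_zero, mul_one] at hxy
      exact mul_inv_eq_iff_eq_mul.mp hxy
    let φ : Multiplicative (ℤ × ℤ × ℤ) →* G := MonoidHom.mk'
      (fun p => x ^ p.toAdd.1 * y ^ p.toAdd.2.1 * t ^ p.toAdd.2.2) (by
        intro p q
        simp only [toAdd_mul, Prod.fst_add, Prod.snd_add, zpow_add]
        rw [((htc _).zpow_right _).symm.mul_mul_mul_comm,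
          (hcomm.symm.zpow_zpow _ _).mul_mul_mul_comm])
    refine ⟨(MulEquiv.ofBijective φ ⟨?_, ?_⟩).symm⟩
    · rw [injective_iff_map_eq_one]
      intro p hp
      have hp' : x ^ p.toAdd.1 * y ^ p.toAdd.2.1 * t ^ p.toAdd.2.2 = 1 := hp
      have h := hfw p.toAdd.1 p.toAdd.2.1 p.toAdd.2.2
      rw [hp', map_one] at h
      have h' : ((0, 0) : ℤ × ℤ) = (p.toAdd.1, p.toAdd.2.1) := h
      obtain ⟨h1, h2⟩ := Prod.mk.inj h'
      rw [← h1, ← h2, zpow_zero, zpow_zero, one_mul, one_mul] at hp'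
      have h3 : p.toAdd.2.2 = 0 :=
        injective_zpow_iff_not_isOfFinOrder.mpr hinf (by simpa using hp')
      exact Multiplicative.toAdd.injective (Prod.ext h1.symm (Prod.ext h2.symm h3))
    · intro g
      obtain ⟨a, b, c, h⟩ := hnf g
      exact ⟨Multiplicative.ofAdd (a, b, c), h⟩
  · right
    refine le_antisymm (fun z hz => ?_) (Subgroup.zpowers_le.mpr ht)
    obtain ⟨a, b, c, rfl⟩ := hnf z
    have hw : x ^ a * y ^ b ∈ Subgroup.center G :=
      (Subgroup.mul_mem_cancel_right _ (Subgroup.zpow_mem _ ht c)).mp hz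
    have hwc : ∀ g : G, Commute g (x ^ a * y ^ b) := fun g => Subgroup.mem_center_iff.mp hw g
    have hb : b = 0 := by
      refine eq_zero_of_commute_zpow ht hinf hn0 hxy ?_
      have h := ((Commute.refl x).zpow_right a).inv_right.mul_right (hwc x)
      rwa [inv_mul_cancel_left] at h
    have hyx : y * x * y⁻¹ = x * t ^ (-n) := by
      have h1 : x * y = y * x * t ^ n := by
        rw [mul_inv_eq_iff_eq_mul] at hxy
        rw [hxy, mul_assoc, ← ((htc x).zpow_right n).eq, mul_assoc]
      rw [mul_inv_eq_iff_eq_mul, mul_assoc, ← ((htc y).zpow_right (-n)).eq, ← mul_assoc, h1,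
        zpow_neg, mul_inv_cancel_right]
    have ha : a = 0 := by
      refine eq_zero_of_commute_zpow ht hinf (neg_ne_zero.mpr hn0) hyx ?_
      simpa [hb] using hwc y
    rw [ha, hb, zpow_zero, zpow_zero, one_mul, one_mul]
    exact Subgroup.zpow_mem_zpowers t c

/-- if `t` is a central element of infinite order in a group `G` and
`G/⟨t⟩ ≅ ℤ × ℤ`, then either `G ≅ ℤ × ℤ × ℤ` or the center of `G` equals `⟨t⟩`. -/
theorem group_with_central_Z_and_quotient_ZxZ {G : Type*} [Group G] (t : G)
    (ht : t ∈ Subgroup.center G) (hinf : ¬ IsOfFinOrder t)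
    (hq : letI := zpowers_normal_of_mem_center ht
          Nonempty ((G ⧸ Subgroup.zpowers t) ≃* Multiplicative (ℤ × ℤ))) :
    Nonempty (G ≃* Multiplicative (ℤ × ℤ × ℤ)) ∨
      Subgroup.center G = Subgroup.zpowers t := by
  have := zpowers_normal_of_mem_center ht
  obtain ⟨e⟩ := hq
  refine dichotomy_of_surjective t ht hinf
    (e.toMonoidHom.comp (QuotientGroup.mk' (Subgroup.zpowers t)))
    (e.surjective.comp (QuotientGroup.mk'_surjective _)) ?_
  ext g
  simp
end

section
/- Let G be a group and let t be an element of the center of G of infinite order, so that the cyclic subgroup N = ⟨t⟩ generated by t is an infinite cyclic central (hence normal) subgroup. If the quotient group G/N is isomorphic to the Klein bottle group K = ⟨a, b | a·b·a·b⁻¹ = 1⟩, then G has a subgroup H of index 2 with N ≤ H and H isomorphic to ℤ × ℤ × ℤ. -/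
/-- The Klein bottle group `⟨a, b ∣ a·b·a·b⁻¹⟩`. -/
abbrev KleinBottleGroup : Type :=
  PresentedGroup ({FreeGroup.of 0 * FreeGroup.of 1 * FreeGroup.of 0 * (FreeGroup.of 1)⁻¹} :
    Set (FreeGroup (Fin 2)))

namespace KleinAux

/-- The generator `a` of the Klein bottle group. -/
def ka : KleinBottleGroup := PresentedGroup.of 0

/-- The generator `b` of the Klein bottle group. -/
def kb : KleinBottleGroup := PresentedGroup.of 1

lemma rel : ka * kb * ka * kb⁻¹ = 1 :=
  PresentedGroup.one_of_mem (rels := {FreeGroup.of 0 * FreeGroup.of 1 * FreeGroup.of 0 *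
    (FreeGroup.of 1)⁻¹}) (Set.mem_singleton _)

/-- The existence half of the universal property of the Klein bottle group. -/
lemma exists_hom {M : Type*} [Group M] (x y : M) (h : x * y * x * y⁻¹ = 1) :
    ∃ f : KleinBottleGroup →* M, f ka = x ∧ f kb = y := by
  refine ⟨PresentedGroup.toGroup (f := ![x, y]) ?_, ?_, ?_⟩
  · intro r hr
    rw [Set.mem_singleton_iff.mp hr]
    simpa using h
  · exact PresentedGroup.toGroup.of _
  · exact PresentedGroup.toGroup.of _

lemma semiconj : SemiconjBy kb ka ka⁻¹ := by
  have h := rel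
  rw [mul_inv_eq_one, mul_assoc] at h
  rw [SemiconjBy, eq_inv_mul_iff_mul_eq, h]

lemma exists_normal_form (x : KleinBottleGroup) : ∃ j m : ℤ, x = ka ^ j * kb ^ m := by
  have hx : x ∈ Subgroup.closure (Set.range (PresentedGroup.of (rels :=
      ({FreeGroup.of 0 * FreeGroup.of 1 * FreeGroup.of 0 * (FreeGroup.of 1)⁻¹} :
        Set (FreeGroup (Fin 2)))))) := by
    rw [PresentedGroup.closure_range_of]; trivial
  induction hx using Subgroup.closure_induction_left with
  | one => exact ⟨0, 0, by simp⟩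
  | mul_left g hg y _ ih =>
    obtain ⟨j, m, rfl⟩ := ih
    obtain ⟨i, rfl⟩ := hg
    fin_cases i
    · refine ⟨1 + j, m, ?_⟩
      change ka * _ = _
      rw [zpow_add, zpow_one]
      exact (mul_assoc _ _ _).symm
    · refine ⟨-j, 1 + m, ?_⟩
      have h := (semiconj.zpow_right j).eq
      change kb * _ = _
      rw [← mul_assoc, h, zpow_add, zpow_one, mul_assoc, inv_zpow']
  | inv_mul_cancel g hg y _ ih =>
    obtain ⟨j, m, rfl⟩ := ih
    obtain ⟨i, rfl⟩ := hg
    fin_cases i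
    · refine ⟨-1 + j, m, ?_⟩
      change ka⁻¹ * _ = _
      rw [zpow_add, zpow_neg_one]
      exact (mul_assoc _ _ _).symm
    · refine ⟨-j, -1 + m, ?_⟩
      have h := (semiconj.inv_symm_left.zpow_right (-j)).eq
      rw [inv_zpow', neg_neg] at h
      change kb⁻¹ * _ = _
      rw [← mul_assoc, h, zpow_add, zpow_neg_one, mul_assoc]

lemma normal_form_unique {j m : ℤ} (h : ka ^ j * kb ^ m = 1) : j = 0 ∧ m = 0 := by
  obtain ⟨f, hfa, hfb⟩ := exists_hom (1 : Multiplicative ℤ) (Multiplicative.ofAdd 1) (by simp)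
  have hm : m = 0 := by
    have := congrArg (fun x => (f x).toAdd) h
    simpa [hfa, hfb] using this
  subst hm
  obtain ⟨g, hga, -⟩ := exists_hom (DihedralGroup.r (1 : ZMod 0)) (DihedralGroup.sr 0) (by
    simp)
  have := congrArg g h
  rw [zpow_zero, mul_one, map_zpow, hga, map_one, DihedralGroup.r_one_zpow,
    DihedralGroup.one_def] at this
  exact ⟨by simpa using DihedralGroup.r.inj this, rfl⟩

/-- The theorem, with the isomorphism `G/⟨t⟩ ≅ K` replaced by a surjection with kernel `⟨t⟩`. -/
lemma main {G : Type*} [Group G] (t : G) (ht : t ∈ Subgroup.center G) (hinf : ¬ IsOfFinOrder t)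
    (p : G →* KleinBottleGroup) (hp : Function.Surjective p) (hk : p.ker = Subgroup.zpowers t) :
    ∃ H : Subgroup G, H.index = 2 ∧ Subgroup.zpowers t ≤ H ∧
      Nonempty (H ≃* Multiplicative (ℤ × ℤ × ℤ)) := by
  have hc : ∀ x, Commute t x := fun x => (Subgroup.mem_center_iff.mp ht x).symm
  have hpt : p t = 1 := by
    rw [← MonoidHom.mem_ker, hk]; exact Subgroup.mem_zpowers t
  obtain ⟨A, hA⟩ := hp ka
  obtain ⟨B, hB⟩ := hp kb
  obtain ⟨k, hr⟩ : ∃ k : ℤ, t ^ k = A * B * A * B⁻¹ := by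
    rw [← Subgroup.mem_zpowers_iff, ← hk, MonoidHom.mem_ker]
    simp [hA, hB, rel]
  have hAB : Commute A (B ^ 2) := by
    have h1 : A * B * A = t ^ k * B := by rw [hr]; group
    have h2 : B * t ^ k = t ^ k * B := ((hc B).zpow_left k).eq.symm
    have h3 : t ^ k * (B ^ 2 * A) = t ^ k * (A * B ^ 2) := by
      calc t ^ k * (B ^ 2 * A) = (t ^ k * B) * (B * A) := by simp only [sq, mul_assoc]
        _ = A * B * (A * B * A) := by rw [← h1]; group
        _ = A * (B * t ^ k) * B := by rw [h1]; group
        _ = (A * t ^ k) * B ^ 2 := by rw [h2]; simp only [sq, mul_assoc]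
        _ = t ^ k * (A * B ^ 2) := by rw [← ((hc A).zpow_left k).eq, mul_assoc]
    exact (mul_left_cancel h3).symm
  obtain ⟨f, hfa, hfb⟩ := exists_hom (1 : Multiplicative (ZMod 2)) (Multiplicative.ofAdd 1)
    (by simp)
  let F := f.comp p
  let φ : Multiplicative (ℤ × ℤ × ℤ) →* G :=
    { toFun := fun v => t ^ v.toAdd.1 * (A ^ v.toAdd.2.1 * (B ^ 2) ^ v.toAdd.2.2)
      map_one' := by simp
      map_mul' := fun v w => by
        simp only [toAdd_mul, Prod.fst_add, Prod.snd_add, zpow_add]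
        rw [(hAB.zpow_zpow w.toAdd.2.1 v.toAdd.2.2).mul_mul_mul_comm,
            ((hc _).zpow_left w.toAdd.1).mul_mul_mul_comm] }
  have hφ : ∀ v, φ v = t ^ v.toAdd.1 * (A ^ v.toAdd.2.1 * (B ^ 2) ^ v.toAdd.2.2) := fun _ => rfl
  have hpφ : ∀ v, p (φ v) = ka ^ v.toAdd.2.1 * kb ^ (2 * v.toAdd.2.2) := fun v => by
    rw [hφ, zpow_mul]; simp [hpt, hA, hB]
  have hinj : Function.Injective φ := by
    rw [injective_iff_map_eq_one]
    intro v hv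
    obtain ⟨h1, h2⟩ := normal_form_unique ((hpφ v).symm.trans (by rw [hv, map_one]))
    have h2' : v.toAdd.2.2 = 0 := by omega
    rw [hφ, h1, h2', zpow_zero, zpow_zero, mul_one, mul_one] at hv
    have h0 : v.toAdd.1 = 0 := by
      by_contra h
      exact hinf (isOfFinOrder_iff_zpow_eq_one.mpr ⟨_, h, hv⟩)
    exact Multiplicative.toAdd.injective (Prod.ext h0 (Prod.ext h1 h2'))
  have hrange : φ.range = F.ker := by
    apply le_antisymm
    · rintro _ ⟨v, rfl⟩
      rw [MonoidHom.mem_ker, MonoidHom.comp_apply, hpφ, zpow_mul]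
      have : (Multiplicative.ofAdd (1 : ZMod 2)) ^ (2 : ℤ) = 1 := by decide
      simp only [map_mul, map_zpow, hfa, hfb, this, one_zpow, mul_one]
    · intro g hg
      obtain ⟨j, m, hjm⟩ := exists_normal_form (p g)
      rw [MonoidHom.mem_ker, MonoidHom.comp_apply, hjm] at hg
      have hm : ((m : ℤ) : ZMod 2) = 0 := by
        have := congrArg Multiplicative.toAdd hg
        simpa [hfa, hfb] using this
      rw [ZMod.intCast_zmod_eq_zero_iff_dvd] at hm
      obtain ⟨l, rfl⟩ := hm
      obtain ⟨i, hi⟩ : ∃ i : ℤ, t ^ i = g * (φ (Multiplicative.ofAdd (0, j, l)))⁻¹ := by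
        rw [← Subgroup.mem_zpowers_iff, ← hk, MonoidHom.mem_ker, map_mul, map_inv, hpφ, hjm]
        simp
      refine ⟨Multiplicative.ofAdd (i, j, l), ?_⟩
      rw [eq_mul_inv_iff_mul_eq] at hi
      rw [← hi]
      simp [hφ]
  refine ⟨F.ker, ?_, ?_, ?_⟩
  · have hs : Function.Surjective F := by
      refine Function.Surjective.comp (g := f) (fun z => ⟨kb ^ (z.toAdd.val), ?_⟩) hp
      rw [map_pow, hfb]
      revert z; decide
    rw [Subgroup.index_ker, MonoidHom.range_eq_top.mpr hs, Subgroup.card_top]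
    simp
  · rw [Subgroup.zpowers_le, MonoidHom.mem_ker, MonoidHom.comp_apply, hpt, map_one]
  · rw [← hrange]
    exact ⟨(MonoidHom.ofInjective hinj).symm⟩

end KleinAux

/-- if `t` is a central element of infinite order in a group `G` and
`G/⟨t⟩` is the Klein bottle group, then `G` has a subgroup `H` of index 2 containing `⟨t⟩`
with `H ≅ ℤ × ℤ × ℤ`. -/
theorem group_with_central_Z_and_quotient_klein {G : Type*} [Group G] (t : G)
    (ht : t ∈ Subgroup.center G) (hinf : ¬ IsOfFinOrder t)
    (hq : letI := zpowers_normal_of_mem_center ht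
          Nonempty ((G ⧸ Subgroup.zpowers t) ≃* KleinBottleGroup)) :
    ∃ H : Subgroup G, H.index = 2 ∧ Subgroup.zpowers t ≤ H ∧
      Nonempty (H ≃* Multiplicative (ℤ × ℤ × ℤ)) := by
  have := zpowers_normal_of_mem_center ht
  obtain ⟨e⟩ := hq
  refine KleinAux.main t ht hinf (e.toMonoidHom.comp (QuotientGroup.mk' _))
    (e.surjective.comp (QuotientGroup.mk'_surjective _)) ?_
  ext x
  simp
end

section
/- Let n be a natural number with n = 0 or n ≥ 3, and let D_n be the dihedral group (for n = 0 this is the infinite dihedral group). A subgroup N of D_n is both normal and cyclic if and only if N is contained in the rotation subgroup ⟨r⟩ generated by the basic rotation r. -/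
/-!
A rotation `r i` commutes with every rotation and is inverted by conjugation with any reflection, so
every subgroup of `⟨r 1⟩` is stable under conjugation; it is cyclic because it is a subgroup of a
cyclic group. Conversely, a cyclic subgroup not contained in `⟨r 1⟩` is generated by a reflection
`sr i`, hence equals `{1, sr i}`. Conjugating by `r 1` turns `sr i` into `sr (i - 2)`, so normality
would force `2 = 0` in `ZMod n`, i.e. `n ∣ 2`, which the hypothesis on `n` excludes.
-/

theorem r_mem_zpowers_r_one {n : ℕ} (i : ZMod n) :
    DihedralGroup.r i ∈ Subgroup.zpowers (DihedralGroup.r (1 : ZMod n)) := by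
  obtain ⟨k, rfl⟩ := ZMod.intCast_surjective i
  exact ⟨k, DihedralGroup.r_one_zpow k⟩

theorem exists_eq_r_of_mem_zpowers_r_one {n : ℕ} {x : DihedralGroup n}
    (hx : x ∈ Subgroup.zpowers (DihedralGroup.r (1 : ZMod n))) :
    ∃ i, x = DihedralGroup.r i := by
  obtain ⟨k, rfl⟩ := hx
  exact ⟨k, DihedralGroup.r_one_zpow k⟩

theorem eq_one_or_eq_of_mem_zpowers_sr {n : ℕ} {i : ZMod n} {x : DihedralGroup n}
    (hx : x ∈ Subgroup.zpowers (DihedralGroup.sr i)) :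
    x = 1 ∨ x = DihedralGroup.sr i := by
  obtain ⟨k, rfl⟩ := hx
  have hsq : (DihedralGroup.sr i) ^ (2 : ℤ) = 1 := by
    rw [zpow_two, DihedralGroup.sr_mul_self]
  obtain ⟨m, rfl | rfl⟩ := Int.even_or_odd' k
  · left; simp only [zpow_mul, hsq, one_zpow]
  · right; simp only [zpow_add, zpow_mul, hsq, one_zpow, one_mul, zpow_one]

theorem zmod_two_ne_zero {n : ℕ} (hn : n = 0 ∨ 3 ≤ n) : (2 : ZMod n) ≠ 0 := by
  intro h
  have hdvd : n ∣ 2 := (ZMod.natCast_eq_zero_iff 2 n).mp (by exact_mod_cast h)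
  have hle := Nat.le_of_dvd two_pos hdvd
  have hpos := Nat.pos_of_dvd_of_pos hdvd two_pos
  omega

/-- in the dihedral group `D_n` (with `n = 0`, the infinite dihedral group,
or `n ≥ 3`), a subgroup is normal and cyclic if and only if it is contained in the
rotation subgroup `⟨r 1⟩`. -/
theorem dihedral_normal_cyclic_iff_le_rotations (n : ℕ) (hn : n = 0 ∨ 3 ≤ n)
    (N : Subgroup (DihedralGroup n)) :
    (N.Normal ∧ ∃ g, N = Subgroup.zpowers g) ↔
      N ≤ Subgroup.zpowers (DihedralGroup.r 1) := by
  constructor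
  · rintro ⟨hN, g, rfl⟩
    rw [Subgroup.zpowers_le]
    rcases g with i | i
    · exact r_mem_zpowers_r_one i
    · have hconj := hN.conj_mem _ (Subgroup.mem_zpowers _) (DihedralGroup.r 1)
      rw [DihedralGroup.r_mul_sr, DihedralGroup.inv_r, DihedralGroup.sr_mul_r] at hconj
      rcases eq_one_or_eq_of_mem_zpowers_sr hconj with h | h
      · exact absurd h (by simp [DihedralGroup.one_def, -DihedralGroup.r_zero])
      · refine absurd ?_ (zmod_two_ne_zero hn)
        linear_combination -(DihedralGroup.sr.inj h)
  · intro hle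
    refine ⟨⟨fun x hx g => ?_⟩, ?_⟩
    · obtain ⟨i, rfl⟩ := exists_eq_r_of_mem_zpowers_r_one (hle hx)
      rcases g with j | j
      · simpa using hx
      · simpa using N.inv_mem hx
    · have : IsCyclic N := Subgroup.isCyclic_of_le hle
      obtain ⟨g, hg⟩ := N.isCyclic_iff_exists_zpowers_eq_top.mp this
      exact ⟨g, hg.symm⟩
end

section
/- For all integers p ≥ 2 and q ≥ 2, the presented group ⟨a, b | a^p = b^q⟩ (two generators and the single relation a^p·b^{−q}) is not a cyclic group. -/
/-!
A cyclic group is abelian, so it suffices to map the group to some group in which the images of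
`a` and `b` do not commute. Any pair `x`, `y` with `x ^ p = 1 = y ^ q` defines such a map, and a
noncommuting pair is found in the wreath product `ℤ/p ≀ ℤ/q` acting on `ℤ/q × ℤ/p`: `x` translates
the single fibre over `0`, while `y` permutes the fibres by translating the base.
-/

/-- The permutation of `ℤ/q × ℤ/p` adding `1` to the second coordinate on the fibre over `0` and
fixing every other point. -/
def fibreShift (p q : ℕ) : Equiv.Perm (ZMod q × ZMod p) :=
  Equiv.prodShear (Equiv.refl _) fun b => Equiv.addRight (if b = 0 then 1 else 0)

/-- The permutation of `ℤ/q × ℤ/p` adding `1` to the first coordinate. -/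
def baseShift (p q : ℕ) : Equiv.Perm (ZMod q × ZMod p) :=
  Equiv.prodCongr (Equiv.addRight 1) (Equiv.refl _)

lemma fibreShift_apply (p q : ℕ) (z : ZMod q × ZMod p) :
    fibreShift p q z = (z.1, z.2 + if z.1 = 0 then 1 else 0) := rfl

lemma baseShift_apply (p q : ℕ) (z : ZMod q × ZMod p) :
    baseShift p q z = (z.1 + 1, z.2) := rfl

lemma fibreShift_pow_apply (p q n : ℕ) (z : ZMod q × ZMod p) :
    (fibreShift p q ^ n) z = (z.1, z.2 + n * if z.1 = 0 then 1 else 0) := by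
  induction n with
  | zero => simp
  | succ n ih =>
    rw [pow_succ', Equiv.Perm.mul_apply, ih, fibreShift_apply]
    ext
    · rfl
    · push_cast
      ring

lemma baseShift_pow_apply (p q n : ℕ) (z : ZMod q × ZMod p) :
    (baseShift p q ^ n) z = (z.1 + n, z.2) := by
  induction n with
  | zero => simp
  | succ n ih =>
    rw [pow_succ', Equiv.Perm.mul_apply, ih, baseShift_apply]
    ext
    · push_cast
      ring
    · rfl

lemma fibreShift_pow_self (p q : ℕ) : fibreShift p q ^ p = 1 := by
  refine Equiv.ext fun z => ?_
  simp [fibreShift_pow_apply]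

lemma baseShift_pow_self (p q : ℕ) : baseShift p q ^ q = 1 := by
  refine Equiv.ext fun z => ?_
  simp [baseShift_pow_apply]

lemma fibreShift_mul_baseShift_ne (p q : ℕ) (hp : 2 ≤ p) (hq : 2 ≤ q) :
    fibreShift p q * baseShift p q ≠ baseShift p q * fibreShift p q := by
  have : Fact (1 < p) := ⟨hp⟩
  have : Fact (1 < q) := ⟨hq⟩
  intro h
  -- The two products send `(0, 0)` to `(1, 0)` and `(1, 1)` respectively.
  have h0 := congrArg Prod.snd (Equiv.congr_fun h (0, 0))
  simp [fibreShift_apply, baseShift_apply] at h0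

/-- for integers `p, q ≥ 2`, the group `⟨a, b ∣ a^p = b^q⟩` is not cyclic. -/
theorem torus_knot_group_not_cyclic (p q : ℕ) (hp : 2 ≤ p) (hq : 2 ≤ q) :
    ¬ IsCyclic (PresentedGroup
      ({FreeGroup.of 0 ^ p * (FreeGroup.of 1 ^ q)⁻¹} : Set (FreeGroup (Fin 2)))) := by
  intro hc
  have hrel : ∀ r ∈ ({FreeGroup.of 0 ^ p * (FreeGroup.of 1 ^ q)⁻¹} : Set (FreeGroup (Fin 2))),
      FreeGroup.lift ![fibreShift p q, baseShift p q] r = 1 := by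
    rintro r rfl
    simp [fibreShift_pow_self, baseShift_pow_self]
  have hcomm := congrArg (PresentedGroup.toGroup hrel)
    (hc.isMulCommutative.is_comm.comm (PresentedGroup.of 0) (PresentedGroup.of 1))
  simp only [map_mul, PresentedGroup.toGroup.of] at hcomm
  exact fibreShift_mul_baseShift_ne p q hp hq hcomm
end
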